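/- arXiv:1112.5373 — 3 statements merged into one kernel-verified Lean document; each statement's English description precedes it below -/
import Mathlib

section
/- Let ν be a probability measure on ℝ with ν({0}) < 1. Then every unbiased shift T of B embedding ν satisfies P₀{T = 0} = 0. -/
open MeasureTheory ProbabilityTheory

/-- A two-sided standard Brownian motion: a.s. continuous paths, `B₀ = 0`, independent
increments, and `B_t − B_s` centered Gaussian with variance `t − s` for `s < t`. -/
structure IsTwoSidedBM {Ω : Type*} [MeasurableSpace Ω] (P : Measure Ω) (B : ℝ → Ω → ℝ) :
    Prop where
  aemeas : ∀ t : ℝ, AEMeasurable (B t) P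
  cont : ∀ᵐ ω ∂P, Continuous fun t => B t ω
  zero : ∀ᵐ ω ∂P, B 0 ω = 0
  indepIncr : ∀ (n : ℕ) (t : Fin (n + 1) → ℝ), Monotone t →
    iIndepFun
      (fun (i : Fin n) ω => B (t i.succ) ω - B (t i.castSucc) ω) P
  gaussIncr : ∀ s t : ℝ, s < t →
    Measure.map (fun ω => B t ω - B s ω) P = gaussianReal 0 (Real.toNNReal (t - s))

/-- A random time: a measurable function of the path of `B`. -/
def IsRandomTime {Ω : Type*} [MeasurableSpace Ω] (B : ℝ → Ω → ℝ) (T : Ω → ℝ) : Prop :=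
  @Measurable Ω ℝ (MeasurableSpace.comap (fun ω (t : ℝ) => B t ω) inferInstance) _ T

/-- An unbiased shift: a random time `T` such that `(B_{T+t} − B_T)_{t∈ℝ}` is a two-sided
Brownian motion independent of `B_T`. -/
def IsUnbiasedShift {Ω : Type*} [MeasurableSpace Ω] (P : Measure Ω) (B : ℝ → Ω → ℝ)
    (T : Ω → ℝ) : Prop :=
  IsRandomTime B T ∧
  IsTwoSidedBM P (fun t ω => B (T ω + t) ω - B (T ω) ω) ∧
  IndepFun (fun ω (t : ℝ) => B (T ω + t) ω - B (T ω) ω) (fun ω => B (T ω) ω) P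

/-- `T` embeds the distribution `ν`: `B_T` has law `ν`. -/
def Embeds {Ω : Type*} [MeasurableSpace Ω] (P : Measure Ω) (B : ℝ → Ω → ℝ) (T : Ω → ℝ)
    (ν : Measure ℝ) : Prop :=
  Measure.map (fun ω => B (T ω) ω) P = ν

/-- A stopping time with respect to the filtration `(σ(B_s : s ≤ t))_{t ≥ 0}`. -/
def IsBMStoppingTime {Ω : Type*} [MeasurableSpace Ω] (B : ℝ → Ω → ℝ) (T : Ω → ℝ) : Prop :=
  ∀ t : ℝ, 0 ≤ t →
    MeasurableSet[⨆ s ∈ Set.Iic t, MeasurableSpace.comap (B s) inferInstance] {ω | T ω ≤ t}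

/-- The values of a two-sided Brownian motion at an increasing grid containing `0` are a fixed
measurable function of the increments. -/
theorem bm_grid_law {Ω : Type*} [MeasurableSpace Ω]
    (P : Measure Ω) [IsProbabilityMeasure P] (X : ℝ → Ω → ℝ) (hX : IsTwoSidedBM P X)
    (n : ℕ) (t : Fin (n + 1) → ℝ) (ht : StrictMono t) (k : Fin (n + 1)) (hk : t k = 0) :
    Measure.map (fun ω (j : Fin (n + 1)) => X (t j) ω) P =
      Measure.map (fun (d : Fin n → ℝ) (j : Fin (n + 1)) =>
        (∑ i : Fin n, if i.castSucc < j then d i else 0)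
          - ∑ i : Fin n, if i.castSucc < k then d i else 0)
        (Measure.pi fun i : Fin n =>
          gaussianReal 0 (Real.toNNReal (t i.succ - t i.castSucc))) := by
  have hD : ∀ i : Fin n, AEMeasurable (fun ω => X (t i.succ) ω - X (t i.castSucc) ω) P :=
    fun i => (hX.aemeas _).sub (hX.aemeas _)
  have h1 := (iIndepFun_iff_map_fun_eq_pi_map hD).1 (hX.indepIncr n t ht.monotone)
  have h2 : (Measure.pi fun i : Fin n =>
      gaussianReal 0 (Real.toNNReal (t i.succ - t i.castSucc))) =
      Measure.map (fun ω (i : Fin n) => X (t i.succ) ω - X (t i.castSucc) ω) P := by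
    rw [h1]
    congr 1
    funext i
    exact (hX.gaussIncr _ _ (ht (Fin.castSucc_lt_succ))).symm
  have hm : Measurable (fun (d : Fin n → ℝ) (j : Fin (n + 1)) =>
        (∑ i : Fin n, if i.castSucc < j then d i else 0)
          - ∑ i : Fin n, if i.castSucc < k then d i else 0) := by
    refine measurable_pi_lambda _ fun j => Measurable.sub ?_ ?_ <;>
    · refine Finset.measurable_sum _ fun i _ => ?_
      split_ifs <;> fun_prop
  rw [h2, AEMeasurable.map_map_of_aemeasurable hm.aemeasurable (aemeasurable_pi_lambda _ hD)]
  refine Measure.map_congr ?_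
  filter_upwards [hX.zero] with ω h0
  have key : ∀ j : Fin (n + 1), (∑ i : Fin n, if i.castSucc < j then
      (X (t i.succ) ω - X (t i.castSucc) ω) else 0) = X (t j) ω - X (t 0) ω := by
    intro j
    induction j using Fin.induction with
    | zero => simp
    | succ j ih =>
      have : ∀ i : Fin n, (if i.castSucc < j.succ then
          (X (t i.succ) ω - X (t i.castSucc) ω) else 0) =
          (if i.castSucc < j.castSucc then (X (t i.succ) ω - X (t i.castSucc) ω) else 0)
          + (if i = j then (X (t i.succ) ω - X (t i.castSucc) ω) else 0) := by
        intro i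
        rcases lt_trichotomy i j with h | h | h
        · have h' : i.castSucc < j.succ := by
            rw [Fin.lt_def] at h ⊢
            simp only [Fin.val_castSucc, Fin.val_succ]
            omega
          simp [h, h.ne, h']
        · subst h; simp
        · have h' : ¬ i.castSucc < j.succ := by
            rw [Fin.lt_def] at h ⊢
            simp only [Fin.val_castSucc, Fin.val_succ]
            omega
          simp [h.ne', h', h.le]
      rw [Finset.sum_congr rfl fun i _ => this i, Finset.sum_add_distrib, ih]
      simp
  funext j
  simp only [Function.comp_apply]
  rw [key j, key k, hk, h0]
  ring

/-- Finite-dimensional laws of two-sided Brownian motions agree. -/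
theorem bm_fdd_eq {Ω : Type*} [MeasurableSpace Ω]
    (P : Measure Ω) [IsProbabilityMeasure P] (X Y : ℝ → Ω → ℝ)
    (hX : IsTwoSidedBM P X) (hY : IsTwoSidedBM P Y) (I : Finset ℝ) :
    Measure.map (fun ω => I.restrict (fun t => X t ω)) P =
      Measure.map (fun ω => I.restrict (fun t => Y t ω)) P := by
  obtain ⟨n, hn⟩ : ∃ n, (insert 0 I).card = n + 1 :=
    Nat.exists_eq_succ_of_ne_zero (Finset.card_ne_zero_of_mem (Finset.mem_insert_self 0 I))
  let e := (insert 0 I).orderIsoOfFin hn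
  let t : Fin (n + 1) → ℝ := fun j => (e j : ℝ)
  have ht : StrictMono t := fun a b h => e.strictMono h
  let idx : I → Fin (n + 1) := fun i => e.symm ⟨i, Finset.mem_insert_of_mem i.2⟩
  have hidx : ∀ i, t (idx i) = i := fun i => by simp [t, idx]
  let k : Fin (n + 1) := e.symm ⟨0, Finset.mem_insert_self 0 I⟩
  have hk : t k = 0 := by simp [t, k]
  have h := (bm_grid_law P X hX n t ht k hk).trans (bm_grid_law P Y hY n t ht k hk).symm
  have hr : ∀ Z : ℝ → Ω → ℝ, IsTwoSidedBM P Z →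
      Measure.map (fun ω => I.restrict (fun t => Z t ω)) P =
      Measure.map (fun (x : Fin (n + 1) → ℝ) (i : I) => x (idx i))
        (Measure.map (fun ω (j : Fin (n + 1)) => Z (t j) ω) P) := by
    intro Z hZ
    rw [AEMeasurable.map_map_of_aemeasurable
      (measurable_pi_lambda _ fun i => measurable_pi_apply (idx i)).aemeasurable
      (aemeasurable_pi_lambda _ fun j => hZ.aemeas _)]
    congr 1
    funext ω i
    simp [hidx]
  rw [hr X hX, hr Y hY, h]

/-- Two-sided Brownian motions have the same law on path space. -/
theorem bm_path_law {Ω : Type*} [MeasurableSpace Ω]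
    (P : Measure Ω) [IsProbabilityMeasure P] (X Y : ℝ → Ω → ℝ)
    (hX : IsTwoSidedBM P X) (hY : IsTwoSidedBM P Y) (A : Set (ℝ → ℝ)) (hA : MeasurableSet A) :
    NullMeasurableSet ((fun ω t => X t ω) ⁻¹' A) P ∧
    P ((fun ω t => X t ω) ⁻¹' A) = P ((fun ω t => Y t ω) ⁻¹' A) := by
  have hm : ∀ Z : ℝ → Ω → ℝ, IsTwoSidedBM P Z →
      Measurable (fun (ω : NullMeasurableSpace Ω P) (t : ℝ) => Z t ω) := by
    intro Z hZ
    refine measurable_pi_lambda _ fun t => ?_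
    exact (hZ.aemeas t).nullMeasurable.measurable'
  have hl : ∀ Z : ℝ → Ω → ℝ, IsTwoSidedBM P Z →
      IsProjectiveLimit (Measure.map (fun (ω : NullMeasurableSpace Ω P) t => Z t ω) P.completion)
        (fun I => Measure.map (fun ω => I.restrict (fun t => Z t ω)) P) := by
    intro Z hZ I
    rw [Measure.map_map (Finset.measurable_restrict _) (hm Z hZ)]
    ext s hs
    rw [Measure.map_apply ((Finset.measurable_restrict _).comp (hm Z hZ)) hs]
    have haem : AEMeasurable (fun ω => I.restrict (fun t => Z t ω)) P :=
      aemeasurable_pi_lambda _ fun j => hZ.aemeas _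
    exact (Measure.map_apply_of_aemeasurable haem hs).symm
  have hYl := hl Y hY
  rw [← funext (bm_fdd_eq P X Y hX hY)] at hYl
  have hu := (hl X hX).unique hYl
  refine ⟨hm X hX hA, ?_⟩
  have := congrArg (fun μ => μ A) hu
  exact (Measure.map_apply (hm X hX) hA).symm.trans
    (this.trans (Measure.map_apply (hm Y hY) hA))

/-- if `ν({0}) < 1`, every unbiased shift embedding `ν` is a.s. nonzero. -/
theorem unbiased_shift_ne_zero {Ω : Type*} [MeasurableSpace Ω]
    (P : Measure Ω) [IsProbabilityMeasure P]
    (B : ℝ → Ω → ℝ) (hB : IsTwoSidedBM P B)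
    (ν : Measure ℝ) [IsProbabilityMeasure ν] (hν : ν {0} < 1)
    (T : Ω → ℝ) (hT : IsUnbiasedShift P B T) (hTν : Embeds P B T ν) :
    P {ω | T ω = 0} = 0 := by
  obtain ⟨hTm, hS, hind⟩ := hT
  obtain ⟨A, hA, hAT⟩ := hTm (measurableSet_singleton (0 : ℝ))
  have hTA : {ω | T ω = 0} = (fun ω t => B t ω) ⁻¹' A := by
    rw [hAT]; rfl
  have hlaw := (bm_path_law P B _ hB hS A hA).2
  have hmeas : AEMeasurable (fun ω => B (T ω) ω) P := by
    by_contra h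
    have h0 : ν = 0 := by rw [← hTν, Measure.map_of_not_aemeasurable h]
    exact IsProbabilityMeasure.ne_zero ν h0
  have hν0 : P ((fun ω => B (T ω) ω) ⁻¹' {0}) = ν {0} := by
    rw [← hTν, Measure.map_apply_of_aemeasurable hmeas (measurableSet_singleton 0)]
  have hprod := hind.measure_inter_preimage_eq_mul A {0} hA (measurableSet_singleton 0)
  rw [hν0, ← hlaw, ← hTA] at hprod
  have hle : P {ω | T ω = 0} ≤ P {ω | T ω = 0} * ν {0} := by
    rw [← hprod]
    refine measure_mono_ae ?_
    filter_upwards [hB.zero] with ω h0 hω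
    have hT0 : T ω = 0 := hω
    have hωA : (fun t => B t ω) ∈ A := by
      have : ω ∈ (fun ω t => B t ω) ⁻¹' A := hTA ▸ hω
      exact this
    refine ⟨?_, ?_⟩
    · change (fun t => B (T ω + t) ω - B (T ω) ω) ∈ A
      simpa [hT0, h0] using hωA
    · change B (T ω) ω = 0
      rw [hT0, h0]
  by_contra hne
  have hlt : P {ω | T ω = 0} * ν {0} < P {ω | T ω = 0} * 1 :=
    ENNReal.mul_lt_mul_right hne (measure_ne_top _ _) hν
  rw [mul_one] at hlt
  exact absurd hle (not_le.2 hlt)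
end

section
/- Let ν be a probability measure on ℝ with ν({0}) = 0 and ∫ |x| ν(dx) < ∞. If T ≥ 0 is a stopping time with respect to the filtration (σ(B_s : s ≤ t))_{t≥0} which is an unbiased shift of B embedding ν, then E₀[T^{1/4}] = ∞. -/
open MeasureTheory ProbabilityTheory

section helpers
open scoped NNReal ENNReal

lemma aux_telescope {n : ℕ} (b : Fin (n + 1) → ℝ) (i : Fin (n + 1)) :
    ∑ j : Fin n, (if j.castSucc < i then (b j.succ - b j.castSucc) else 0) = b i - b 0 := by
  induction i using Fin.induction with
  | zero => simp
  | succ i ih =>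
    have : ∀ j : Fin n, (if j.castSucc < i.succ then (b j.succ - b j.castSucc) else 0)
        = (if j.castSucc < i.castSucc then (b j.succ - b j.castSucc) else 0)
          + (if j = i then (b j.succ - b j.castSucc) else 0) := by
      intro j
      rcases lt_trichotomy j i with h | h | h
      · have h1 : j.castSucc < i.succ := by
          rw [Fin.castSucc_lt_succ_iff]; exact h.le
        have h2 : j.castSucc < i.castSucc := by simpa using h
        simp [h1, h2, h.ne]
      · subst h; simp
      · have h1 : ¬ j.castSucc < i.succ := by
          rw [Fin.castSucc_lt_succ_iff]; exact not_le.2 h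
        have h2 : ¬ j.castSucc < i.castSucc := by simpa using h.le
        simp [h1, h2, h.ne']
    rw [Finset.sum_congr rfl fun j _ => this j, Finset.sum_add_distrib, ih]
    simp

lemma increments_law {Ω : Type*} [MeasurableSpace Ω] {P : Measure Ω} [IsProbabilityMeasure P]
    {B : ℝ → Ω → ℝ} (hB : IsTwoSidedBM P B) {n : ℕ} (t : Fin (n + 1) → ℝ) (ht : StrictMono t) :
    P.map (fun ω (j : Fin n) => B (t j.succ) ω - B (t j.castSucc) ω)
      = Measure.pi (fun j : Fin n => gaussianReal 0 (Real.toNNReal (t j.succ - t j.castSucc))) := by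
  have h := hB.indepIncr n t ht.monotone
  have hm : ∀ i : Fin n, AEMeasurable (fun ω => B (t i.succ) ω - B (t i.castSucc) ω) P :=
    fun i => (hB.aemeas _).sub (hB.aemeas _)
  rw [iIndepFun_iff_map_fun_eq_pi_map hm] at h
  rw [h]
  congr 1
  funext j
  exact hB.gaussIncr _ _ (ht Fin.castSucc_lt_succ)

lemma fdd_eq {Ω Ω' : Type*} [MeasurableSpace Ω] [MeasurableSpace Ω'] {P : Measure Ω}
    [IsProbabilityMeasure P] {P' : Measure Ω'} [IsProbabilityMeasure P']
    {B : ℝ → Ω → ℝ} {C : ℝ → Ω' → ℝ} (hB : IsTwoSidedBM P B) (hC : IsTwoSidedBM P' C)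
    {ι : Type*} [Fintype ι] (s : ι → ℝ) :
    P.map (fun ω k => B (s k) ω) = P'.map (fun ω k => C (s k) ω) := by
  classical
  set S : Finset ℝ := insert 0 (Finset.univ.image s) with hS
  obtain ⟨n, hn⟩ : ∃ n, S.card = n + 1 :=
    Nat.exists_eq_succ_of_ne_zero (Finset.card_pos.2 ⟨0, by simp [hS]⟩).ne'
  set τ := S.orderEmbOfFin hn
  have hmem : ∀ x ∈ S, ∃ i, τ i = x := by
    intro x hx
    have : x ∈ Set.range τ := by rw [Finset.range_orderEmbOfFin]; exact hx
    exact this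
  obtain ⟨i0, hi0⟩ := hmem 0 (by simp [hS])
  choose i hi using fun k => hmem (s k) (by simp [hS])
  set F : (Fin n → ℝ) → (ι → ℝ) := fun d k =>
    (∑ j : Fin n, (if j.castSucc < i k then d j else 0))
      - ∑ j : Fin n, (if j.castSucc < i0 then d j else 0) with hF
  have hFm : Measurable F := by
    refine measurable_pi_lambda _ fun k => ?_
    refine Measurable.sub ?_ ?_ <;>
    · refine Finset.measurable_sum _ fun j _ => ?_
      split_ifs
      · exact measurable_pi_apply j
      · exact measurable_const
  have key : ∀ {Ω : Type _} [MeasurableSpace Ω] {P : Measure Ω} [IsProbabilityMeasure P]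
      {B : ℝ → Ω → ℝ}, IsTwoSidedBM P B → P.map (fun ω k => B (s k) ω)
        = (Measure.pi (fun j : Fin n =>
          gaussianReal 0 (Real.toNNReal (τ j.succ - τ j.castSucc)))).map F := by
    intro Ω _ P _ B hB
    rw [← increments_law hB τ τ.strictMono, AEMeasurable.map_map_of_aemeasurable hFm.aemeasurable]
    · refine Measure.map_congr ?_
      filter_upwards [hB.zero] with ω hω
      funext k
      simp only [hF, Function.comp]
      rw [aux_telescope (fun l => B (τ l) ω) (i k), aux_telescope (fun l => B (τ l) ω) i0]
      simp [hi0, hi, hω]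
    · exact aemeasurable_pi_lambda _ fun j => (hB.aemeas _).sub (hB.aemeas _)
  have key2 : ∀ {Ω : Type _} [MeasurableSpace Ω] {P : Measure Ω} [IsProbabilityMeasure P]
      {B : ℝ → Ω → ℝ}, IsTwoSidedBM P B → P.map (fun ω k => B (s k) ω)
        = (Measure.pi (fun j : Fin n =>
          gaussianReal 0 (Real.toNNReal (τ j.succ - τ j.castSucc)))).map F := by
    intro Ω _ P _ B hB
    rw [← increments_law hB τ τ.strictMono, AEMeasurable.map_map_of_aemeasurable hFm.aemeasurable]
    · refine Measure.map_congr ?_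
      filter_upwards [hB.zero] with ω hω
      funext k
      simp only [hF, Function.comp]
      rw [aux_telescope (fun l => B (τ l) ω) (i k), aux_telescope (fun l => B (τ l) ω) i0]
      simp [hi0, hi, hω]
    · exact aemeasurable_pi_lambda _ fun j => (hB.aemeas _).sub (hB.aemeas _)
  rw [key hB, key2 hC]

lemma shift_bm {Ω : Type*} [MeasurableSpace Ω] {P : Measure Ω}
    {B : ℝ → Ω → ℝ} (hB : IsTwoSidedBM P B) (r : ℝ) :
    IsTwoSidedBM P (fun t ω => B (r + t) ω - B r ω) where
  aemeas t := (hB.aemeas _).sub (hB.aemeas _)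
  cont := by
    filter_upwards [hB.cont] with ω h
    exact (h.comp (continuous_const.add continuous_id)).sub continuous_const
  zero := by simp
  indepIncr n t ht := by
    have := hB.indepIncr n (fun i => r + t i) (fun i j hij => by simpa using ht hij)
    simpa using this
  gaussIncr s t hst := by
    have := hB.gaussIncr (r + s) (r + t) (by linarith)
    simpa using this

lemma congr_bm {Ω : Type*} [MeasurableSpace Ω] {P : Measure Ω}
    {B C : ℝ → Ω → ℝ} (hB : IsTwoSidedBM P B) (h : ∀ᵐ ω ∂P, ∀ t, B t ω = C t ω) :
    IsTwoSidedBM P C where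
  aemeas t := (hB.aemeas t).congr (by filter_upwards [h] with ω h using h t)
  cont := by
    filter_upwards [hB.cont, h] with ω h1 h2
    exact h1.congr h2
  zero := by
    filter_upwards [hB.zero, h] with ω h1 h2
    rw [← h2, h1]
  indepIncr n t ht := by
    refine (hB.indepIncr n t ht).congr fun i => ?_
    filter_upwards [h] with ω h
    simp [h]
  gaussIncr s t hst := by
    rw [← hB.gaussIncr s t hst]
    refine Measure.map_congr ?_
    filter_upwards [h] with ω h
    simp [h]

lemma nice_version {Ω : Type*} [MeasurableSpace Ω] {P : Measure Ω}
    {B : ℝ → Ω → ℝ} (hB : IsTwoSidedBM P B) :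
    ∃ C : ℝ → Ω → ℝ, (∀ t, Measurable (C t)) ∧ (∀ ω, Continuous fun t => C t ω) ∧
      ∀ᵐ ω ∂P, ∀ t, B t ω = C t ω := by
  classical
  have hgood : ∀ᵐ ω ∂P, (Continuous fun t => B t ω) ∧
      ∀ q : ℚ, B q ω = (hB.aemeas q).mk (B q) ω := by
    filter_upwards [hB.cont, ae_all_iff.2 fun q : ℚ => (hB.aemeas q).ae_eq_mk] with ω h1 h2
    exact ⟨h1, h2⟩
  obtain ⟨N, hN, hNm, hN0⟩ := exists_measurable_superset_of_null hgood
  have hNgood : ∀ ω ∉ N, (Continuous fun t => B t ω) ∧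
      ∀ q : ℚ, B q ω = (hB.aemeas q).mk (B q) ω := by
    intro ω hω
    by_contra hc
    exact hω (hN hc)
  have hcont : ∀ ω, Continuous fun t => (if ω ∈ N then (0 : ℝ) else B t ω) := by
    intro ω
    by_cases h : ω ∈ N
    · simp only [h, if_true]; exact continuous_const
    · simp only [h, if_false]; exact (hNgood ω h).1
  refine ⟨fun t ω => if ω ∈ N then 0 else B t ω, ?_, hcont, ?_⟩
  · have hq : ∀ q : ℚ, Measurable fun ω => if ω ∈ N then (0 : ℝ) else B q ω := by
      intro q
      have : (fun ω => if ω ∈ N then (0 : ℝ) else B q ω)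
          = fun ω => if ω ∈ N then (0 : ℝ) else (hB.aemeas q).mk (B q) ω := by
        funext ω
        split_ifs with h
        · rfl
        · exact (hNgood ω h).2 q
      rw [this]
      exact Measurable.ite hNm measurable_const (hB.aemeas q).measurable_mk
    intro t
    obtain ⟨u, hu⟩ : ∃ u : ℕ → ℝ, (∀ n, u n ∈ Set.range ((↑) : ℚ → ℝ)) ∧
        Filter.Tendsto u Filter.atTop (nhds t) := by
      have := mem_closure_iff_seq_limit.1 (Rat.denseRange_cast (𝕜 := ℝ) t)
      exact this
    choose v hv using hu.1
    refine measurable_of_tendsto_metrizable (fun n => hq (v n)) ?_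
    rw [tendsto_pi_nhds]
    intro ω
    have := ((hcont ω).tendsto t).comp hu.2
    refine this.congr fun n => ?_
    simp [hv n]
  · have : ∀ᵐ ω ∂P, ω ∉ N := measure_eq_zero_iff_ae_notMem.1 hN0
    filter_upwards [this] with ω hω t
    simp [hω]

lemma aemeas_time {Ω : Type*} [MeasurableSpace Ω] {P : Measure Ω}
    {B : ℝ → Ω → ℝ} (hB : IsTwoSidedBM P B) {T : Ω → ℝ} (hT : IsRandomTime B T) :
    AEMeasurable T P := by
  have hn : NullMeasurable T P := by
    intro s hs
    have h1 : MeasurableSet[MeasurableSpace.comap (fun ω (t : ℝ) => B t ω) inferInstance]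
      (T ⁻¹' s) := hT hs
    obtain ⟨u, hu, hus⟩ := h1
    rw [← hus]
    have : @Measurable (NullMeasurableSpace Ω P) (ℝ → ℝ) _ _ (fun ω (t : ℝ) => B t ω) := by
      refine measurable_pi_lambda _ fun t => ?_
      exact fun s hs => (hB.aemeas t).nullMeasurable hs
    exact this hu
  exact hn.aemeasurable

section shear
variable {Ω : Type*} [MeasurableSpace Ω] {P : Measure Ω} [IsProbabilityMeasure P]

lemma shear_mp {c : Ω → ℝ} (hc : Measurable c) :
    MeasurePreserving (fun z : Ω × ℝ => (z.1, z.2 + c z.1)) (P.prod volume) (P.prod volume) := by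
  refine MeasurePreserving.skew_product (g := fun ω x => x + c ω) (MeasurePreserving.id P) ?_ ?_
  · exact measurable_snd.add (hc.comp measurable_fst)
  · exact Filter.Eventually.of_forall fun ω => map_add_right_eq_self volume (c ω)

lemma shear_integral {c : Ω → ℝ} (hc : Measurable c) {F : Ω × ℝ → ℝ} (hF : Measurable F) :
    ∫ z, F (z.1, z.2 + c z.1) ∂(P.prod volume) = ∫ z, F z ∂(P.prod volume) := by
  have h := shear_mp (P := P) hc
  conv_rhs => rw [← h.map_eq]
  rw [integral_map h.measurable.aemeasurable hF.aestronglyMeasurable]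

lemma shear_integrable {c : Ω → ℝ} (hc : Measurable c) {f : ℝ → ℝ} (hf : Integrable f) :
    Integrable (fun z : Ω × ℝ => f (z.2 + c z.1)) (P.prod volume) := by
  have h := shear_mp (P := P) hc
  have : Integrable (fun z : Ω × ℝ => f z.2) (P.prod volume) := hf.comp_snd P
  exact h.integrable_comp_of_integrable this

lemma prod_law {E : Type*} [MeasurableSpace E] {Ω' : Type*} [MeasurableSpace Ω']
    {P' : Measure Ω'} [IsProbabilityMeasure P'] {b : Ω → E} {b' : Ω' → E}
    (hb : Measurable b) (hb' : Measurable b') (h : P.map b = P'.map b')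
    {F : E × ℝ → ℝ} (hF : Measurable F) :
    ∫ z, F (b z.1, z.2) ∂(P.prod volume) = ∫ z, F (b' z.1, z.2) ∂(P'.prod volume) := by
  have h1 := Measure.map_prod_map P (volume : Measure ℝ) hb measurable_id
  have h2 := Measure.map_prod_map P' (volume : Measure ℝ) hb' measurable_id
  rw [h, h2] at h1
  have e1 := integral_map (μ := P.prod (volume : Measure ℝ)) (hb.prodMap measurable_id).aemeasurable
    (f := F) hF.aestronglyMeasurable
  have e2 := integral_map (μ := P'.prod (volume : Measure ℝ)) (hb'.prodMap measurable_id).aemeasurable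
    (f := F) hF.aestronglyMeasurable
  simp only [Prod.map_apply', id] at e1 e2
  rw [← e1, ← e2, h1]
end shear

lemma shift_diff_bound {ψ : ℝ → ℝ} (hψ : Measurable ψ) (hb : ∀ r, |ψ r| ≤ 1 / 2) {t T : ℝ}
    (ht : 0 ≤ t) (hT : 0 ≤ T) :
    |∫ r in (0 : ℝ)..t, (ψ r - ψ (r - T))| ≤ min T t := by
  have hi : ∀ a b, IntervalIntegrable ψ volume a b := by
    intro a b
    rw [intervalIntegrable_iff]
    refine Measure.integrableOn_of_bounded (M := 1 / 2) (by simp) hψ.aestronglyMeasurable ?_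
    exact Filter.Eventually.of_forall fun r => by simpa using hb r
  have hi2 : IntervalIntegrable (fun r => ψ (r - T)) volume 0 t := by
    rw [intervalIntegrable_iff]
    refine Measure.integrableOn_of_bounded (M := 1 / 2) (by simp)
      (hψ.comp (measurable_id.sub_const T)).aestronglyMeasurable ?_
    exact Filter.Eventually.of_forall fun r => by simpa using hb (r - T)
  have hbd : ∀ a b, |∫ r in a..b, ψ r| ≤ 1 / 2 * |b - a| := fun a b => by
    have := intervalIntegral.norm_integral_le_of_norm_le_const (a := a) (b := b) (f := ψ)
      (C := 1 / 2) (fun x _ => by rw [Real.norm_eq_abs]; exact hb x)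
    rwa [Real.norm_eq_abs] at this
  rw [intervalIntegral.integral_sub (hi _ _) hi2, intervalIntegral.integral_comp_sub_right]
  refine le_min ?_ ?_
  · rw [intervalIntegral.integral_interval_sub_interval_comm (hi _ _) (hi _ _) (hi _ _)]
    have h1 := hbd 0 (0 - T)
    have h2 := hbd t (t - T)
    rw [show (0 - T - 0 : ℝ) = -T by ring, abs_neg, abs_of_nonneg hT] at h1
    rw [show (t - T - t : ℝ) = -T by ring, abs_neg, abs_of_nonneg hT] at h2
    have := abs_sub (∫ r in (0 : ℝ)..(0 - T), ψ r) (∫ r in t..(t - T), ψ r)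
    linarith
  · have h1 := hbd 0 t
    have h2 := hbd (0 - T) (t - T)
    rw [show (t - T - (0 - T) : ℝ) = t by ring, abs_of_nonneg ht] at h2
    rw [sub_zero, abs_of_nonneg ht] at h1
    have := abs_sub (∫ r in (0 : ℝ)..t, ψ r) (∫ r in (0 - T)..(t - T), ψ r)
    linarith

section transport
variable {Ω : Type*} [MeasurableSpace Ω] {P : Measure Ω} [IsProbabilityMeasure P]
  {B : ℝ → Ω → ℝ} {T : Ω → ℝ} {ι : Type} [Fintype ι]

lemma B_uncurry (hm : ∀ t, Measurable (B t)) (hc : ∀ ω, Continuous fun t => B t ω) :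
    Measurable (fun p : Ω × ℝ => B p.2 p.1) := by
  have h := measurable_uncurry_of_continuous_of_measurable (u := fun t ω => B t ω) hc hm
  exact h.comp (measurable_snd.prodMk measurable_fst)

lemma stepA (hB : IsTwoSidedBM P B) (hm : ∀ t, Measurable (B t))
    {f : ℝ → ℝ} (hf : Measurable f) {Φ : (ι → ℝ) → ℝ} (hΦ : Measurable Φ) (s : ι → ℝ) (r : ℝ) :
    ∫ z : Ω × ℝ, f (z.2 + B r z.1) * Φ (fun k => z.2 + B (s k) z.1) ∂(P.prod volume)
      = ∫ z : Ω × ℝ, f z.2 * Φ (fun k => z.2 + B (s k - r) z.1) ∂(P.prod volume) := by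
  have h1 := shear_integral (P := P) (c := B r) (hm r)
    (F := fun z : Ω × ℝ => f z.2 * Φ (fun k => z.2 + (B (r + (s k - r)) z.1 - B r z.1))) (by
      refine (hf.comp measurable_snd).mul (hΦ.comp (measurable_pi_lambda _ fun k => ?_))
      exact measurable_snd.add (((hm _).comp measurable_fst).sub ((hm _).comp measurable_fst)))
  have h2 := prod_law (P := P) (P' := P)
    (b := fun ω (k : ι) => B (r + (s k - r)) ω - B r ω) (b' := fun ω k => B (s k - r) ω)
    (measurable_pi_lambda _ fun k => (hm _).sub (hm _)) (measurable_pi_lambda _ fun k => hm _)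
    (fdd_eq (shift_bm hB r) hB (fun k => s k - r))
    (F := fun p => f p.2 * Φ (fun k => p.2 + p.1 k)) (by
      refine (hf.comp measurable_snd).mul (hΦ.comp (measurable_pi_lambda _ fun k => ?_))
      exact measurable_snd.add ((measurable_pi_apply k).comp measurable_fst))
  rw [← h2, ← h1]
  refine integral_congr_ae (Filter.Eventually.of_forall fun z => ?_)
  simp only [add_sub_cancel]
  congr 2
  funext k
  ring

lemma stepB (hB : IsTwoSidedBM P B) (hm : ∀ t, Measurable (B t))
    (hc : ∀ ω, Continuous fun t => B t ω) (hT : Measurable T)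
    (hBT : IsTwoSidedBM P (fun t ω => B (T ω + t) ω - B (T ω) ω))
    (hind : IndepFun (fun ω (t : ℝ) => B (T ω + t) ω - B (T ω) ω) (fun ω => B (T ω) ω) P)
    {ν : Measure ℝ} [IsProbabilityMeasure ν] (hν : P.map (fun ω => B (T ω) ω) = ν)
    {f : ℝ → ℝ} (hf : Measurable f) (hfi : Integrable f)
    {Φ : (ι → ℝ) → ℝ} (hΦ : Measurable Φ) (hΦb : ∀ w, |Φ w| ≤ 1 / 2) (s : ι → ℝ) :
    ∫ z : Ω × ℝ, (∫ x, f (z.2 - x) ∂ν) * Φ (fun k => z.2 + B (s k) z.1) ∂(P.prod volume)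
      = ∫ z : Ω × ℝ, f z.2 * Φ (fun k => z.2 + B (T z.1 + s k) z.1) ∂(P.prod volume) := by
  have hBu := B_uncurry hm hc
  have hX : Measurable (fun ω => B (T ω) ω) := hBu.comp (measurable_id.prodMk hT)
  have hY : ∀ t, Measurable (fun ω => B (T ω + t) ω - B (T ω) ω) := fun t =>
    (hBu.comp (measurable_id.prodMk (hT.add_const t))).sub hX
  set L : Measure (ι → ℝ) := P.map (fun ω k => B (s k) ω) with hL
  have hbm : Measurable (fun ω (k : ι) => B (s k) ω) := measurable_pi_lambda _ fun k => hm _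
  have hLp : IsProbabilityMeasure L := Measure.isProbabilityMeasure_map hbm.aemeasurable
  have hlaw : P.map (fun ω => ((fun k : ι => B (T ω + s k) ω - B (T ω) ω), B (T ω) ω))
      = L.prod ν := by
    have hi : IndepFun (fun ω (k : ι) => B (T ω + s k) ω - B (T ω) ω) (fun ω => B (T ω) ω) P :=
      hind.comp (φ := fun (w : ℝ → ℝ) (k : ι) => w (s k)) (ψ := id)
        (measurable_pi_lambda _ fun k => measurable_pi_apply _) measurable_id
    rw [(indepFun_iff_map_prod_eq_prod_map_map
      (measurable_pi_lambda _ fun k => hY _).aemeasurable hX.aemeasurable).1 hi, hν, hL,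
      fdd_eq hBT hB s]
  -- right side
  have h1 := shear_integral (P := P) (c := fun ω => B (T ω) ω) hX
    (F := fun z : Ω × ℝ => f (z.2 - B (T z.1) z.1)
      * Φ (fun k => z.2 + (B (T z.1 + s k) z.1 - B (T z.1) z.1))) (by
      refine (hf.comp (measurable_snd.sub (hX.comp measurable_fst))).mul
        (hΦ.comp (measurable_pi_lambda _ fun k => ?_))
      exact measurable_snd.add ((hY _).comp measurable_fst))
  have h2 := prod_law (P := P) (P' := L.prod ν)
    (b := fun ω => ((fun k : ι => B (T ω + s k) ω - B (T ω) ω), B (T ω) ω))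
    (b' := id)
    ((measurable_pi_lambda _ fun k => hY _).prodMk hX) measurable_id
    (by rw [hlaw, Measure.map_id])
    (F := fun p => f (p.2 - p.1.2) * Φ (fun k => p.2 + p.1.1 k)) (by
      refine (hf.comp (measurable_snd.sub (measurable_snd.comp measurable_fst))).mul
        (hΦ.comp (measurable_pi_lambda _ fun k => ?_))
      exact measurable_snd.add
        ((measurable_pi_apply k).comp (measurable_fst.comp measurable_fst)))
  have hfh : Measurable (fun y => ∫ x, f (y - x) ∂ν) := by
    have : StronglyMeasurable (Function.uncurry fun (y x : ℝ) => f (y - x)) :=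
      (hf.comp (measurable_fst.sub measurable_snd)).stronglyMeasurable
    exact this.integral_prod_right.measurable
  have h3 := prod_law (P := P) (P' := L) (b := fun ω (k : ι) => B (s k) ω) (b' := id)
    hbm measurable_id (by rw [Measure.map_id])
    (F := fun p => (∫ x, f (p.2 - x) ∂ν) * Φ (fun k => p.2 + p.1 k)) (by
      refine (hfh.comp measurable_snd).mul
        (hΦ.comp (measurable_pi_lambda _ fun k => ?_))
      exact measurable_snd.add ((measurable_pi_apply k).comp measurable_fst))
  have hsh : Integrable (fun z : ((ι → ℝ) × ℝ) × ℝ => f (z.2 - z.1.2)) ((L.prod ν).prod volume) := by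
    have := shear_integrable (P := L.prod ν) (c := fun w => - w.2) (measurable_snd.neg) hfi
    simpa [sub_eq_add_neg] using this
  have hΦm : Measurable (fun z : ((ι → ℝ) × ℝ) × ℝ => Φ (fun k => z.2 + z.1.1 k)) := by
    refine hΦ.comp (measurable_pi_lambda _ fun k => ?_)
    exact measurable_snd.add ((measurable_pi_apply k).comp (measurable_fst.comp measurable_fst))
  have hI1 : Integrable (fun z : ((ι → ℝ) × ℝ) × ℝ =>
      f (z.2 - z.1.2) * Φ (fun k => z.2 + z.1.1 k)) ((L.prod ν).prod volume) :=
    hsh.mul_bdd (c := 1 / 2) hΦm.aestronglyMeasurable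
      (Filter.Eventually.of_forall fun z => by simpa using hΦb _)
  have hfhi : Integrable (fun y => ∫ x, f (y - x) ∂ν) := by
    have h5 := shear_integrable (P := ν) (c := fun w => - w) (measurable_id.neg) hfi
    have := h5.integral_prod_right
    simpa [sub_eq_add_neg] using this
  have hΦm2 : Measurable (fun z : (ι → ℝ) × ℝ => Φ (fun k => z.2 + z.1 k)) := by
    refine hΦ.comp (measurable_pi_lambda _ fun k => ?_)
    exact measurable_snd.add ((measurable_pi_apply k).comp measurable_fst)
  have hI2 : Integrable (fun z : (ι → ℝ) × ℝ =>
      (∫ x, f (z.2 - x) ∂ν) * Φ (fun k => z.2 + z.1 k)) (L.prod volume) :=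
    (hfhi.comp_snd L).mul_bdd (c := 1 / 2) hΦm2.aestronglyMeasurable
      (Filter.Eventually.of_forall fun z => by simpa using hΦb _)
  have e1 : ∫ z : Ω × ℝ, f z.2 * Φ (fun k => z.2 + B (T z.1 + s k) z.1) ∂(P.prod volume)
      = ∫ y, (∫ x, f (y - x) ∂ν) * ∫ v, Φ (fun k => y + v k) ∂L := by
    have : ∫ z : Ω × ℝ, f z.2 * Φ (fun k => z.2 + B (T z.1 + s k) z.1) ∂(P.prod volume)
      = ∫ z : ((ι → ℝ) × ℝ) × ℝ, f (z.2 - z.1.2) * Φ (fun k => z.2 + z.1.1 k)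
        ∂((L.prod ν).prod volume) := by
      refine Eq.trans ?_ h2
      rw [← h1]
      refine integral_congr_ae (Filter.Eventually.of_forall fun z => ?_)
      simp only [add_sub_cancel_right]
      congr 2
      funext k
      ring
    rw [this, integral_prod_symm _ hI1]
    refine integral_congr_ae (Filter.Eventually.of_forall fun y => ?_)
    simp only
    have := integral_prod_mul (μ := L) (ν := ν) (fun v => Φ (fun k => y + v k)) (fun x => f (y - x))
    rw [mul_comm, ← this]
    refine integral_congr_ae (Filter.Eventually.of_forall fun y => ?_)
    simp only
    ring
  rw [e1]
  refine h3.trans ?_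
  simp only [id]
  rw [integral_prod_symm _ hI2]
  refine integral_congr_ae (Filter.Eventually.of_forall fun y => ?_)
  simp only
  rw [integral_const_mul]

lemma transport (hB : IsTwoSidedBM P B) (hm : ∀ t, Measurable (B t))
    (hc : ∀ ω, Continuous fun t => B t ω) (hT : Measurable T) (hT0 : ∀ ω, 0 ≤ T ω)
    (hBT : IsTwoSidedBM P (fun t ω => B (T ω + t) ω - B (T ω) ω))
    (hind : IndepFun (fun ω (t : ℝ) => B (T ω + t) ω - B (T ω) ω) (fun ω => B (T ω) ω) P)
    {ν : Measure ℝ} [IsProbabilityMeasure ν] (hν : P.map (fun ω => B (T ω) ω) = ν)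
    {f : ℝ → ℝ} (hf : Measurable f) (hfi : Integrable f) (hf0 : ∀ x, 0 ≤ f x) (hf1 : ∫ x, f x = 1)
    {Φ : (ι → ℝ) → ℝ} (hΦ : Measurable Φ) (hΦb : ∀ w, |Φ w| ≤ 1 / 2) (s : ι → ℝ)
    {t : ℝ} (ht : 0 ≤ t) :
    |∫ r in (0 : ℝ)..t, ∫ z : Ω × ℝ, (f (z.2 + B r z.1) - ∫ x, f (z.2 + B r z.1 - x) ∂ν)
        * Φ (fun k => z.2 + B (s k) z.1) ∂(P.prod volume)| ≤ ∫ ω, min (T ω) t ∂P := by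
  have hBu := B_uncurry hm hc
  have hfh : Measurable (fun y => ∫ x, f (y - x) ∂ν) := by
    have : StronglyMeasurable (Function.uncurry fun (y x : ℝ) => f (y - x)) :=
      (hf.comp (measurable_fst.sub measurable_snd)).stronglyMeasurable
    exact this.integral_prod_right.measurable
  have hfhi : Integrable (fun y => ∫ x, f (y - x) ∂ν) := by
    have h5 := shear_integrable (P := ν) (c := fun w => - w) (measurable_id.neg) hfi
    have := h5.integral_prod_right
    simpa [sub_eq_add_neg] using this
  have hΦm : ∀ τ : ι → Ω → ℝ, (∀ k, Measurable (τ k)) →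
      Measurable (fun z : Ω × ℝ => Φ (fun k => z.2 + B (τ k z.1) z.1)) := by
    intro τ hτ
    refine hΦ.comp (measurable_pi_lambda _ fun k => ?_)
    exact measurable_snd.add (hBu.comp (measurable_fst.prodMk ((hτ k).comp measurable_fst)))
  have hbdd : ∀ {g : Ω × ℝ → ℝ}, Integrable g (P.prod volume) → ∀ τ : ι → Ω → ℝ,
      (∀ k, Measurable (τ k)) → Integrable (fun z : Ω × ℝ =>
        g z * Φ (fun k => z.2 + B (τ k z.1) z.1)) (P.prod volume) := by
    intro g hg τ hτ
    exact hg.mul_bdd (c := 1 / 2) (hΦm τ hτ).aestronglyMeasurable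
      (Filter.Eventually.of_forall fun z => by simpa using hΦb _)
  have key : ∀ r, ∫ z : Ω × ℝ, (f (z.2 + B r z.1) - ∫ x, f (z.2 + B r z.1 - x) ∂ν)
        * Φ (fun k => z.2 + B (s k) z.1) ∂(P.prod volume)
      = ∫ z : Ω × ℝ, f z.2 * (Φ (fun k => z.2 + B (s k - r) z.1)
        - Φ (fun k => z.2 + B (s k - (r - T z.1)) z.1)) ∂(P.prod volume) := by
    intro r
    simp_rw [sub_mul, mul_sub]
    rw [integral_sub, integral_sub, stepA hB hm hf hΦ s r, stepA hB hm hfh hΦ s r,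
      stepB hB hm hc hT hBT hind hν hf hfi hΦ hΦb (fun k => s k - r)]
    · congr 1
      refine integral_congr_ae (Filter.Eventually.of_forall fun z => ?_)
      simp only
      congr 2
      funext k
      congr 2
      ring
    · exact hbdd (hfi.comp_snd P) (fun k _ => s k - r) fun k => measurable_const
    · exact hbdd (hfi.comp_snd P) (fun k ω => s k - (r - T ω)) fun k =>
        measurable_const.sub (measurable_const.sub hT)
    · exact hbdd (shear_integrable (hm r) hfi) (fun k _ => s k) fun k => measurable_const
    · exact hbdd (shear_integrable (hm r) hfhi) (fun k _ => s k) fun k => measurable_const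
  simp_rw [key]
  have hψm : Measurable (fun p : ℝ × (Ω × ℝ) => Φ (fun k => p.2.2 + B (s k - p.1) p.2.1)) := by
    refine hΦ.comp (measurable_pi_lambda _ fun k => ?_)
    exact (measurable_snd.comp measurable_snd).add (hBu.comp
      ((measurable_fst.comp measurable_snd).prodMk (measurable_const.sub measurable_fst)))
  have hψm' : Measurable (fun p : ℝ × (Ω × ℝ) =>
      Φ (fun k => p.2.2 + B (s k - (p.1 - T p.2.1)) p.2.1)) := by
    have : Measurable (fun p : ℝ × (Ω × ℝ) => (p.1 - T p.2.1, p.2)) :=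
      (measurable_fst.sub (hT.comp (measurable_fst.comp measurable_snd))).prodMk measurable_snd
    exact hψm.comp this
  rw [intervalIntegral_integral_swap]
  · have hpt : ∀ z : Ω × ℝ, ‖∫ r in (0 : ℝ)..t, f z.2 * (Φ (fun k => z.2 + B (s k - r) z.1)
        - Φ (fun k => z.2 + B (s k - (r - T z.1)) z.1))‖ ≤ min (T z.1) t * f z.2 := by
      intro z
      rw [intervalIntegral.integral_const_mul, norm_mul, Real.norm_of_nonneg (hf0 _), mul_comm]
      refine mul_le_mul_of_nonneg_right ?_ (hf0 _)
      exact shift_diff_bound (ψ := fun r => Φ (fun k => z.2 + B (s k - r) z.1))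
        (hψm.comp (measurable_id.prodMk measurable_const)) (fun r => hΦb _) ht (hT0 _)
    rw [← Real.norm_eq_abs]
    refine (norm_integral_le_of_norm_le ?_ (Filter.Eventually.of_forall hpt)).trans ?_
    · refine Integrable.mul_prod (f := fun ω => min (T ω) t) (g := f) (μ := P) (ν := volume) ?_ hfi
      refine Integrable.of_bound (C := t)
        (hT.min measurable_const).aestronglyMeasurable
        (Filter.Eventually.of_forall fun ω => ?_)
      rw [Real.norm_of_nonneg (le_min (hT0 _) ht)]
      exact min_le_right _ _
    · rw [integral_prod_mul (fun ω => min (T ω) t) f, hf1, mul_one]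
  · have : IsFiniteMeasure (volume.restrict (Set.uIoc (0 : ℝ) t)) := ⟨by simp [Set.uIoc]⟩
    have h0 : Integrable (fun p : ℝ × (Ω × ℝ) => f p.2.2)
        ((volume.restrict (Set.uIoc 0 t)).prod (P.prod volume)) :=
      (hfi.comp_snd P).comp_snd _
    refine h0.mul_bdd (c := 1) (hψm.sub hψm').aestronglyMeasurable
      (Filter.Eventually.of_forall fun p => ?_)
    refine (norm_sub_le _ _).trans ?_
    have a1 := hΦb (fun k => p.2.2 + B (s k - p.1) p.2.1)
    have a2 := hΦb (fun k => p.2.2 + B (s k - (p.1 - T p.2.1)) p.2.1)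
    simp only [Real.norm_eq_abs]
    linarith

end transport

lemma riemann_tendsto {g : ℝ → ℝ} (hg : Continuous g) {t : ℝ} (ht : 0 ≤ t) :
    Filter.Tendsto (fun N : ℕ => t / (N + 1) * ∑ k : Fin (N + 1), g (t / (N + 1) * k))
      Filter.atTop (nhds (∫ r in (0 : ℝ)..t, g r)) := by
  rw [Metric.tendsto_atTop]
  intro ε hε
  have huc := (isCompact_Icc (a := (0 : ℝ)) (b := t)).uniformContinuousOn_of_continuous
    hg.continuousOn
  rw [Metric.uniformContinuousOn_iff_le] at huc
  obtain ⟨δ, hδ, hd⟩ := huc (ε / (t + 1)) (by positivity)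
  obtain ⟨N0, hN0⟩ := exists_nat_gt (t / δ)
  refine ⟨N0, fun N hN => ?_⟩
  have hNpos : (0 : ℝ) < N + 1 := by positivity
  set m : ℝ := t / (N + 1) with hm
  have hm0 : 0 ≤ m := by positivity
  have hmN : m * (N + 1) = t := by rw [hm]; field_simp
  have hmδ : m ≤ δ := by
    rw [hm, div_le_iff₀ hNpos]
    rw [div_lt_iff₀ hδ] at hN0
    have : (N0 : ℝ) ≤ N := by exact_mod_cast hN
    nlinarith
  have hsum : ∑ k ∈ Finset.range (N + 1), ∫ r in (m * k)..(m * (k + 1 : ℕ)), g r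
      = ∫ r in (0 : ℝ)..t, g r := by
    have := intervalIntegral.sum_integral_adjacent_intervals (f := g) (μ := volume)
      (a := fun k : ℕ => m * k) (n := N + 1) (fun k _ => hg.intervalIntegrable _ _)
    rw [this]
    congr 1
    · simp
    · push_cast; exact hmN
  rw [← hsum, Fin.sum_univ_eq_sum_range (fun k => g (m * (k : ℝ))) (N + 1), Finset.mul_sum, Real.dist_eq,
    ← Finset.sum_sub_distrib]
  have hterm : ∀ k ∈ Finset.range (N + 1),
      |m * g (m * k) - ∫ r in (m * k)..(m * (k + 1 : ℕ)), g r| ≤ ε / (t + 1) * m := by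
    intro k hk
    have hk' : (k : ℝ) + 1 ≤ N + 1 := by
      have := Finset.mem_range.1 hk
      exact_mod_cast this
    have e1 : m * g (m * k) = ∫ r in (m * k)..(m * (k + 1 : ℕ)), g (m * k) := by
      rw [intervalIntegral.integral_const, smul_eq_mul]; push_cast; ring
    rw [e1, ← intervalIntegral.integral_sub (by simp) (hg.intervalIntegrable _ _)]
    have hlen : m * ((k + 1 : ℕ) : ℝ) - m * k = m := by push_cast; ring
    have hle : m * (k : ℝ) ≤ m * ((k + 1 : ℕ) : ℝ) := by linarith
    have hk0 : 0 ≤ m * (k : ℝ) := by positivity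
    have hktop : m * ((k + 1 : ℕ) : ℝ) ≤ t := by
      push_cast; rw [← hmN]; exact mul_le_mul_of_nonneg_left hk' hm0
    have := intervalIntegral.norm_integral_le_of_norm_le_const (a := m * k)
      (b := m * ((k + 1 : ℕ) : ℝ)) (f := fun r => g (m * k) - g r) (C := ε / (t + 1)) (by
        intro x hx
        rw [Set.uIoc_of_le hle] at hx
        have := hd (m * k) ⟨hk0, by linarith⟩ x ⟨by linarith [hx.1], by linarith [hx.2]⟩ (by
          rw [Real.dist_eq, abs_le]; constructor <;> linarith [hx.1, hx.2])
        rwa [Real.dist_eq] at this)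
    rw [hlen, abs_of_nonneg hm0, Real.norm_eq_abs] at this
    exact this
  calc _ ≤ ∑ k ∈ Finset.range (N + 1), |m * g (m * k) - ∫ r in (m * k)..(m * (k + 1 : ℕ)), g r| :=
        Finset.abs_sum_le_sum_abs _ _
    _ ≤ ∑ k ∈ Finset.range (N + 1), ε / (t + 1) * m := Finset.sum_le_sum hterm
    _ = ε / (t + 1) * t := by
        rw [Finset.sum_const, Finset.card_range, nsmul_eq_mul, ← hmN]; push_cast; ring
    _ < ε := by
        rw [div_mul_eq_mul_div, div_lt_iff₀ (by positivity)]
        nlinarith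

section
variable {Ω : Type*} [MeasurableSpace Ω] {P : Measure Ω} [IsProbabilityMeasure P]
  {B : ℝ → Ω → ℝ} {T : Ω → ℝ}

lemma W_meas (hm : ∀ t, Measurable (B t)) (hc : ∀ ω, Continuous fun t => B t ω) :
    Measurable (fun p : ℝ × (Ω × ℝ) => p.2.2 + B p.1 p.2.1) :=
  (measurable_snd.comp measurable_snd).add ((B_uncurry hm hc).comp
      ((measurable_fst.comp measurable_snd).prodMk measurable_fst))

lemma joint_integrable (hm : ∀ t, Measurable (B t)) (hc : ∀ ω, Continuous fun t => B t ω)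
    {h : ℝ → ℝ} (hh : Measurable h) (hi : Integrable h) (t : ℝ) :
    Integrable (fun p : ℝ × (Ω × ℝ) => h (p.2.2 + B p.1 p.2.1))
      ((volume.restrict (Set.uIoc 0 t)).prod (P.prod volume)) := by
  have : IsFiniteMeasure (volume.restrict (Set.uIoc (0 : ℝ) t)) := ⟨by simp [Set.uIoc]⟩
  refine (integrable_prod_iff (hh.comp (W_meas hm hc)).aestronglyMeasurable).2 ⟨?_, ?_⟩
  · exact Filter.Eventually.of_forall fun r => shear_integrable (hm r) hi
  · simp only [Function.comp_apply]
    have : ∀ r, ∫ z : Ω × ℝ, ‖h (z.2 + B r z.1)‖ ∂(P.prod volume)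
        = ∫ z : Ω × ℝ, ‖h z.2‖ ∂(P.prod volume) := fun r =>
      shear_integral (F := fun z : Ω × ℝ => ‖h z.2‖) (hm r) (hh.norm.comp measurable_snd)
    simp only [this]
    exact integrable_const _

lemma A_meas (hm : ∀ t, Measurable (B t)) (hc : ∀ ω, Continuous fun t => B t ω)
    {h : ℝ → ℝ} (hh : Continuous h) {t : ℝ} (ht : 0 ≤ t) :
    Measurable (fun z : Ω × ℝ => ∫ r in (0 : ℝ)..t, h (z.2 + B r z.1)) := by
  refine measurable_of_tendsto_metrizable (f := fun (N : ℕ) (z : Ω × ℝ) =>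
    t / (N + 1) * ∑ k : Fin (N + 1), h (z.2 + B (t / (N + 1) * k) z.1)) ?_ ?_
  · intro N
    refine measurable_const.mul (Finset.measurable_sum _ fun k _ => ?_)
    exact hh.measurable.comp (measurable_snd.add ((hm _).comp measurable_fst))
  · rw [tendsto_pi_nhds]
    intro z
    exact riemann_tendsto (g := fun r => h (z.2 + B r z.1))
      (hh.comp (continuous_const.add (hc _))) ht

lemma A_integrable (hm : ∀ t, Measurable (B t)) (hc : ∀ ω, Continuous fun t => B t ω)
    {h : ℝ → ℝ} (hh : Continuous h) (hi : Integrable h) {t : ℝ} (ht : 0 ≤ t) :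
    Integrable (fun z : Ω × ℝ => ∫ r in (0 : ℝ)..t, h (z.2 + B r z.1)) (P.prod volume) := by
  have := (joint_integrable (P := P) hm hc hh.measurable hi t).integral_prod_right
  simpa only [intervalIntegral.integral_of_le ht, Set.uIoc_of_le ht] using this

lemma limit_ineq (hm : ∀ t, Measurable (B t)) (hc : ∀ ω, Continuous fun t => B t ω)
    {h : ℝ → ℝ} (hh : Continuous h) (hi : Integrable h) {t M : ℝ} (ht : 0 ≤ t)
    {φ : ℝ → ℝ} (hφ : Continuous φ) (hφb : ∀ a, |φ a| ≤ 1 / 2)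
    (H : ∀ (n : ℕ) (Φ : (Fin n → ℝ) → ℝ), Measurable Φ → (∀ w, |Φ w| ≤ 1 / 2) →
      ∀ s : Fin n → ℝ, |∫ r in (0 : ℝ)..t, ∫ z : Ω × ℝ, h (z.2 + B r z.1)
        * Φ (fun k => z.2 + B (s k) z.1) ∂(P.prod volume)| ≤ M) :
    |∫ z : Ω × ℝ, (∫ r in (0 : ℝ)..t, h (z.2 + B r z.1))
      * φ (∫ r in (0 : ℝ)..t, h (z.2 + B r z.1)) ∂(P.prod volume)| ≤ M := by
  set R : ℕ → Ω × ℝ → ℝ := fun N z =>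
    t / (N + 1) * ∑ k : Fin (N + 1), h (z.2 + B (t / (N + 1) * k) z.1) with hR
  have hRm : ∀ N, Measurable (R N) := by
    intro N
    refine measurable_const.mul (Finset.measurable_sum _ fun k _ => ?_)
    exact hh.measurable.comp (measurable_snd.add ((hm _).comp measurable_fst))
  have hAi := A_integrable (P := P) hm hc hh hi ht
  have hAm := A_meas hm hc hh ht
  have hlim : Filter.Tendsto (fun N => ∫ z : Ω × ℝ, (∫ r in (0 : ℝ)..t, h (z.2 + B r z.1))
      * φ (R N z) ∂(P.prod volume)) Filter.atTop (nhds (∫ z : Ω × ℝ,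
        (∫ r in (0 : ℝ)..t, h (z.2 + B r z.1))
      * φ (∫ r in (0 : ℝ)..t, h (z.2 + B r z.1)) ∂(P.prod volume))) := by
    refine tendsto_integral_of_dominated_convergence
      (fun z => |∫ r in (0 : ℝ)..t, h (z.2 + B r z.1)|) ?_ hAi.abs ?_ ?_
    · exact fun N => (hAm.mul (hφ.measurable.comp (hRm N))).aestronglyMeasurable
    · refine fun N => Filter.Eventually.of_forall fun z => ?_
      rw [norm_mul, Real.norm_eq_abs, Real.norm_eq_abs]
      have := hφb (R N z)
      exact mul_le_of_le_one_right (abs_nonneg _) (by linarith)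
    · refine Filter.Eventually.of_forall fun z => ?_
      refine Filter.Tendsto.const_mul _ ((hφ.tendsto _).comp ?_)
      exact riemann_tendsto (g := fun r => h (z.2 + B r z.1))
        (hh.comp (continuous_const.add (hc _))) ht
  refine le_of_tendsto hlim.abs (Filter.Eventually.of_forall fun N => ?_)
  have hN := H (N + 1) (fun w => φ (t / (N + 1) * ∑ k, h (w k)))
    (hφ.measurable.comp (measurable_const.mul (Finset.measurable_sum _ fun k _ =>
      hh.measurable.comp (measurable_pi_apply k)))) (fun w => hφb _)
    (fun k => t / (N + 1) * k)
  rw [intervalIntegral_integral_swap] at hN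
  · simp only [intervalIntegral.integral_mul_const] at hN
    exact hN
  · refine (joint_integrable (P := P) hm hc hh.measurable hi t).mul_bdd (c := 1 / 2)
      ((hφ.measurable.comp (hRm N)).comp measurable_snd).aestronglyMeasurable
      (Filter.Eventually.of_forall fun z => hφb _)

end

/-- Centered Gaussian density with variance `r`. -/
noncomputable def gd (r x : ℝ) : ℝ := (√(2 * Real.pi * r))⁻¹ * Real.exp (-(x ^ 2) / (2 * r))

lemma gd_nonneg (r x : ℝ) : 0 ≤ gd r x := by unfold gd; positivity

lemma gd_le (r x : ℝ) (hr : 0 ≤ r) : gd r x ≤ (√(2 * Real.pi * r))⁻¹ := by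
  unfold gd
  refine mul_le_of_le_one_right (by positivity) ?_
  rw [Real.exp_le_one_iff]
  exact div_nonpos_of_nonpos_of_nonneg (by nlinarith [sq_nonneg x]) (by positivity)

lemma gd_lt {r x : ℝ} (hr : 0 < r) (hx : x ≠ 0) : gd r x < gd r 0 := by
  unfold gd
  have := Real.pi_pos
  refine mul_lt_mul_of_pos_left ?_ (by positivity)
  rw [Real.exp_lt_exp]
  refine div_lt_div_of_pos_right ?_ (by positivity)
  have : 0 < x ^ 2 := by positivity
  linarith

lemma gd_neg (r x : ℝ) : gd r (-x) = gd r x := by unfold gd; rw [neg_sq]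

lemma gd_cont (r : ℝ) : Continuous (gd r) := by unfold gd; fun_prop

lemma gd_eq {r : ℝ} (hr : 0 ≤ r) (x : ℝ) : gd r x = gaussianPDFReal 0 r.toNNReal x := by
  rw [gaussianPDFReal_def]
  simp [gd, Real.coe_toNNReal r hr]

lemma gd_one_le (x : ℝ) : gd 1 x ≤ 1 := by
  refine (gd_le 1 x zero_le_one).trans ?_
  refine inv_le_one_of_one_le₀ ?_
  rw [Real.one_le_sqrt]
  nlinarith [Real.pi_gt_three]

lemma gd_integrable {r : ℝ} (hr : 0 ≤ r) : Integrable (gd r) := by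
  have : gd r = gaussianPDFReal 0 r.toNNReal := funext fun x => gd_eq hr x
  rw [this]; exact integrable_gaussianPDFReal _ _

lemma gd_integral {r : ℝ} (hr : 0 < r) : ∫ x, gd r x = 1 := by
  have : gd r = gaussianPDFReal 0 r.toNNReal := funext fun x => gd_eq hr.le x
  rw [this]; exact integral_gaussianPDFReal_eq_one _ (by simpa using hr)

lemma gd_conv {r : ℝ} (hr : 0 < r) (y : ℝ) :
    ∫ z, gd 1 (y + z) ∂(gaussianReal 0 r.toNNReal) = gd (1 + r) y := by
  rw [integral_gaussianReal_eq_integral_smul (by simpa using hr)]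
  simp_rw [← gd_eq hr.le, smul_eq_mul]
  have h1 : ∀ z, gd r z * gd 1 (y + z) = ((√(2 * Real.pi * r))⁻¹ * (√(2 * Real.pi * 1))⁻¹ *
      Real.exp (-(y ^ 2) / (2 * (1 + r)))) *
        Real.exp (-((1 + r) / (2 * r)) * (z + r * y / (1 + r)) ^ 2) := by
    intro z
    unfold gd
    have : Real.exp (-(z ^ 2) / (2 * r)) * Real.exp (-((y + z) ^ 2) / (2 * 1))
      = Real.exp (-(y ^ 2) / (2 * (1 + r))) *
        Real.exp (-((1 + r) / (2 * r)) * (z + r * y / (1 + r)) ^ 2) := by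
      rw [← Real.exp_add, ← Real.exp_add]
      congr 1
      field_simp
      ring
    linear_combination ((√(2 * Real.pi * r))⁻¹ * (√(2 * Real.pi * 1))⁻¹) * this
  simp_rw [h1]
  rw [integral_const_mul,
    integral_add_right_eq_self (fun z => Real.exp (-((1 + r) / (2 * r)) * z ^ 2)) (r * y / (1 + r)),
    integral_gaussian]
  unfold gd
  have hpi := Real.pi_pos
  have : (√(2 * Real.pi * r))⁻¹ * (√(2 * Real.pi * 1))⁻¹ * √(Real.pi / ((1 + r) / (2 * r)))
      = (√(2 * Real.pi * (1 + r)))⁻¹ := by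
    rw [← Real.sqrt_inv, ← Real.sqrt_inv, ← Real.sqrt_inv, ← Real.sqrt_mul (by positivity),
      ← Real.sqrt_mul (by positivity)]
    congr 1
    field_simp
  linear_combination Real.exp (-(y ^ 2) / (2 * (1 + r))) * this

lemma gd_hasDeriv (r x : ℝ) : HasDerivAt (gd r) (-(x / r) * gd r x) x := by
  unfold gd
  have h1 : HasDerivAt (fun x : ℝ => -(x ^ 2) / (2 * r)) (-(2 * x) / (2 * r)) x := by
    have := ((hasDerivAt_pow 2 x).neg).div_const (2 * r)
    simpa using this
  have := (h1.exp).const_mul (√(2 * Real.pi * r))⁻¹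
  refine this.congr_deriv ?_
  rw [show -(2 * x) / (2 * r) = -(x / r) by rw [neg_div, mul_div_mul_left _ _ two_ne_zero]]
  ring

lemma gd_density_bound {r : ℝ} (hr : 0 < r) (φ : ℝ → ℝ≥0∞) (hφ : Measurable φ) (y : ℝ) :
    ∫⁻ z, φ (y + z) ∂(gaussianReal 0 r.toNNReal)
      ≤ ENNReal.ofReal (√(2 * Real.pi * r))⁻¹ * ∫⁻ z, φ z := by
  have hφy : Measurable (fun z => φ (y + z)) := hφ.comp (measurable_const.add measurable_id)
  rw [gaussianReal_of_var_ne_zero _ (by simpa using hr), lintegral_withDensity_eq_lintegral_mul _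
    (measurable_gaussianPDF _ _) hφy]
  rw [← lintegral_add_left_eq_self φ y, ← lintegral_const_mul _
    hφy]
  refine lintegral_mono fun z => ?_
  simp only [Pi.mul_apply]
  refine mul_le_mul_left ?_ _
  rw [gaussianPDF, ← gd_eq hr.le]
  exact ENNReal.ofReal_le_ofReal (gd_le _ _ hr.le)

lemma gd_time_integral (z : ℝ) :
    ∫⁻ r in Set.Ioi (0 : ℝ), ENNReal.ofReal |-(z / (1 + r)) * gd (1 + r) z|
      ≤ ENNReal.ofReal (2 * Real.pi) := by
  rcases eq_or_ne z 0 with rfl | hz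
  · simp
  set a := |z| with ha
  have ha0 : 0 < a := abs_pos.2 hz
  set F : ℝ → ℝ := fun r => 4 * Real.arctan (√(2 * (1 + r)) / a) with hF
  set F' : ℝ → ℝ := fun r => 4 * (1 / (1 + (√(2 * (1 + r)) / a) ^ 2) *
      (2 / (2 * √(2 * (1 + r))) / a)) with hF'
  have hd : ∀ r ∈ Set.Ici (0 : ℝ), HasDerivAt F (F' r) r := by
    intro r hr
    have hr : 0 ≤ r := hr
    have h1 : HasDerivAt (fun r : ℝ => 2 * (1 + r)) 2 r := by
      simpa using ((hasDerivAt_id r).const_add 1).const_mul 2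
    have h2 := h1.sqrt (by positivity)
    exact ((h2.div_const a).arctan).const_mul 4
  have hpos : ∀ r ∈ Set.Ioi (0 : ℝ), 0 ≤ F' r := by
    intro r hr; positivity
  have hlim : Filter.Tendsto F Filter.atTop (nhds (4 * (Real.pi / 2))) := by
    refine Filter.Tendsto.const_mul _ ?_
    refine (Real.tendsto_arctan_atTop.mono_right nhdsWithin_le_nhds).comp ?_
    refine Filter.Tendsto.atTop_div_const ha0 ?_
    refine Real.tendsto_sqrt_atTop.comp ?_
    refine Filter.Tendsto.const_mul_atTop (by norm_num) ?_
    exact Filter.tendsto_atTop_add_const_left _ _ Filter.tendsto_id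
  have hInt0 := integrableOn_Ioi_deriv_of_nonneg' hd hpos hlim
  have hval := integral_Ioi_of_hasDerivAt_of_nonneg' hd hpos hlim
  have hle : ∀ r ∈ Set.Ioi (0 : ℝ), ENNReal.ofReal |-(z / (1 + r)) * gd (1 + r) z|
      ≤ ENNReal.ofReal (F' r) := by
    intro r hr
    have hr : 0 < r := hr
    refine ENNReal.ofReal_le_ofReal ?_
    set ρ := 1 + r with hρ
    have hρ0 : 0 < ρ := by positivity
    rw [abs_mul, abs_neg, abs_div, abs_of_pos hρ0, ← ha, abs_of_nonneg (gd_nonneg _ _)]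
    have hexp : Real.exp (-(z ^ 2) / (2 * ρ)) ≤ 2 * ρ / (2 * ρ + a ^ 2) := by
      have h1 := Real.add_one_le_exp (z ^ 2 / (2 * ρ))
      rw [neg_div, Real.exp_neg, inv_eq_one_div, ha, sq_abs]
      rw [div_le_div_iff₀ (Real.exp_pos _) (by positivity)]
      have : 2 * ρ * (z ^ 2 / (2 * ρ) + 1) = 2 * ρ + z ^ 2 := by field_simp; ring
      nlinarith [mul_le_mul_of_nonneg_left h1 (by positivity : 0 ≤ 2 * ρ)]
    have hs : (√(2 * Real.pi * ρ))⁻¹ ≤ (√(2 * ρ))⁻¹ := by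
      refine inv_anti₀ (by positivity) (Real.sqrt_le_sqrt ?_)
      nlinarith [Real.pi_gt_three]
    have hsq : √(2 * ρ) ^ 2 = 2 * ρ := Real.sq_sqrt (by positivity)
    have hsp : 0 < √(2 * ρ) := by positivity
    calc a / ρ * gd ρ z ≤ a / ρ * ((√(2 * ρ))⁻¹ * (2 * ρ / (2 * ρ + a ^ 2))) := by
          unfold gd; gcongr
      _ ≤ F' r := by
          simp only [hF']
          rw [← hρ, div_pow, hsq]
          have e1 : a / ρ * ((√(2 * ρ))⁻¹ * (2 * ρ / (2 * ρ + a ^ 2)))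
            = 2 * (a / (√(2 * ρ) * (2 * ρ + a ^ 2))) := by field_simp
          have e2 : 4 * (1 / (1 + 2 * ρ / a ^ 2) * (2 / (2 * √(2 * ρ)) / a))
            = 4 * (a / (√(2 * ρ) * (2 * ρ + a ^ 2))) := by field_simp; ring
          rw [e1, e2]
          have : 0 ≤ a / (√(2 * ρ) * (2 * ρ + a ^ 2)) := by positivity
          linarith
  refine (setLIntegral_mono' measurableSet_Ioi hle).trans ?_
  rw [← ofReal_integral_eq_lintegral_ofReal hInt0
    ((ae_restrict_iff' measurableSet_Ioi).2 (Filter.Eventually.of_forall hpos)), hval]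
  refine ENNReal.ofReal_le_ofReal ?_
  have : 0 ≤ F 0 := by
    simp only [hF]
    have : 0 ≤ Real.arctan (√(2 * (1 + 0)) / a) := Real.arctan_nonneg.2 (by positivity)
    positivity
  linarith

lemma gd_meas : Measurable (fun p : ℝ × ℝ => gd p.1 p.2) := by
  unfold gd
  fun_prop

lemma gd_diff_time (a b : ℝ) :
    ∫⁻ r in Set.Ioi (0 : ℝ), ENNReal.ofReal |gd (1 + r) a - gd (1 + r) b|
      ≤ ENNReal.ofReal (2 * Real.pi) * ENNReal.ofReal |a - b| := by
  have hmeas : Measurable (fun p : ℝ × ℝ =>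
      ENNReal.ofReal |-(p.2 / (1 + p.1)) * gd (1 + p.1) p.2|) := by
    unfold gd
    fun_prop
  have hle : ∀ r ∈ Set.Ioi (0 : ℝ), ENNReal.ofReal |gd (1 + r) a - gd (1 + r) b|
      ≤ ∫⁻ z in Set.uIoc b a, ENNReal.ofReal |-(z / (1 + r)) * gd (1 + r) z| := by
    intro r hr
    have hr : 0 < r := hr
    have hcont : Continuous (fun z => -(z / (1 + r)) * gd (1 + r) z) :=
      (continuous_id.div_const _).neg.mul (gd_cont _)
    rw [← intervalIntegral.integral_eq_sub_of_hasDerivAt (fun z _ => gd_hasDeriv (1 + r) z)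
      (hcont.intervalIntegrable _ _)]
    have h1 := intervalIntegral.norm_integral_le_integral_norm_uIoc (a := b) (b := a)
      (f := fun z => -(z / (1 + r)) * gd (1 + r) z) (μ := volume)
    refine (ENNReal.ofReal_le_ofReal h1).trans ?_
    rw [ofReal_integral_eq_lintegral_ofReal]
    · rfl
    · exact (intervalIntegrable_iff.1 (hcont.intervalIntegrable b a)).norm
    · exact Filter.Eventually.of_forall fun z => norm_nonneg _
  refine (setLIntegral_mono' measurableSet_Ioi hle).trans ?_
  rw [lintegral_lintegral_swap hmeas.aemeasurable]
  refine (lintegral_mono fun z => gd_time_integral z).trans ?_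
  rw [lintegral_const, Measure.restrict_apply_univ]
  gcongr
  rw [Set.uIoc, Real.volume_Ioc, max_sub_min_eq_abs', abs_sub_comm]

/-- The test function. -/
noncomputable def hk (ν : Measure ℝ) (y : ℝ) : ℝ := gd 1 y - ∫ x, gd 1 (y - x) ∂ν

/-- The heat semigroup applied to `h`, through Brownian motion. -/
noncomputable def Pt {Ω : Type*} [MeasurableSpace Ω] (P : Measure Ω) (B : ℝ → Ω → ℝ)
    (h : ℝ → ℝ) (r y : ℝ) : ℝ := ∫ ω, h (y + B r ω) ∂P

section hk
variable {ν : Measure ℝ} [IsProbabilityMeasure ν]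

lemma gd_int_nu {r : ℝ} (hr : 0 ≤ r) (y : ℝ) : Integrable (fun x => gd r (y - x)) ν :=
  Integrable.of_bound (C := (√(2 * Real.pi * r))⁻¹)
    ((gd_cont r).comp (continuous_const.sub continuous_id)).aestronglyMeasurable
    (Filter.Eventually.of_forall fun x => by
      rw [Real.norm_of_nonneg (gd_nonneg _ _)]; exact gd_le _ _ hr)

lemma hk_cont : Continuous (hk ν) := by
  refine (gd_cont 1).sub ?_
  refine continuous_of_dominated (bound := fun _ => 1) ?_ ?_ (integrable_const _) ?_
  · exact fun y => ((gd_cont 1).comp (continuous_const.sub continuous_id)).aestronglyMeasurable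
  · exact fun y => Filter.Eventually.of_forall fun x => by
      rw [Real.norm_of_nonneg (gd_nonneg _ _)]; exact gd_one_le _
  · exact Filter.Eventually.of_forall fun x => (gd_cont 1).comp (continuous_id.sub continuous_const)

lemma hk_abs (y : ℝ) : |hk ν y| ≤ 1 := by
  have h0 : 0 ≤ ∫ x, gd 1 (y - x) ∂ν := integral_nonneg fun x => gd_nonneg _ _
  have h1 : ∫ x, gd 1 (y - x) ∂ν ≤ 1 := by
    calc ∫ x, gd 1 (y - x) ∂ν ≤ ∫ x, 1 ∂ν :=
          integral_mono (gd_int_nu zero_le_one y) (integrable_const _) fun x => gd_one_le _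
      _ = 1 := by simp
  have h2 := gd_nonneg 1 y
  have h3 := gd_one_le y
  unfold hk
  rw [abs_le]; constructor <;> linarith

lemma hk_integrable : Integrable (hk ν) := by
  refine (gd_integrable zero_le_one).sub ?_
  have h5 := shear_integrable (P := ν) (c := fun w => - w) (measurable_id.neg)
    (gd_integrable zero_le_one)
  have := h5.integral_prod_right
  simpa [sub_eq_add_neg] using this
end hk

section Pt
variable {Ω : Type*} [MeasurableSpace Ω] {P : Measure Ω} [IsProbabilityMeasure P]
  {B : ℝ → Ω → ℝ} {h : ℝ → ℝ}

lemma B_law (hB : IsTwoSidedBM P B) (r : ℝ) :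
    P.map (B r) = gaussianReal 0 (|r|).toNNReal := by
  rcases lt_trichotomy r 0 with hr | rfl | hr
  · have h1 := hB.gaussIncr r 0 hr
    have h2 : P.map (B r) = (P.map (fun ω => B 0 ω - B r ω)).map (fun x => -x) := by
      have hd : AEMeasurable (fun ω => B 0 ω - B r ω) P := (hB.aemeas 0).sub (hB.aemeas r)
      rw [AEMeasurable.map_map_of_aemeasurable measurable_neg.aemeasurable hd]
      refine Measure.map_congr ?_
      filter_upwards [hB.zero] with ω hω
      simp [hω]
    rw [h2, h1, gaussianReal_map_neg, abs_of_neg hr]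
    simp
  · have h2 : P.map (B 0) = P.map (fun _ => (0 : ℝ)) := by
      refine Measure.map_congr ?_
      filter_upwards [hB.zero] with ω hω using hω
    rw [h2, Measure.map_const]
    simp
  · have h1 := hB.gaussIncr 0 r hr
    have h2 : P.map (B r) = (P.map (fun ω => B r ω - B 0 ω)) := by
      refine Measure.map_congr ?_
      filter_upwards [hB.zero] with ω hω
      simp [hω]
    rw [h2, h1, abs_of_pos hr]
    simp

lemma Pt_eq_gauss (hB : IsTwoSidedBM P B) (hh : Measurable h) (r y : ℝ) :
    Pt P B h r y = ∫ z, h (y + z) ∂(gaussianReal 0 (|r|).toNNReal) := by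
  have hy : Measurable (fun z => h (y + z)) := hh.comp (measurable_const.add measurable_id)
  rw [← B_law hB r, integral_map (hB.aemeas r) hy.aestronglyMeasurable]
  rfl

lemma Pt_neg (hB : IsTwoSidedBM P B) (hh : Measurable h) (r y : ℝ) :
    Pt P B h (-r) y = Pt P B h r y := by
  rw [Pt_eq_gauss hB hh, Pt_eq_gauss hB hh, abs_neg]

lemma Pt_meas (hm : ∀ t, Measurable (B t)) (hc : ∀ ω, Continuous fun t => B t ω)
    (hh : Measurable h) : Measurable (fun p : ℝ × ℝ => Pt P B h p.1 p.2) := by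
  have h1 : Measurable (fun q : (ℝ × ℝ) × Ω => h (q.1.2 + B q.1.1 q.2)) :=
    hh.comp ((measurable_snd.comp measurable_fst).add ((B_uncurry hm hc).comp
      (measurable_snd.prodMk (measurable_fst.comp measurable_fst))))
  have := (h1.stronglyMeasurable.integral_prod_right (ν := P)
    (f := fun (p : ℝ × ℝ) ω => h (p.2 + B p.1 ω))).measurable
  exact this

lemma Pt_cont (hm : ∀ t, Measurable (B t)) (hh : Continuous h) (hb : ∀ y, |h y| ≤ 1) (r : ℝ) :
    Continuous (Pt P B h r) := by
  unfold Pt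
  refine continuous_of_dominated (bound := fun _ => 1) ?_ ?_ (integrable_const _) ?_
  · exact fun y => (hh.measurable.comp (measurable_const.add (hm r))).aestronglyMeasurable
  · exact fun y => Filter.Eventually.of_forall fun ω => hb _
  · exact Filter.Eventually.of_forall fun ω => hh.comp (continuous_id.add continuous_const)

lemma Pt_abs (hb : ∀ y, |h y| ≤ 1) (r y : ℝ) : |Pt P B h r y| ≤ 1 := by
  have := norm_integral_le_of_norm_le_const (μ := P) (f := fun ω => h (y + B r ω)) (C := 1)
    (Filter.Eventually.of_forall fun ω => hb _)
  simpa [Pt] using this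

lemma Pt_hk (hB : IsTwoSidedBM P B) {ν : Measure ℝ} [IsProbabilityMeasure ν] {r : ℝ}
    (hr : 0 < r) (y : ℝ) :
    Pt P B (hk ν) r y = ∫ x, (gd (1 + r) y - gd (1 + r) (y - x)) ∂ν := by
  rw [Pt_eq_gauss hB hk_cont.measurable, abs_of_pos hr]
  unfold hk
  set γ := gaussianReal 0 r.toNNReal
  have hb : ∀ (x : ℝ), ‖gd 1 x‖ ≤ 1 := fun x => by
    rw [Real.norm_of_nonneg (gd_nonneg _ _)]; exact gd_one_le _
  have hm2 : Measurable (fun p : ℝ × ℝ => gd 1 (y + p.1 - p.2)) :=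
    (gd_cont 1).measurable.comp ((measurable_const.add measurable_fst).sub measurable_snd)
  have hi2 : Integrable (fun p : ℝ × ℝ => gd 1 (y + p.1 - p.2)) (γ.prod ν) :=
    Integrable.of_bound (C := 1) hm2.aestronglyMeasurable (Filter.Eventually.of_forall fun p => hb _)
  rw [integral_sub, integral_sub, gd_conv hr, integral_integral_swap hi2]
  · congr 1
    · simp
    · refine integral_congr_ae (Filter.Eventually.of_forall fun x => ?_)
      simp only
      rw [← gd_conv hr]
      refine integral_congr_ae (Filter.Eventually.of_forall fun z => ?_)
      simp only
      congr 1
      ring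
  · exact integrable_const _
  · exact gd_int_nu (by linarith) y
  · exact Integrable.of_bound (C := 1)
      ((gd_cont 1).comp (continuous_const.add continuous_id)).aestronglyMeasurable
      (Filter.Eventually.of_forall fun p => hb _)
  · exact hi2.integral_prod_left

lemma Pt_hk_pos (hB : IsTwoSidedBM P B) {ν : Measure ℝ} [IsProbabilityMeasure ν]
    (hν0 : ν {0} = 0) {r : ℝ} (hr : 0 < r) : 0 < Pt P B (hk ν) r 0 := by
  rw [Pt_hk hB hr]
  have hpos : ∀ᵐ x ∂ν, 0 < gd (1 + r) 0 - gd (1 + r) (0 - x) := by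
    have : ∀ᵐ x ∂ν, x ≠ 0 := by
      rw [ae_iff]; simpa using hν0
    filter_upwards [this] with x hx
    have := gd_lt (r := 1 + r) (x := 0 - x) (by linarith) (by simpa using hx)
    linarith
  have hi : Integrable (fun x => gd (1 + r) 0 - gd (1 + r) (0 - x)) ν :=
    (integrable_const _).sub (gd_int_nu (by linarith) 0)
  rw [integral_pos_iff_support_of_nonneg_ae (hpos.mono fun x hx => hx.le) hi]
  have : Function.support (fun x => gd (1 + r) 0 - gd (1 + r) (0 - x)) =ᵐ[ν] Set.univ := by
    rw [Filter.eventuallyEq_univ]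
    filter_upwards [hpos] with x hx using hx.ne'
  rw [measure_congr this]
  simp

lemma pot_bound (hB : IsTwoSidedBM P B) {ν : Measure ℝ} [IsProbabilityMeasure ν] (y : ℝ) :
    ∫⁻ r in Set.Ici (0 : ℝ), ‖Pt P B (hk ν) r y‖ₑ
      ≤ ENNReal.ofReal (2 * Real.pi) * ∫⁻ x, ENNReal.ofReal |x| ∂ν := by
  rw [← restrict_Ioi_eq_restrict_Ici]
  have hmeas : Measurable (fun p : ℝ × ℝ =>
      ENNReal.ofReal |gd (1 + p.1) y - gd (1 + p.1) (y - p.2)|) := by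
    unfold gd
    fun_prop
  have hle : ∀ r ∈ Set.Ioi (0 : ℝ), ‖Pt P B (hk ν) r y‖ₑ
      ≤ ∫⁻ x, ENNReal.ofReal |gd (1 + r) y - gd (1 + r) (y - x)| ∂ν := by
    intro r hr
    rw [Pt_hk hB hr]
    refine (enorm_integral_le_lintegral_enorm _).trans (le_of_eq ?_)
    simp_rw [Real.enorm_eq_ofReal_abs]
  refine (setLIntegral_mono' measurableSet_Ioi hle).trans ?_
  rw [lintegral_lintegral_swap hmeas.aemeasurable, ← lintegral_const_mul _ (by fun_prop)]
  refine lintegral_mono fun x => ?_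
  have := gd_diff_time y (y - x)
  simpa using this

end Pt

section mom
variable {Ω : Type*} [MeasurableSpace Ω] {P : Measure Ω} [IsProbabilityMeasure P]
  {B : ℝ → Ω → ℝ} {h : ℝ → ℝ}

lemma incr_law (hB : IsTwoSidedBM P B) (u s : ℝ) :
    P.map (fun ω => B s ω - B u ω) = P.map (B (s - u)) := by
  have := B_law (shift_bm hB u) (s - u)
  simp only [add_sub_cancel] at this
  rw [this, B_law hB]

lemma triple_law (hB : IsTwoSidedBM P B) (hm : ∀ t, Measurable (B t)) {s u v w : ℝ}
    (h1 : s ≤ u) (h2 : u ≤ v) (h3 : v ≤ w) :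
    P.map (fun ω => (B s ω - B u ω, (B v ω - B u ω, B w ω - B v ω)))
      = (P.prod (P.prod P)).map
        (fun p => (B (s - u) p.1, (B (v - u) p.2.1, B (w - v) p.2.2))) := by
  have hmono : Monotone ![s, u, v, w] := by
    rw [Fin.monotone_iff_le_succ]
    intro i
    fin_cases i
    · exact h1
    · exact h2
    · exact h3
  have hind := hB.indepIncr 3 ![s, u, v, w] hmono
  have hm' : ∀ i : Fin 3, Measurable (fun ω => B (![s, u, v, w] i.succ) ω
      - B (![s, u, v, w] i.castSucc) ω) := fun i => (hm _).sub (hm _)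
  have i1 : IndepFun (fun ω => B v ω - B u ω) (fun ω => B w ω - B v ω) P :=
    hind.indepFun (i := 1) (j := 2) (by decide)
  have i2 : IndepFun (fun ω => (B v ω - B u ω, B w ω - B v ω)) (fun ω => B u ω - B s ω) P :=
    hind.indepFun_prodMk hm' 1 2 0 (by decide) (by decide)
  have i3 : IndepFun (fun ω => B s ω - B u ω) (fun ω => (B v ω - B u ω, B w ω - B v ω)) P := by
    have := i2.symm.comp (φ := fun x => -x) (ψ := id) measurable_neg measurable_id
    have e : ((fun x => -x) ∘ fun ω => B u ω - B s ω) = fun ω => B s ω - B u ω := by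
      funext ω; simp
    rw [e] at this
    exact this
  have mm : ∀ a b, Measurable (fun ω => B a ω - B b ω) := fun a b => (hm a).sub (hm b)
  rw [(indepFun_iff_map_prod_eq_prod_map_map (mm s u).aemeasurable
    ((mm v u).prodMk (mm w v)).aemeasurable).1 i3,
    (indepFun_iff_map_prod_eq_prod_map_map (mm v u).aemeasurable (mm w v).aemeasurable).1 i1,
    incr_law hB, incr_law hB, incr_law hB, Measure.map_prod_map _ _ (hm _) (hm _),
    Measure.map_prod_map _ _ (hm _) ((hm _).prodMap (hm _))]
  rfl

lemma four_pt (hB : IsTwoSidedBM P B) (hm : ∀ t, Measurable (B t)) {s u v w : ℝ}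
    (h1 : s ≤ u) (h2 : u ≤ v) (h3 : v ≤ w) {F : ℝ × ℝ × ℝ × ℝ → ℝ} (hF : Measurable F) :
    ∫ z : Ω × ℝ, F (z.2 + B s z.1, z.2 + B u z.1, z.2 + B v z.1, z.2 + B w z.1) ∂(P.prod volume)
      = ∫ p : (Ω × Ω × Ω) × ℝ, F (p.2 + B (s - u) p.1.1, p.2, p.2 + B (v - u) p.1.2.1,
          p.2 + B (v - u) p.1.2.1 + B (w - v) p.1.2.2) ∂((P.prod (P.prod P)).prod volume) := by
  have e1 := shear_integral (P := P) (c := B u) (hm u)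
    (F := fun z => F (z.2 + (B s z.1 - B u z.1), z.2, z.2 + (B v z.1 - B u z.1),
      z.2 + (B v z.1 - B u z.1) + (B w z.1 - B v z.1))) (by
        refine hF.comp ?_
        fun_prop)
  have e2 := prod_law (P := P) (P' := P.prod (P.prod P))
    (b := fun ω => (B s ω - B u ω, (B v ω - B u ω, B w ω - B v ω)))
    (b' := fun p => (B (s - u) p.1, (B (v - u) p.2.1, B (w - v) p.2.2)))
    (by fun_prop) (by fun_prop) (triple_law hB hm h1 h2 h3)
    (F := fun q => F (q.2 + q.1.1, q.2, q.2 + q.1.2.1, q.2 + q.1.2.1 + q.1.2.2)) (by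
        refine hF.comp ?_
        fun_prop)
  rw [← e2, ← e1]
  refine integral_congr_ae (Filter.Eventually.of_forall fun z => ?_)
  simp only
  congr 1
  ext <;> simp only <;> ring

/-- Autocorrelation. -/
noncomputable def qf (P : Measure Ω) (B : ℝ → Ω → ℝ) (h : ℝ → ℝ) (r : ℝ) : ℝ :=
  ∫ z : Ω × ℝ, h z.2 * h (z.2 + B r z.1) ∂(P.prod volume)

lemma two_pt (hB : IsTwoSidedBM P B) (hm : ∀ t, Measurable (B t)) (hh : Measurable h) (s u : ℝ) :
    ∫ z : Ω × ℝ, h (z.2 + B s z.1) * h (z.2 + B u z.1) ∂(P.prod volume) = qf P B h (u - s) :=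
  stepA (ι := Unit) hB hm hh (Φ := fun w => h (w ())) (hh.comp (measurable_pi_apply _))
    (fun _ => u) s

lemma qf_cont (hm : ∀ t, Measurable (B t)) (hc : ∀ ω, Continuous fun t => B t ω)
    (hh : Continuous h) (hb : ∀ y, |h y| ≤ 1) (hi : Integrable h) : Continuous (qf P B h) := by
  unfold qf
  refine continuous_of_dominated (bound := fun z : Ω × ℝ => |h z.2|) ?_ ?_ ?_ ?_
  · intro r
    exact ((hh.measurable.comp measurable_snd).mul (hh.measurable.comp (measurable_snd.add
      ((hm r).comp measurable_fst)))).aestronglyMeasurable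
  · refine fun r => Filter.Eventually.of_forall fun z => ?_
    rw [norm_mul, Real.norm_eq_abs, Real.norm_eq_abs]
    exact mul_le_of_le_one_right (abs_nonneg _) (hb _)
  · exact (hi.abs).comp_snd P
  · exact Filter.Eventually.of_forall fun z =>
      continuous_const.mul (hh.comp (continuous_const.add (hc _)))

lemma Pt_integrable (hm : ∀ t, Measurable (B t)) (hi : Integrable h) (r : ℝ) :
    Integrable (Pt P B h r) := by
  have := (shear_integrable (P := P) (hm r) hi).integral_prod_right
  exact this

lemma qf_sq (hB : IsTwoSidedBM P B) (hm : ∀ t, Measurable (B t)) (hh : Continuous h)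
    (hb : ∀ y, |h y| ≤ 1) (hi : Integrable h) {r : ℝ} (hr : 0 ≤ r) :
    qf P B h r = ∫ y, (Pt P B h (r / 2) y) ^ 2 := by
  have e1 := two_pt (P := P) hB hm hh.measurable (-(r / 2)) (r / 2)
  have hmh := hh.measurable
  have e2 := four_pt (P := P) hB hm (s := -(r / 2)) (u := 0) (v := r / 2) (w := r / 2)
    (by linarith) (by linarith) le_rfl (F := fun x => h x.1 * h x.2.2.1) (by fun_prop)
  simp only at e2
  rw [e1] at e2
  rw [show r / 2 - -(r / 2) = r by ring] at e2
  rw [e2, integral_prod_symm]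
  · refine integral_congr_ae (Filter.Eventually.of_forall fun y => ?_)
    simp only
    rw [integral_prod_mul (μ := P) (ν := P.prod P) (fun ω => h (y + B (-(r / 2) - 0) ω))
      (fun p => h (y + B (r / 2 - 0) p.1))]
    rw [integral_fun_fst (μ := P) (ν := P) (fun ω => h (y + B (r / 2 - 0) ω))]
    simp only [sub_zero, probReal_univ, one_smul]
    change Pt P B h (-(r / 2)) y * Pt P B h (r / 2) y = _
    rw [Pt_neg hB hh.measurable]
    ring
  · have := shear_integrable (P := P.prod (P.prod P)) (c := fun p => B (-(r / 2) - 0) p.1)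
      (by fun_prop) hi
    refine this.mul_bdd (c := 1) ?_ (Filter.Eventually.of_forall fun z => hb _)
    refine Measurable.aestronglyMeasurable ?_
    fun_prop

lemma qf_neg (hB : IsTwoSidedBM P B) (hm : ∀ t, Measurable (B t)) (hh : Measurable h) (r : ℝ) :
    qf P B h (-r) = qf P B h r := by
  have e1 := two_pt (P := P) hB hm hh 0 r
  have e2 := two_pt (P := P) hB hm hh r 0
  simp_rw [mul_comm] at e1
  rw [sub_zero] at e1
  rw [zero_sub] at e2
  rw [← e1, ← e2]

lemma qf_nonneg (hB : IsTwoSidedBM P B) (hm : ∀ t, Measurable (B t)) (hh : Continuous h)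
    (hb : ∀ y, |h y| ≤ 1) (hi : Integrable h) (r : ℝ) : 0 ≤ qf P B h r := by
  rcases le_total 0 r with hr | hr
  · rw [qf_sq hB hm hh hb hi hr]
    exact integral_nonneg fun y => sq_nonneg _
  · rw [← qf_neg hB hm hh.measurable, qf_sq hB hm hh hb hi (by linarith)]
    exact integral_nonneg fun y => sq_nonneg _

lemma qf_pos (hB : IsTwoSidedBM P B) (hm : ∀ t, Measurable (B t)) (hh : Continuous h)
    (hb : ∀ y, |h y| ≤ 1) (hi : Integrable h) {r : ℝ} (hr : 0 < r)
    (hp : 0 < Pt P B h (r / 2) 0) : 0 < qf P B h r := by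
  rw [qf_sq hB hm hh hb hi hr.le]
  have hcont := Pt_cont (P := P) hm hh hb (r / 2)
  have hInt0 : Integrable (fun y => (Pt P B h (r / 2) y) ^ 2) := by
    have := (Pt_integrable (P := P) hm hi (r / 2)).mul_bdd (c := 1)
      hcont.aestronglyMeasurable (Filter.Eventually.of_forall fun y => Pt_abs hb _ _)
    simpa [sq] using this
  rw [integral_pos_iff_support_of_nonneg (fun y => sq_nonneg _) hInt0]
  refine IsOpen.measure_pos _ ?_ ⟨0, ?_⟩
  · exact (hcont.pow 2).isOpen_support
  · simp [hp.ne']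

lemma A_abs (hb : ∀ y, |h y| ≤ 1) {a b : ℝ} (hab : a ≤ b) (z : Ω × ℝ) :
    |∫ r in a..b, h (z.2 + B r z.1)| ≤ b - a := by
  have := intervalIntegral.norm_integral_le_of_norm_le_const (a := a) (b := b)
    (f := fun r => h (z.2 + B r z.1)) (C := 1) (fun x _ => hb _)
  rwa [Real.norm_eq_abs, one_mul, abs_of_nonneg (sub_nonneg.2 hab)] at this

lemma second_moment_eq (hB : IsTwoSidedBM P B) (hm : ∀ t, Measurable (B t))
    (hc : ∀ ω, Continuous fun t => B t ω) (hh : Continuous h)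
    (hb : ∀ y, |h y| ≤ 1) (hi : Integrable h) {t : ℝ} (ht : 0 ≤ t) :
    ∫ z : Ω × ℝ, (∫ r in (0 : ℝ)..t, h (z.2 + B r z.1)) ^ 2 ∂(P.prod volume)
      = ∫ s in (0 : ℝ)..t, ∫ u in (0 : ℝ)..t, qf P B h (u - s) := by
  have hAm := A_meas hm hc hh ht
  have hJ := joint_integrable (P := P) hm hc hh.measurable hi t
  calc _ = ∫ z : Ω × ℝ, (∫ s in (0 : ℝ)..t, h (z.2 + B s z.1)
          * ∫ r in (0 : ℝ)..t, h (z.2 + B r z.1)) ∂(P.prod volume) := by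
        refine integral_congr_ae (Filter.Eventually.of_forall fun z => ?_)
        simp only
        rw [intervalIntegral.integral_mul_const, sq]
    _ = ∫ s in (0 : ℝ)..t, ∫ z : Ω × ℝ, h (z.2 + B s z.1)
          * (∫ r in (0 : ℝ)..t, h (z.2 + B r z.1)) ∂(P.prod volume) := by
        rw [intervalIntegral_integral_swap]
        refine hJ.mul_bdd (c := t) (hAm.comp measurable_snd).aestronglyMeasurable
          (Filter.Eventually.of_forall fun p => ?_)
        have := A_abs (B := B) hb ht p.2
        simpa using this
    _ = ∫ s in (0 : ℝ)..t, ∫ u in (0 : ℝ)..t, qf P B h (u - s) := by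
        refine intervalIntegral.integral_congr fun s _ => ?_
        simp_rw [← two_pt (P := P) hB hm hh.measurable s, ← intervalIntegral.integral_const_mul]
        rw [intervalIntegral_integral_swap]
        have hmh := hh.measurable
        have hms := hm s
        refine (hJ.mul_bdd (c := 1) (g := fun p => h (p.2.2 + B s p.2.1)) ?_
          (Filter.Eventually.of_forall fun p => hb _)).congr
            (Filter.Eventually.of_forall fun p => mul_comm _ _)
        refine Measurable.aestronglyMeasurable ?_
        fun_prop

lemma second_moment (hB : IsTwoSidedBM P B) (hm : ∀ t, Measurable (B t))
    (hc : ∀ ω, Continuous fun t => B t ω) (hh : Continuous h)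
    (hb : ∀ y, |h y| ≤ 1) (hi : Integrable h) (hp : ∀ r, 0 < r → 0 < Pt P B h r 0) :
    ∃ c : ℝ, 0 < c ∧ ∀ t : ℝ, 2 ≤ t →
      c * t ≤ ∫ z : Ω × ℝ, (∫ r in (0 : ℝ)..t, h (z.2 + B r z.1)) ^ 2 ∂(P.prod volume) := by
  have hqc := qf_cont (P := P) hm hc hh hb hi
  have hq0 := qf_nonneg (P := P) hB hm hh hb hi
  set c := ∫ r in (0 : ℝ)..1, qf P B h r with hcdef
  have hcpos : 0 < c := by
    refine intervalIntegral.intervalIntegral_pos_of_pos_on (hqc.intervalIntegrable _ _) ?_ one_pos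
    intro r hr
    exact qf_pos hB hm hh hb hi hr.1 (hp _ (half_pos hr.1))
  refine ⟨c / 2, by positivity, fun t ht => ?_⟩
  rw [second_moment_eq hB hm hc hh hb hi (by linarith)]
  have hG : Continuous (fun s => ∫ u in (0 : ℝ)..t, qf P B h (u - s)) := by
    refine intervalIntegral.continuous_parametric_intervalIntegral_of_continuous' ?_ _ _
    exact hqc.comp (continuous_snd.sub continuous_fst)
  have hG0 : ∀ s, 0 ≤ ∫ u in (0 : ℝ)..t, qf P B h (u - s) := fun s =>
    intervalIntegral.integral_nonneg (by linarith) fun u _ => hq0 _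
  have step1 : ∫ s in (0 : ℝ)..(t - 1), ∫ u in (0 : ℝ)..t, qf P B h (u - s)
      ≤ ∫ s in (0 : ℝ)..t, ∫ u in (0 : ℝ)..t, qf P B h (u - s) :=
    intervalIntegral.integral_mono_interval le_rfl (by linarith) (by linarith)
      (Filter.Eventually.of_forall fun s => hG0 s) (hG.intervalIntegrable _ _)
  have step2 : ∫ s in (0 : ℝ)..(t - 1), c
      ≤ ∫ s in (0 : ℝ)..(t - 1), ∫ u in (0 : ℝ)..t, qf P B h (u - s) := by
    refine intervalIntegral.integral_mono_on (by linarith) (by simp)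
      (hG.intervalIntegrable _ _) fun s hs => ?_
    rw [intervalIntegral.integral_comp_sub_right (fun r => qf P B h r) s]
    exact intervalIntegral.integral_mono_interval (by linarith [hs.1]) zero_le_one
      (by linarith [hs.2]) (Filter.Eventually.of_forall fun s => hq0 s)
      (hqc.intervalIntegrable _ _)
  rw [intervalIntegral.integral_const, smul_eq_mul] at step2
  nlinarith
end mom

lemma quad_id {k : ℝ → ℝ} (hk : Continuous k) (v : ℝ) :
    (∫ r in (0 : ℝ)..v, k r) ^ 2 = 2 * ∫ u in (0 : ℝ)..v, k u * ∫ r in (0 : ℝ)..u, k r := by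
  have hd : ∀ u, HasDerivAt (fun u => ∫ r in (0 : ℝ)..u, k r) (k u) u := fun u =>
    intervalIntegral.integral_hasDerivAt_right (hk.intervalIntegrable _ _)
      (hk.stronglyMeasurableAtFilter _ _) hk.continuousAt
  have hac : Continuous (fun u => ∫ r in (0 : ℝ)..u, k r) :=
    continuous_iff_continuousAt.2 fun u => (hd u).continuousAt
  have := intervalIntegral.integral_eq_sub_of_hasDerivAt (a := 0) (b := v)
    (f := fun u => (∫ r in (0 : ℝ)..u, k r) ^ 2) (f' := fun u => 2 * (k u * ∫ r in (0 : ℝ)..u, k r))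
    (fun u _ => ((hd u).pow 2).congr_deriv (by norm_num; ring))
    ((continuous_const.mul (hk.mul hac)).intervalIntegrable _ _)
  rw [intervalIntegral.integral_const_mul] at this
  rw [this]; simp

lemma quart_id {k : ℝ → ℝ} (hk : Continuous k) (t : ℝ) :
    (∫ r in (0 : ℝ)..t, k r) ^ 4 = 12 * ∫ v in (0 : ℝ)..t,
      k v * ((∫ r in v..t, k r) * (∫ r in (0 : ℝ)..v, k r) ^ 2) := by
  have hd : ∀ u, HasDerivAt (fun u => ∫ r in (0 : ℝ)..u, k r) (k u) u := fun u =>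
    intervalIntegral.integral_hasDerivAt_right (hk.intervalIntegrable _ _)
      (hk.stronglyMeasurableAtFilter _ _) hk.continuousAt
  have hac : Continuous (fun u => ∫ r in (0 : ℝ)..u, k r) :=
    continuous_iff_continuousAt.2 fun u => (hd u).continuousAt
  set a : ℝ → ℝ := fun u => ∫ r in (0 : ℝ)..u, k r with ha
  have hsub : ∀ v, ∫ r in v..t, k r = a t - a v := fun v => by
    simp only [ha]
    rw [intervalIntegral.integral_interval_sub_left (hk.intervalIntegrable _ _)
      (hk.intervalIntegrable _ _)]
  have h0 : a 0 = 0 := by simp [ha]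
  suffices hgoal : a t ^ 4 = 12 * ∫ v in (0 : ℝ)..t, k v * ((a t - a v) * a v ^ 2) by
    simp_rw [hsub]
    rw [h0, sub_zero]
    exact hgoal
  have := intervalIntegral.integral_eq_sub_of_hasDerivAt (a := 0) (b := t)
    (f := fun u => 4 * a t * a u ^ 3 - 3 * a u ^ 4)
    (f' := fun v => 12 * (k v * ((a t - a v) * a v ^ 2)))
    (fun u _ => ((((hd u).pow 3).const_mul (4 * a t)).sub (((hd u).pow 4).const_mul 3)).congr_deriv
      (by norm_num; ring))
    ((continuous_const.mul (hk.mul ((continuous_const.sub hac).mul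
      (hac.pow 2)))).intervalIntegrable _ _)
  rw [intervalIntegral.integral_const_mul] at this
  rw [h0] at this
  rw [this]; ring

section mom
variable {Ω : Type*} [MeasurableSpace Ω] {P : Measure Ω} [IsProbabilityMeasure P]
  {B : ℝ → Ω → ℝ} {h : ℝ → ℝ}

lemma joint_integrable' (hm : ∀ t, Measurable (B t)) (hc : ∀ ω, Continuous fun t => B t ω)
    (hh : Measurable h) (hi : Integrable h) (a b : ℝ) :
    Integrable (fun p : ℝ × (Ω × ℝ) => h (p.2.2 + B p.1 p.2.1))
      ((volume.restrict (Set.uIoc a b)).prod (P.prod volume)) := by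
  have : IsFiniteMeasure (volume.restrict (Set.uIoc a b)) := ⟨by simp [Set.uIoc]⟩
  refine (integrable_prod_iff (hh.comp (W_meas hm hc)).aestronglyMeasurable).2 ⟨?_, ?_⟩
  · exact Filter.Eventually.of_forall fun r => shear_integrable (hm r) hi
  · simp only [Function.comp_apply]
    have : ∀ r, ∫ z : Ω × ℝ, ‖h (z.2 + B r z.1)‖ ∂(P.prod volume)
        = ∫ z : Ω × ℝ, ‖h z.2‖ ∂(P.prod volume) := fun r =>
      shear_integral (F := fun z : Ω × ℝ => ‖h z.2‖) (hm r) (hh.norm.comp measurable_snd)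
    simp only [this]
    exact integrable_const _

lemma A_meas' (hm : ∀ t, Measurable (B t)) (hc : ∀ ω, Continuous fun t => B t ω)
    (hh : Measurable h) (a b : ℝ) :
    Measurable (fun z : Ω × ℝ => ∫ r in a..b, h (z.2 + B r z.1)) := by
  have hW : StronglyMeasurable (Function.uncurry fun (z : Ω × ℝ) (r : ℝ) => h (z.2 + B r z.1)) :=
    ((hh.comp (W_meas hm hc)).comp measurable_swap).stronglyMeasurable
  unfold intervalIntegral
  exact (hW.integral_prod_right.measurable).sub (hW.integral_prod_right.measurable)

lemma a_cont (hc : ∀ ω, Continuous fun t => B t ω) (hh : Continuous h) (z : Ω × ℝ) :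
    Continuous (fun v => ∫ r in (0 : ℝ)..v, h (z.2 + B r z.1)) := by
  have hk : Continuous (fun r => h (z.2 + B r z.1)) := hh.comp (continuous_const.add (hc _))
  exact intervalIntegral.continuous_primitive (fun a b => hk.intervalIntegrable a b) 0

lemma a_joint (hm : ∀ t, Measurable (B t)) (hc : ∀ ω, Continuous fun t => B t ω)
    (hh : Continuous h) :
    Measurable (fun p : ℝ × (Ω × ℝ) => ∫ r in (0 : ℝ)..p.1, h (p.2.2 + B r p.2.1)) :=
  measurable_uncurry_of_continuous_of_measurable
    (u := fun v (z : Ω × ℝ) => ∫ r in (0 : ℝ)..v, h (z.2 + B r z.1))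
    (fun z => a_cont hc hh z) (fun v => A_meas' hm hc hh.measurable 0 v)

lemma Y_joint (hm : ∀ t, Measurable (B t)) (hc : ∀ ω, Continuous fun t => B t ω)
    (hh : Continuous h) (t : ℝ) :
    Measurable (fun p : ℝ × (Ω × ℝ) => ∫ r in p.1..t, h (p.2.2 + B r p.2.1)) := by
  refine measurable_uncurry_of_continuous_of_measurable
    (u := fun v (z : Ω × ℝ) => ∫ r in v..t, h (z.2 + B r z.1))
    (fun z => ?_) (fun v => A_meas' hm hc hh.measurable v t)
  have hk : Continuous (fun r => h (z.2 + B r z.1)) := hh.comp (continuous_const.add (hc _))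
  have : (fun v => ∫ r in v..t, h (z.2 + B r z.1)) = fun v => - ∫ r in t..v, h (z.2 + B r z.1) := by
    funext v; rw [intervalIntegral.integral_symm]
  rw [this]
  exact (intervalIntegral.continuous_primitive (fun a b => hk.intervalIntegrable a b) t).neg

lemma four_pt_bound (hB : IsTwoSidedBM P B) (hm : ∀ t, Measurable (B t))
    (hh : Continuous h)
    (hb : ∀ y, |h y| ≤ 1) (hi : Integrable h) {s u v w : ℝ}
    (h1 : s ≤ u) (h2 : u ≤ v) (h3 : v ≤ w) :
    ‖∫ z : Ω × ℝ, h (z.2 + B w z.1) * (h (z.2 + B s z.1) * (h (z.2 + B u z.1) * h (z.2 + B v z.1)))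
        ∂(P.prod volume)‖ₑ
      ≤ ∫⁻ y, (‖h y‖ₑ * ‖Pt P B h (s - u) y‖ₑ) *
        ∫⁻ ω, ‖h (y + B (v - u) ω)‖ₑ * ‖Pt P B h (w - v) (y + B (v - u) ω)‖ₑ ∂P := by
  have hmh := hh.measurable
  have e := four_pt (P := P) hB hm h1 h2 h3
    (F := fun x => h x.2.2.2 * (h x.1 * (h x.2.1 * h x.2.2.1))) (by fun_prop)
  simp only at e
  rw [e, integral_prod_symm]
  · refine (enorm_integral_le_lintegral_enorm _).trans (lintegral_mono fun y => ?_)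
    simp only
    have e1 : ∀ p : Ω × Ω × Ω, h (y + B (v - u) p.2.1 + B (w - v) p.2.2) *
        (h (y + B (s - u) p.1) * (h y * h (y + B (v - u) p.2.1)))
        = (h y * h (y + B (s - u) p.1)) *
          (h (y + B (v - u) p.2.1) * h (y + B (v - u) p.2.1 + B (w - v) p.2.2)) := by
      intro p; ring
    simp_rw [e1]
    rw [integral_prod_mul (μ := P) (ν := P.prod P) (fun ω => h y * h (y + B (s - u) ω))
      (fun p => h (y + B (v - u) p.1) * h (y + B (v - u) p.1 + B (w - v) p.2)),
      integral_const_mul, enorm_mul, enorm_mul]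
    refine mul_le_mul_right ?_ _
    rw [integral_prod]
    · refine (enorm_integral_le_lintegral_enorm _).trans (lintegral_mono fun ω => ?_)
      simp only
      rw [integral_const_mul, enorm_mul]
      rfl
    · refine Integrable.of_bound (C := 1) ?_ (Filter.Eventually.of_forall fun p => ?_)
      · refine Measurable.aestronglyMeasurable ?_
        fun_prop
      · rw [norm_mul]
        exact mul_le_one₀ (hb _) (norm_nonneg _) (hb _)
  · have hsh : Integrable (fun p : (Ω × Ω × Ω) × ℝ => h p.2)
      ((P.prod (P.prod P)).prod volume) := hi.comp_snd _
    have := hsh.mul_bdd (c := 1) (g := fun p : (Ω × Ω × Ω) × ℝ =>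
      h (p.2 + B (v - u) p.1.2.1 + B (w - v) p.1.2.2) * (h (p.2 + B (s - u) p.1.1)
        * h (p.2 + B (v - u) p.1.2.1))) (by
        refine Measurable.aestronglyMeasurable ?_
        fun_prop) (Filter.Eventually.of_forall fun p => by
          rw [norm_mul, norm_mul]
          exact mul_le_one₀ (hb _) (by positivity) (mul_le_one₀ (hb _) (norm_nonneg _) (hb _)))
    refine this.congr (Filter.Eventually.of_forall fun p => ?_)
    simp only
    ring

lemma shift_lint (G : ℝ → ℝ≥0∞) (v t : ℝ) :
    ∫⁻ w in Set.Ioc v t, G (w - v) ≤ ∫⁻ r in Set.Ici (0 : ℝ), G r := by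
  rw [← lintegral_indicator measurableSet_Ioc, ← lintegral_indicator measurableSet_Ici,
    ← lintegral_sub_right_eq_self ((Set.Ici (0 : ℝ)).indicator G) v]
  refine lintegral_mono fun w => ?_
  simp only [Set.indicator]
  split_ifs with h1 h2
  · exact le_refl _
  · exact absurd (by simpa using h1.1.le) h2
  · exact zero_le
  · exact le_rfl

lemma shift_lint' (G : ℝ → ℝ≥0∞) (u : ℝ) :
    ∫⁻ s in Set.Ioc 0 u, G (u - s) ≤ ∫⁻ r in Set.Ici (0 : ℝ), G r := by
  rw [← lintegral_indicator measurableSet_Ioc, ← lintegral_indicator measurableSet_Ici,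
    ← lintegral_sub_left_eq_self ((Set.Ici (0 : ℝ)).indicator G) u]
  refine lintegral_mono fun w => ?_
  simp only [Set.indicator]
  split_ifs with h1 h2
  · exact le_rfl
  · exact absurd (by simpa using h1.2) h2
  · exact zero_le
  · exact le_rfl
end mom

section mom
variable {Ω : Type*} [MeasurableSpace Ω] {P : Measure Ω} [IsProbabilityMeasure P]
  {B : ℝ → Ω → ℝ} {h : ℝ → ℝ}

lemma lint_future (hB : IsTwoSidedBM P B) (hm : ∀ t, Measurable (B t))
    (hc : ∀ ω, Continuous fun t => B t ω) (hh : Continuous h) {C : ℝ≥0∞}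
    (hC : ∀ y, ∫⁻ r in Set.Ici (0 : ℝ), ‖Pt P B h r y‖ₑ ≤ C) {u v : ℝ} (huv : u < v) (t y : ℝ) :
    ∫⁻ w in Set.Ioc v t, ∫⁻ ω, ‖h (y + B (v - u) ω)‖ₑ
        * ‖Pt P B h (w - v) (y + B (v - u) ω)‖ₑ ∂P
      ≤ C * (ENNReal.ofReal (√(2 * Real.pi * (v - u)))⁻¹ * ∫⁻ z, ‖h z‖ₑ) := by
  have hmh := hh.measurable
  have hPm := Pt_meas (P := P) hm hc hmh
  have hb1 : Measurable (fun ω => y + B (v - u) ω) := measurable_const.add (hm _)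
  have hmeas : Measurable (fun p : ℝ × Ω => ‖h (y + B (v - u) p.2)‖ₑ
        * ‖Pt P B h (p.1 - v) (y + B (v - u) p.2)‖ₑ) := by
    exact ((hmh.comp (hb1.comp measurable_snd)).enorm).mul
      ((hPm.comp ((measurable_fst.sub_const v).prodMk (hb1.comp measurable_snd))).enorm)
  rw [lintegral_lintegral_swap hmeas.aemeasurable]
  have h1 : ∀ ω, ∫⁻ w in Set.Ioc v t, ‖h (y + B (v - u) ω)‖ₑ
        * ‖Pt P B h (w - v) (y + B (v - u) ω)‖ₑ ≤ ‖h (y + B (v - u) ω)‖ₑ * C := by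
    intro ω
    rw [lintegral_const_mul]
    · gcongr
      exact (shift_lint (fun r => ‖Pt P B h r (y + B (v - u) ω)‖ₑ) v t).trans (hC _)
    · exact (hPm.comp ((measurable_id.sub_const v).prodMk measurable_const)).enorm
  refine (lintegral_mono h1).trans ?_
  have hm3 : Measurable (fun ω => ‖h (y + B (v - u) ω)‖ₑ) := (hmh.comp hb1).enorm
  rw [lintegral_mul_const _ hm3, mul_comm]
  gcongr
  have h2 := gd_density_bound (r := v - u) (by linarith) (fun z => ‖h z‖ₑ) hmh.enorm y
  refine le_trans (le_of_eq ?_) h2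
  have h3 := B_law hB (v - u)
  rw [abs_of_pos (by linarith)] at h3
  rw [← h3, lintegral_map _ (hm _)]
  exact (hmh.comp (measurable_const.add measurable_id)).enorm

lemma pair_bound (hB : IsTwoSidedBM P B) (hm : ∀ t, Measurable (B t))
    (hc : ∀ ω, Continuous fun t => B t ω) (hh : Continuous h)
    (hb : ∀ y, |h y| ≤ 1) (hi : Integrable h) {C : ℝ≥0∞}
    (hC : ∀ y, ∫⁻ r in Set.Ici (0 : ℝ), ‖Pt P B h r y‖ₑ ≤ C) {u v t : ℝ}
    (hu : 0 ≤ u) (huv : u < v) (hvt : v ≤ t) :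
    ‖∫ z : Ω × ℝ, (h (z.2 + B u z.1) * ∫ s in (0 : ℝ)..u, h (z.2 + B s z.1)) *
        (h (z.2 + B v z.1) * ∫ w in v..t, h (z.2 + B w z.1)) ∂(P.prod volume)‖ₑ
      ≤ (C * ∫⁻ z, ‖h z‖ₑ) *
        (C * (ENNReal.ofReal (√(2 * Real.pi * (v - u)))⁻¹ * ∫⁻ z, ‖h z‖ₑ)) := by
  have hmh := hh.measurable
  have hPm := Pt_meas (P := P) hm hc hmh
  have hbn : ∀ y, ‖h y‖ ≤ 1 := hb
  have hWm : ∀ r, Measurable (fun z : Ω × ℝ => h (z.2 + B r z.1)) := fun r =>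
    hmh.comp (measurable_snd.add ((hm r).comp measurable_fst))
  have hYm := A_meas' (B := B) hm hc hmh v t
  set D := C * (ENNReal.ofReal (√(2 * Real.pi * (v - u)))⁻¹ * ∫⁻ z, ‖h z‖ₑ) with hD
  have e1 : ∫ z : Ω × ℝ, (h (z.2 + B u z.1) * ∫ s in (0 : ℝ)..u, h (z.2 + B s z.1)) *
        (h (z.2 + B v z.1) * ∫ w in v..t, h (z.2 + B w z.1)) ∂(P.prod volume)
      = ∫ s in (0 : ℝ)..u, ∫ w in v..t, ∫ z : Ω × ℝ, h (z.2 + B w z.1) *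
        (h (z.2 + B s z.1) * (h (z.2 + B u z.1) * h (z.2 + B v z.1))) ∂(P.prod volume) := by
    calc _ = ∫ z : Ω × ℝ, (∫ s in (0 : ℝ)..u, h (z.2 + B s z.1) * (h (z.2 + B u z.1) *
        h (z.2 + B v z.1) * ∫ w in v..t, h (z.2 + B w z.1))) ∂(P.prod volume) := by
          refine integral_congr_ae (Filter.Eventually.of_forall fun z => ?_)
          simp only
          rw [intervalIntegral.integral_mul_const]
          ring
      _ = ∫ s in (0 : ℝ)..u, ∫ z : Ω × ℝ, h (z.2 + B s z.1) * (h (z.2 + B u z.1) *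
        h (z.2 + B v z.1) * ∫ w in v..t, h (z.2 + B w z.1)) ∂(P.prod volume) := by
          rw [intervalIntegral_integral_swap]
          refine (joint_integrable' (P := P) hm hc hmh hi 0 u).mul_bdd (c := t - v)
            ((((hWm u).mul (hWm v)).mul hYm).comp measurable_snd).aestronglyMeasurable
            (Filter.Eventually.of_forall fun p => ?_)
          have hY := A_abs (B := B) hb hvt p.2
          rw [norm_mul, norm_mul]
          calc _ ≤ 1 * (t - v) := by
                refine mul_le_mul ?_ hY (norm_nonneg _) zero_le_one
                exact mul_le_one₀ (hb _) (norm_nonneg _) (hb _)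
            _ = t - v := one_mul _
      _ = _ := by
          refine intervalIntegral.integral_congr fun s _ => ?_
          rw [intervalIntegral_integral_swap]
          · refine integral_congr_ae (Filter.Eventually.of_forall fun z => ?_)
            simp only
            rw [intervalIntegral.integral_mul_const]
            ring
          · refine (joint_integrable' (P := P) hm hc hmh hi v t).mul_bdd (c := 1)
              (((hWm s).mul ((hWm u).mul (hWm v))).comp measurable_snd).aestronglyMeasurable
              (Filter.Eventually.of_forall fun p => ?_)
            rw [norm_mul, norm_mul]
            exact mul_le_one₀ (hb _) (by positivity) (mul_le_one₀ (hb _) (norm_nonneg _) (hb _))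
  rw [e1, intervalIntegral.integral_of_le hu]
  have hbw : Measurable (fun p : ℝ × ℝ => ∫⁻ ω, ‖h (p.2 + B (v - u) ω)‖ₑ
        * ‖Pt P B h (p.1 - v) (p.2 + B (v - u) ω)‖ₑ ∂P) := by
    have h0 : Measurable (fun q : (ℝ × ℝ) × Ω => q.1.2 + B (v - u) q.2) :=
      (measurable_snd.comp measurable_fst).add ((hm _).comp measurable_snd)
    refine Measurable.lintegral_prod_right' (f := fun q : (ℝ × ℝ) × Ω => ‖h (q.1.2 + B (v - u) q.2)‖ₑ
        * ‖Pt P B h (q.1.1 - v) (q.1.2 + B (v - u) q.2)‖ₑ) ?_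
    exact ((hmh.comp h0).enorm).mul
      ((hPm.comp (((measurable_fst.comp measurable_fst).sub_const v).prodMk h0)).enorm)
  have ha : Measurable (fun p : ℝ × ℝ => ‖h p.2‖ₑ * ‖Pt P B h (p.1 - u) p.2‖ₑ) :=
    ((hmh.comp measurable_snd).enorm).mul
      ((hPm.comp ((measurable_fst.sub_const u).prodMk measurable_snd)).enorm)
  have e2 : ∀ s ∈ Set.Ioc (0 : ℝ) u, ‖∫ w in v..t, ∫ z : Ω × ℝ, h (z.2 + B w z.1) *
        (h (z.2 + B s z.1) * (h (z.2 + B u z.1) * h (z.2 + B v z.1))) ∂(P.prod volume)‖ₑ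
      ≤ ∫⁻ y, (‖h y‖ₑ * ‖Pt P B h (s - u) y‖ₑ) * D := by
    intro s hs
    rw [intervalIntegral.integral_of_le hvt]
    refine (enorm_integral_le_lintegral_enorm _).trans ?_
    refine (setLIntegral_mono' measurableSet_Ioc fun w hw =>
      four_pt_bound hB hm hh hb hi hs.2 huv.le hw.1.le).trans ?_
    have has : Measurable (fun y => ‖h y‖ₑ * ‖Pt P B h (s - u) y‖ₑ) :=
      ha.comp (measurable_const.prodMk measurable_id)
    have hmm : Measurable (fun p : ℝ × ℝ => (‖h p.2‖ₑ * ‖Pt P B h (s - u) p.2‖ₑ)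
        * ∫⁻ ω, ‖h (p.2 + B (v - u) ω)‖ₑ
        * ‖Pt P B h (p.1 - v) (p.2 + B (v - u) ω)‖ₑ ∂P) := (has.comp measurable_snd).mul hbw
    rw [lintegral_lintegral_swap hmm.aemeasurable]
    refine lintegral_mono fun y => ?_
    have hb2 : Measurable (fun w => ∫⁻ ω, ‖h (y + B (v - u) ω)‖ₑ
        * ‖Pt P B h (w - v) (y + B (v - u) ω)‖ₑ ∂P) :=
      hbw.comp (measurable_id.prodMk measurable_const)
    rw [lintegral_const_mul _ hb2]
    gcongr
    exact lint_future hB hm hc hh hC huv t y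
  refine (enorm_integral_le_lintegral_enorm _).trans ?_
  refine (setLIntegral_mono' measurableSet_Ioc e2).trans ?_
  rw [lintegral_lintegral_swap (ha.mul measurable_const).aemeasurable]
  have e3 : ∀ y, ∫⁻ s in Set.Ioc 0 u, (‖h y‖ₑ * ‖Pt P B h (s - u) y‖ₑ) * D
      ≤ ‖h y‖ₑ * C * D := by
    intro y
    have k1 : Measurable (fun s => ‖h y‖ₑ * ‖Pt P B h (s - u) y‖ₑ) :=
      ha.comp (measurable_id.prodMk measurable_const)
    have k2 : Measurable (fun s => ‖Pt P B h (s - u) y‖ₑ) :=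
      (hPm.comp ((measurable_id.sub_const u).prodMk measurable_const)).enorm
    rw [lintegral_mul_const _ k1, lintegral_const_mul _ k2]
    gcongr
    refine le_trans (le_of_eq ?_) ((shift_lint' (fun r => ‖Pt P B h r y‖ₑ) u).trans (hC y))
    refine lintegral_congr fun s => ?_
    rw [← Pt_neg hB hmh, neg_sub]
  refine (lintegral_mono e3).trans (le_of_eq ?_)
  rw [lintegral_mul_const _ (hmh.enorm.mul_const _), lintegral_mul_const _ hmh.enorm]
  ring

lemma fourth_moment (hB : IsTwoSidedBM P B) (hm : ∀ t, Measurable (B t))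
    (hc : ∀ ω, Continuous fun t => B t ω) (hh : Continuous h)
    (hb : ∀ y, |h y| ≤ 1) (hi : Integrable h) {C : ℝ≥0∞} (hCtop : C ≠ ⊤)
    (hC : ∀ y, ∫⁻ r in Set.Ici (0 : ℝ), ‖Pt P B h r y‖ₑ ≤ C) :
    ∃ M : ℝ, 0 ≤ M ∧ ∀ t : ℝ, 0 ≤ t →
      ∫ z : Ω × ℝ, (∫ r in (0 : ℝ)..t, h (z.2 + B r z.1)) ^ 4 ∂(P.prod volume)
        ≤ M * (t * √t) := by
  have hmh := hh.measurable
  set L : ℝ≥0∞ := ∫⁻ z, ‖h z‖ₑ with hL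
  have hLtop : L ≠ ⊤ := hi.2.ne
  set M0 : ℝ := (C * L * (C * L)).toReal with hM0
  have hM00 : 0 ≤ M0 := ENNReal.toReal_nonneg
  have hkc : ∀ z : Ω × ℝ, Continuous (fun r => h (z.2 + B r z.1)) := fun z =>
    hh.comp (continuous_const.add (hc _))
  -- pair bound, real form
  have hpair : ∀ u v t : ℝ, 0 ≤ u → u < v → v ≤ t →
      ‖∫ z : Ω × ℝ, (h (z.2 + B u z.1) * ∫ s in (0 : ℝ)..u, h (z.2 + B s z.1)) *
        (h (z.2 + B v z.1) * ∫ w in v..t, h (z.2 + B w z.1)) ∂(P.prod volume)‖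
      ≤ M0 * (v - u) ^ (-(1 / 2) : ℝ) := by
    intro u v t hu huv hvt
    have h1 := pair_bound hB hm hc hh hb hi hC hu huv hvt
    have hvu : 0 < v - u := by linarith
    have h2 : (C * L) * (C * (ENNReal.ofReal (√(2 * Real.pi * (v - u)))⁻¹ * L))
        ≤ ENNReal.ofReal (M0 * (v - u) ^ (-(1 / 2) : ℝ)) := by
      rw [ENNReal.ofReal_mul hM00, hM0, ENNReal.ofReal_toReal
        (ENNReal.mul_ne_top (ENNReal.mul_ne_top hCtop hLtop) (ENNReal.mul_ne_top hCtop hLtop))]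
      calc _ = C * L * (C * L) * ENNReal.ofReal (√(2 * Real.pi * (v - u)))⁻¹ := by ring
        _ ≤ _ := by
          gcongr
          rw [Real.rpow_neg hvu.le, ← Real.sqrt_eq_rpow]
          refine inv_anti₀ (by positivity) (Real.sqrt_le_sqrt ?_)
          nlinarith [Real.pi_gt_three]
    have h3 := h1.trans h2
    rw [← ofReal_norm] at h3
    exact (ENNReal.ofReal_le_ofReal_iff (by positivity)).1 h3
  have hYA : ∀ v t : ℝ, 0 ≤ v → v ≤ t → ∫ z : Ω × ℝ, h (z.2 + B v z.1) *
      ((∫ r in v..t, h (z.2 + B r z.1)) * (∫ r in (0 : ℝ)..v, h (z.2 + B r z.1)) ^ 2)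
        ∂(P.prod volume) = 2 * ∫ u in (0 : ℝ)..v, ∫ z : Ω × ℝ,
        (h (z.2 + B u z.1) * ∫ s in (0 : ℝ)..u, h (z.2 + B s z.1)) *
        (h (z.2 + B v z.1) * ∫ w in v..t, h (z.2 + B w z.1)) ∂(P.prod volume) := by
    intro v t hv hvt
    rw [intervalIntegral_integral_swap, ← integral_const_mul]
    · refine integral_congr_ae (Filter.Eventually.of_forall fun z => ?_)
      simp only
      rw [intervalIntegral.integral_mul_const, quad_id (hkc z)]
      ring
    · have hJ := joint_integrable' (P := P) hm hc hmh hi 0 v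
      have haj := a_joint hm hc hh
      have hYm := A_meas' (B := B) hm hc hmh v t
      have hWv : Measurable (fun z : Ω × ℝ => h (z.2 + B v z.1)) :=
        hmh.comp (measurable_snd.add ((hm v).comp measurable_fst))
      have hbd : ∀ᵐ p : ℝ × (Ω × ℝ) ∂((volume.restrict (Set.uIoc 0 v)).prod (P.prod volume)),
          ‖(∫ s in (0 : ℝ)..p.1, h (p.2.2 + B s p.2.1)) * (h (p.2.2 + B v p.2.1) *
            ∫ w in v..t, h (p.2.2 + B w p.2.1))‖ ≤ v * (1 * (t - v)) := by
        have h1 : ∀ᵐ u ∂(volume.restrict (Set.uIoc 0 v)), u ∈ Set.Ioc 0 v := by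
          rw [Set.uIoc_of_le hv]; exact ae_restrict_mem measurableSet_Ioc
        filter_upwards [Measure.quasiMeasurePreserving_fst.ae h1] with p hp
        have k1 := A_abs (B := B) hb hp.1.le p.2
        have k2 := A_abs (B := B) hb hvt p.2
        rw [norm_mul, norm_mul]
        refine mul_le_mul (k1.trans (by linarith [hp.2])) (mul_le_mul (hb _) k2 (norm_nonneg _)
          zero_le_one) (by positivity) hv
      have := hJ.mul_bdd (g := fun p : ℝ × (Ω × ℝ) =>
        (∫ s in (0 : ℝ)..p.1, h (p.2.2 + B s p.2.1)) * (h (p.2.2 + B v p.2.1) *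
            ∫ w in v..t, h (p.2.2 + B w p.2.1)))
        (haj.mul ((hWv.mul hYm).comp measurable_snd)).aestronglyMeasurable hbd
      refine this.congr (Filter.Eventually.of_forall fun p => ?_)
      simp only [Function.uncurry]
      ring
  have hYAb : ∀ v t : ℝ, 0 ≤ v → v ≤ t → ‖∫ z : Ω × ℝ, h (z.2 + B v z.1) *
      ((∫ r in v..t, h (z.2 + B r z.1)) * (∫ r in (0 : ℝ)..v, h (z.2 + B r z.1)) ^ 2)
        ∂(P.prod volume)‖ ≤ 4 * M0 * √t := by
    intro v t hv hvt
    rw [hYA v t hv hvt, norm_mul]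
    have hInt0 : IntervalIntegrable (fun u => M0 * (v - u) ^ (-(1 / 2) : ℝ)) volume 0 v := by
      have h0 : IntervalIntegrable (fun x : ℝ => x ^ (-(1 / 2) : ℝ)) volume 0 v :=
        intervalIntegral.intervalIntegrable_rpow' (by norm_num)
      have := (h0.comp_sub_left v).symm
      rw [sub_self, sub_zero] at this
      exact this.const_mul M0
    have h1 := intervalIntegral.norm_integral_le_of_norm_le hv
      (f := fun u => ∫ z : Ω × ℝ,
        (h (z.2 + B u z.1) * ∫ s in (0 : ℝ)..u, h (z.2 + B s z.1)) *
        (h (z.2 + B v z.1) * ∫ w in v..t, h (z.2 + B w z.1)) ∂(P.prod volume))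
      (g := fun u => M0 * (v - u) ^ (-(1 / 2) : ℝ)) (μ := volume) (by
        have : ∀ᵐ u : ℝ ∂volume, u ≠ v := by simp [ae_iff]
        filter_upwards [this] with u hu hu'
        exact hpair u v t hu'.1.le (lt_of_le_of_ne hu'.2 hu) hvt) hInt0
    rw [intervalIntegral.integral_const_mul,
      intervalIntegral.integral_comp_sub_left (fun x => x ^ (-(1 / 2) : ℝ)) v, sub_self, sub_zero,
      integral_rpow (Or.inl (by norm_num))] at h1
    norm_num at h1
    rw [← Real.sqrt_eq_rpow] at h1
    have h2 : √v ≤ √t := Real.sqrt_le_sqrt hvt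
    have h3 : M0 * √v ≤ M0 * √t := mul_le_mul_of_nonneg_left h2 hM00
    rw [Real.norm_of_nonneg (by norm_num : (0 : ℝ) ≤ 2)]
    rw [Real.norm_eq_abs]
    nlinarith
  refine ⟨48 * M0, by positivity, fun t ht => ?_⟩
  have hmain : ∫ z : Ω × ℝ, (∫ r in (0 : ℝ)..t, h (z.2 + B r z.1)) ^ 4 ∂(P.prod volume)
      = 12 * ∫ v in (0 : ℝ)..t, ∫ z : Ω × ℝ, h (z.2 + B v z.1) *
      ((∫ r in v..t, h (z.2 + B r z.1)) * (∫ r in (0 : ℝ)..v, h (z.2 + B r z.1)) ^ 2)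
        ∂(P.prod volume) := by
    rw [intervalIntegral_integral_swap, ← integral_const_mul]
    · refine integral_congr_ae (Filter.Eventually.of_forall fun z => ?_)
      simp only
      rw [quart_id (hkc z)]
    · have hJ := joint_integrable' (P := P) hm hc hmh hi 0 t
      have haj := a_joint hm hc hh
      have hYj := Y_joint hm hc hh t
      refine hJ.mul_bdd (g := fun p : ℝ × (Ω × ℝ) => (∫ r in p.1..t, h (p.2.2 + B r p.2.1)) *
        (∫ r in (0 : ℝ)..p.1, h (p.2.2 + B r p.2.1)) ^ 2) (c := t * t ^ 2)
        (hYj.mul (haj.pow_const 2)).aestronglyMeasurable ?_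
      have h1 : ∀ᵐ u ∂(volume.restrict (Set.uIoc 0 t)), u ∈ Set.Ioc 0 t := by
        rw [Set.uIoc_of_le ht]; exact ae_restrict_mem measurableSet_Ioc
      filter_upwards [Measure.quasiMeasurePreserving_fst.ae h1] with p hp
      have k1 := A_abs (B := B) hb hp.1.le p.2
      have k2 := A_abs (B := B) hb hp.2 p.2
      rw [norm_mul, norm_pow]
      refine mul_le_mul (k2.trans (by linarith [hp.1])) ?_ (by positivity) ht
      exact pow_le_pow_left₀ (norm_nonneg _) (k1.trans (by linarith [hp.2])) 2
  rw [hmain]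
  have h1 := intervalIntegral.norm_integral_le_of_norm_le_const (a := 0) (b := t)
    (f := fun v => ∫ z : Ω × ℝ, h (z.2 + B v z.1) *
      ((∫ r in v..t, h (z.2 + B r z.1)) * (∫ r in (0 : ℝ)..v, h (z.2 + B r z.1)) ^ 2)
        ∂(P.prod volume)) (C := 4 * M0 * √t) (by
      intro v hv
      rw [Set.uIoc_of_le ht] at hv
      exact hYAb v t hv.1.le hv.2)
  rw [sub_zero, abs_of_nonneg ht] at h1
  have h2 := (le_abs_self _).trans h1
  nlinarith
end mom

lemma phi_bound (a : ℝ) : |a / (1 + a ^ 2)| ≤ 1 / 2 := by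
  have h : 0 < 1 + a ^ 2 := by positivity
  rw [abs_div, abs_of_pos h, div_le_iff₀ h]
  nlinarith [sq_nonneg (|a| - 1), sq_abs a]

lemma phi_lower {ε : ℝ} (hε : 0 ≤ ε) (a : ℝ) :
    ε * a ^ 2 - ε ^ 3 * a ^ 4 ≤ a * (ε * a / (1 + (ε * a) ^ 2)) := by
  have h : 0 < 1 + (ε * a) ^ 2 := by positivity
  rw [mul_div_assoc', le_div_iff₀ h]
  have : 0 ≤ ε ^ 5 * a ^ 6 := mul_nonneg (by positivity) (Even.pow_nonneg (by decide) a)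
  nlinarith

section core
variable {Ω : Type*} [MeasurableSpace Ω] {P : Measure Ω} [IsProbabilityMeasure P]
  {B : ℝ → Ω → ℝ} {T : Ω → ℝ}

lemma core_lower (hB : IsTwoSidedBM P B) (hm : ∀ t, Measurable (B t))
    (hc : ∀ ω, Continuous fun t => B t ω) (hT : Measurable T) (hT0 : ∀ ω, 0 ≤ T ω)
    (hBT : IsTwoSidedBM P (fun t ω => B (T ω + t) ω - B (T ω) ω))
    (hind : IndepFun (fun ω (t : ℝ) => B (T ω + t) ω - B (T ω) ω) (fun ω => B (T ω) ω) P)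
    {ν : Measure ℝ} [IsProbabilityMeasure ν] (hν : P.map (fun ω => B (T ω) ω) = ν)
    (hν0 : ν {0} = 0) (hνmom : ∫⁻ x, ENNReal.ofReal |x| ∂ν < ⊤) :
    ∃ κ : ℝ, 0 < κ ∧ ∀ s : ℝ, 2 ≤ s → κ * s ^ 3 ≤ ∫ ω, min (T ω) (s ^ 4) ∂P := by
  obtain ⟨c, hc0, hc2⟩ := second_moment hB hm hc (hk_cont (ν := ν)) hk_abs hk_integrable
    (fun r hr => Pt_hk_pos hB hν0 hr)
  obtain ⟨M, hM0, hM⟩ := fourth_moment hB hm hc (hk_cont (ν := ν)) hk_abs hk_integrable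
    (ENNReal.mul_ne_top ENNReal.ofReal_ne_top hνmom.ne) (fun y => pot_bound hB y)
  set δ : ℝ := √(c / (2 * (M + 1))) with hδ
  have hδ0 : 0 < δ := Real.sqrt_pos.2 (by positivity)
  have hδ2 : δ ^ 2 = c / (2 * (M + 1)) := Real.sq_sqrt (by positivity)
  refine ⟨δ * c - δ ^ 3 * M, ?_, fun s hs => ?_⟩
  · have h1 : δ ^ 2 * M < c := by
      rw [hδ2, div_mul_eq_mul_div, div_lt_iff₀ (by positivity)]
      nlinarith
    have : δ * c - δ ^ 3 * M = δ * (c - δ ^ 2 * M) := by ring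
    rw [this]
    exact mul_pos hδ0 (by linarith)
  have hs0 : 0 < s := by linarith
  have ht : (0 : ℝ) ≤ s ^ 4 := by positivity
  have ht2 : (2 : ℝ) ≤ s ^ 4 := by nlinarith [mul_self_nonneg (s ^ 2 - 4), mul_self_nonneg (s - 2)]
  set ε : ℝ := δ / s with hε
  have hε0 : 0 < ε := by positivity
  have key := limit_ineq (P := P) (M := ∫ ω, min (T ω) (s ^ 4) ∂P) hm hc (hk_cont (ν := ν))
    hk_integrable ht (φ := fun a => ε * a / (1 + (ε * a) ^ 2))
    (Continuous.div (by fun_prop) (by fun_prop) (fun a => by positivity))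
    (fun a => phi_bound (ε * a))
    (fun n Φ hΦ hΦb σ => transport hB hm hc hT hT0 hBT hind hν (gd_cont 1).measurable
      (gd_integrable zero_le_one) (gd_nonneg 1) (gd_integral one_pos) hΦ hΦb σ ht)
  set A : Ω × ℝ → ℝ := fun z => ∫ r in (0 : ℝ)..(s ^ 4), hk ν (z.2 + B r z.1) with hA
  have hAi : Integrable A (P.prod volume) := A_integrable hm hc hk_cont hk_integrable ht
  have hAm : Measurable A := A_meas hm hc hk_cont ht
  have hAb : ∀ z, |A z| ≤ s ^ 4 := fun z => by
    have := A_abs (B := B) (hk_abs (ν := ν)) ht z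
    rwa [sub_zero] at this
  have hA2 : Integrable (fun z => A z ^ 2) (P.prod volume) := by
    have := hAi.mul_bdd (g := A) hAm.aestronglyMeasurable (Filter.Eventually.of_forall hAb)
    exact this.congr (Filter.Eventually.of_forall fun z => (sq (A z)).symm)
  have hA4 : Integrable (fun z => A z ^ 4) (P.prod volume) := by
    have := hAi.mul_bdd (g := fun z => A z ^ 3) (c := (s ^ 4) ^ 3)
      (hAm.pow_const 3).aestronglyMeasurable
      (Filter.Eventually.of_forall fun z => by
        rw [norm_pow]; exact pow_le_pow_left₀ (norm_nonneg _) (hAb z) 3)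
    exact this.congr (Filter.Eventually.of_forall fun z => (pow_succ' (A z) 3).symm)
  have hAφ : Integrable (fun z => A z * (ε * A z / (1 + (ε * A z) ^ 2))) (P.prod volume) :=
    hAi.mul_bdd (c := 1 / 2)
      ((measurable_const.mul hAm).div (measurable_const.add
        ((measurable_const.mul hAm).pow_const 2))).aestronglyMeasurable
      (Filter.Eventually.of_forall fun z => phi_bound (ε * A z))
  have hlow : ε * (∫ z, A z ^ 2 ∂(P.prod volume)) - ε ^ 3 * (∫ z, A z ^ 4 ∂(P.prod volume))
      ≤ ∫ z, A z * (ε * A z / (1 + (ε * A z) ^ 2)) ∂(P.prod volume) := by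
    rw [← integral_const_mul, ← integral_const_mul,
      ← integral_sub (hA2.const_mul _) (hA4.const_mul _)]
    exact integral_mono ((hA2.const_mul _).sub (hA4.const_mul _)) hAφ
      fun z => phi_lower hε0.le (A z)
  have h2 := hc2 (s ^ 4) ht2
  have h4 := hM (s ^ 4) ht
  have hsq : √(s ^ 4) = s ^ 2 := by
    rw [show s ^ 4 = (s ^ 2) ^ 2 by ring]
    exact Real.sqrt_sq (by positivity)
  rw [hsq] at h4
  have hkey := (le_abs_self _).trans key
  have h5 : ε * (c * s ^ 4) ≤ ε * ∫ z, A z ^ 2 ∂(P.prod volume) :=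
    mul_le_mul_of_nonneg_left h2 hε0.le
  have h6 : ε ^ 3 * ∫ z, A z ^ 4 ∂(P.prod volume) ≤ ε ^ 3 * (M * (s ^ 4 * s ^ 2)) :=
    mul_le_mul_of_nonneg_left h4 (by positivity)
  have h7 : (δ * c - δ ^ 3 * M) * s ^ 3 = ε * (c * s ^ 4) - ε ^ 3 * (M * (s ^ 4 * s ^ 2)) := by
    rw [hε]; field_simp
  rw [h7]
  linarith

lemma core_final (hT : Measurable T) (hT0 : ∀ ω, 0 ≤ T ω)
    (H : ∃ κ : ℝ, 0 < κ ∧ ∀ s : ℝ, 2 ≤ s → κ * s ^ 3 ≤ ∫ ω, min (T ω) (s ^ 4) ∂P) :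
    ∫⁻ ω, ENNReal.ofReal (T ω ^ ((1 : ℝ) / 4)) ∂P = ⊤ := by
  obtain ⟨κ, hκ, H⟩ := H
  by_contra hne
  have hUm : Measurable (fun ω => T ω ^ ((1 : ℝ) / 4)) := hT.pow_const _
  have hU0 : ∀ ω, 0 ≤ T ω ^ ((1 : ℝ) / 4) := fun ω => Real.rpow_nonneg (hT0 ω) _
  have hUi : Integrable (fun ω => T ω ^ ((1 : ℝ) / 4)) P := by
    refine ⟨hUm.aestronglyMeasurable, ?_⟩
    rw [hasFiniteIntegral_iff_ofReal (Filter.Eventually.of_forall hU0)]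
    exact lt_top_iff_ne_top.2 hne
  have hU4 : ∀ ω, (T ω ^ ((1 : ℝ) / 4)) ^ 4 = T ω := fun ω => by
    rw [← Real.rpow_natCast, ← Real.rpow_mul (hT0 ω)]; norm_num
  have hbd : ∀ s : ℝ, 0 < s → ∀ ω, min (T ω) (s ^ 4) / s ^ 3 ≤ T ω ^ ((1 : ℝ) / 4) := by
    intro s hs ω
    rw [div_le_iff₀ (by positivity)]
    set u := T ω ^ ((1 : ℝ) / 4) with hu
    have hu0 : 0 ≤ u := hU0 ω
    rw [← hU4 ω, ← hu]
    rcases le_total u s with h | h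
    · refine (min_le_left _ _).trans ?_
      rw [pow_succ' u 3]
      exact mul_le_mul_of_nonneg_left (pow_le_pow_left₀ hu0 h 3) hu0
    · refine (min_le_right _ _).trans ?_
      rw [pow_succ' s 3]
      exact mul_le_mul_of_nonneg_right h (by positivity)
  have hlim : Filter.Tendsto (fun n : ℕ => ∫ ω, min (T ω) (((n : ℝ) + 2) ^ 4) / ((n : ℝ) + 2) ^ 3 ∂P)
      Filter.atTop (nhds (∫ _, (0 : ℝ) ∂P)) := by
    refine tendsto_integral_of_dominated_convergence (fun ω => T ω ^ ((1 : ℝ) / 4))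
      (fun n => ((hT.min measurable_const).div_const _).aestronglyMeasurable) hUi
      (fun n => Filter.Eventually.of_forall fun ω => ?_)
      (Filter.Eventually.of_forall fun ω => ?_)
    · have h0 : 0 ≤ min (T ω) (((n : ℝ) + 2) ^ 4) := le_min (hT0 ω) (by positivity)
      rw [Real.norm_of_nonneg (by positivity)]
      exact hbd _ (by positivity) ω
    · have h1 : Filter.Tendsto (fun n : ℕ => T ω / ((n : ℝ) + 2) ^ 3) Filter.atTop (nhds 0) := by
        refine Filter.Tendsto.div_atTop tendsto_const_nhds ?_
        exact (Filter.tendsto_pow_atTop (by norm_num)).comp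
          (Filter.tendsto_atTop_add_const_right _ _ tendsto_natCast_atTop_atTop)
      refine squeeze_zero (fun n => ?_) (fun n => ?_) h1
      · have h0 : 0 ≤ min (T ω) (((n : ℝ) + 2) ^ 4) := le_min (hT0 ω) (by positivity)
        positivity
      · gcongr
        exact min_le_left _ _
  rw [integral_zero] at hlim
  have hge : ∀ n : ℕ, κ ≤ ∫ ω, min (T ω) (((n : ℝ) + 2) ^ 4) / ((n : ℝ) + 2) ^ 3 ∂P := by
    intro n
    rw [integral_div, le_div_iff₀ (by positivity)]
    exact H _ (by linarith [(Nat.cast_nonneg n : (0 : ℝ) ≤ n)])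
  have := ge_of_tendsto' hlim hge
  linarith
end core

end helpers

/-- if `ν({0}) = 0`, `∫|x| ν(dx) < ∞`, and `T ≥ 0` is a stopping time which is
an unbiased shift embedding `ν`, then `E₀[T^{1/4}] = ∞`. -/
theorem unbiased_stopping_time_quarter_moment_infinite {Ω : Type*} [MeasurableSpace Ω]
    (P : Measure Ω) [IsProbabilityMeasure P]
    (B : ℝ → Ω → ℝ) (hB : IsTwoSidedBM P B)
    (ν : Measure ℝ) [IsProbabilityMeasure ν] (hν0 : ν {0} = 0)
    (hνmom : ∫⁻ x, ENNReal.ofReal |x| ∂ν < ⊤)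
    (T : Ω → ℝ) (hT0 : ∀ ω, 0 ≤ T ω) (hTstop : IsBMStoppingTime B T)
    (hT : IsUnbiasedShift P B T) (hTν : Embeds P B T ν) :
    ∫⁻ ω, ENNReal.ofReal (T ω ^ ((1 : ℝ) / 4)) ∂P = ⊤ := by
  obtain ⟨hTr, hTB, hTi⟩ := hT
  obtain ⟨C, hm, hc, hBC⟩ := nice_version hB
  have hTm := aemeas_time hB hTr
  set T' : Ω → ℝ := fun ω => max (hTm.mk T ω) 0 with hT'
  have hT'm : Measurable T' := hTm.measurable_mk.max measurable_const
  have hT'0 : ∀ ω, 0 ≤ T' ω := fun ω => le_max_right _ _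
  have hTT : ∀ᵐ ω ∂P, T ω = T' ω := by
    filter_upwards [hTm.ae_eq_mk] with ω h
    simp only [hT']
    rw [← h, max_eq_left (hT0 ω)]
  have e1 : ∀ᵐ ω ∂P, ∀ t : ℝ, B (T ω + t) ω - B (T ω) ω = C (T' ω + t) ω - C (T' ω) ω := by
    filter_upwards [hBC, hTT] with ω h1 h2 t
    rw [h1, h1, h2]
  have e2 : (fun ω => B (T ω) ω) =ᵐ[P] fun ω => C (T' ω) ω := by
    filter_upwards [hBC, hTT] with ω h1 h2
    rw [h1, h2]
  have e3 : (fun ω (t : ℝ) => B (T ω + t) ω - B (T ω) ω)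
      =ᵐ[P] fun ω (t : ℝ) => C (T' ω + t) ω - C (T' ω) ω := by
    filter_upwards [e1] with ω h
    exact funext h
  have hmap : P.map (fun ω => C (T' ω) ω) = ν := by
    rw [← Measure.map_congr e2]; exact hTν
  have hfin := core_final (P := P) hT'm hT'0 (core_lower (congr_bm hB hBC) hm hc hT'm hT'0
    (congr_bm hTB e1) (hTi.congr e3 e2) hmap hν0 hνmom)
  rw [← hfin]
  refine lintegral_congr_ae ?_
  filter_upwards [hTT] with ω h
  rw [h]
end

section
/- If T is an unbiased shift of B embedding a probability measure ν with ν ≠ δ₀, then E₀[√|T|] = ∞. -/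
open MeasureTheory ProbabilityTheory

namespace USM

noncomputable section

/-- Gaussian kernel, up to the factor `√(2π)`. -/
def pk (v x : ℝ) : ℝ := (√v)⁻¹ * Real.exp (-x ^ 2 / (2 * v))

lemma pk_nonneg (v x : ℝ) : 0 ≤ pk v x := by unfold pk; positivity

lemma pk_le (v x : ℝ) (hv : 0 < v) : pk v x ≤ (√v)⁻¹ := by
  unfold pk
  have : Real.exp (-x ^ 2 / (2 * v)) ≤ 1 := by
    apply Real.exp_le_one_iff.2
    apply div_nonpos_of_nonpos_of_nonneg
    · nlinarith [sq_nonneg x]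
    · positivity
  have h2 : 0 ≤ (√v)⁻¹ := by positivity
  nlinarith

lemma pk_one_le (x : ℝ) : pk 1 x ≤ 1 := by
  simpa using pk_le 1 x one_pos

lemma continuous_pk (v : ℝ) : Continuous (pk v) := by
  unfold pk; fun_prop

lemma measurable_pk (v : ℝ) : Measurable (pk v) := (continuous_pk v).measurable

lemma gauss_conv (v x : ℝ) (s : NNReal) (hv : 0 < v) :
    ∫ z, pk v (x + z) ∂(gaussianReal 0 s) = pk (v + s) x := by
  by_cases hs : s = 0
  · subst hs; simp
  have hs' : (0 : ℝ) < s := by positivity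
  rw [integral_gaussianReal_eq_integral_smul hs]
  have hw : (Real.toNNReal (v * s / (v + s))) ≠ 0 := by
    have : 0 < v * s / (v + s) := by positivity
    simpa using this
  have key : ∀ z, gaussianPDFReal 0 s z • pk v (x + z) =
      pk (v + s) x * gaussianPDFReal (-(x * s / (v + s))) (Real.toNNReal (v * s / (v + s))) z := by
    intro z
    unfold gaussianPDFReal pk
    rw [Real.coe_toNNReal _ (by positivity), smul_eq_mul]
    have e1 : (√(2 * Real.pi * s))⁻¹ * (√v)⁻¹ =
        (√(v + s))⁻¹ * (√(2 * Real.pi * (v * s / (v + s))))⁻¹ := by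
      rw [← mul_inv, ← mul_inv, ← Real.sqrt_mul (by positivity), ← Real.sqrt_mul (by positivity)]
      congr 2
      field_simp
    have e2 : Real.exp (-(z - 0) ^ 2 / (2 * s)) * Real.exp (-(x + z) ^ 2 / (2 * v)) =
        Real.exp (-x ^ 2 / (2 * (v + s))) *
          Real.exp (-(z - -(x * s / (v + s))) ^ 2 / (2 * (v * s / (v + s)))) := by
      rw [← Real.exp_add, ← Real.exp_add]
      congr 1
      field_simp
      ring
    calc _ = ((√(2 * Real.pi * s))⁻¹ * (√v)⁻¹) *
        (Real.exp (-(z - 0) ^ 2 / (2 * s)) * Real.exp (-(x + z) ^ 2 / (2 * v))) := by ring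
      _ = _ := by rw [e1, e2]; ring
  simp_rw [key]
  rw [integral_const_mul, integral_gaussianPDFReal_eq_one _ hw, mul_one]

/-- The supersolution. -/
def ph (μ : ℝ) (m : ℕ) (x : ℝ) : ℝ := 1 + 4 * μ * ∑ j ∈ Finset.range m, pk (1 + j) x

lemma one_le_ph (μ : ℝ) (hμ : 0 ≤ μ) (m : ℕ) (x : ℝ) : 1 ≤ ph μ m x := by
  unfold ph
  have : 0 ≤ ∑ j ∈ Finset.range m, pk (1 + j) x := Finset.sum_nonneg fun j _ => pk_nonneg _ _
  have := mul_nonneg (mul_nonneg (by norm_num : (0:ℝ) ≤ 4) hμ) this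
  linarith

lemma sum_pk_le (m : ℕ) (x : ℝ) : ∑ j ∈ Finset.range m, pk (1 + j) x ≤ 2 * √m := by
  induction m with
  | zero => simp
  | succ m ih =>
    rw [Finset.sum_range_succ]
    have h1 := pk_le (1 + m) x (by positivity)
    have : 2 * √(m:ℝ) + (√(1 + m : ℝ))⁻¹ ≤ 2 * √((m + 1 : ℕ) : ℝ) := by
      push_cast
      rw [add_comm (1:ℝ) m]
      have ha : √(m:ℝ) ^ 2 = m := Real.sq_sqrt (by positivity)
      have hb : √(m + 1:ℝ) ^ 2 = m + 1 := Real.sq_sqrt (by positivity)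
      have hb0 : 0 < √(m + 1:ℝ) := by positivity
      have e : (√(m + 1:ℝ))⁻¹ * √(m + 1:ℝ) = 1 := inv_mul_cancel₀ hb0.ne'
      have hc : 0 ≤ √(m:ℝ) := by positivity
      by_contra hcon
      push Not at hcon
      nlinarith [sq_nonneg (√(m:ℝ) - √(m + 1:ℝ))]
    linarith

lemma ph_le (μ : ℝ) (hμ : 0 ≤ μ) (m N : ℕ) (hm : m ≤ N) (hN : 8 * μ * √N ≤ 1) (x : ℝ) :
    ph μ m x ≤ 2 := by
  unfold ph
  have h1 := sum_pk_le m x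
  have h2 : √(m:ℝ) ≤ √(N:ℝ) := Real.sqrt_le_sqrt (by exact_mod_cast hm)
  nlinarith

lemma continuous_ph (μ : ℝ) (m : ℕ) : Continuous (ph μ m) := by
  unfold ph
  have := continuous_pk
  fun_prop

lemma ph_step (μ : ℝ) (hμ : 0 ≤ μ) (hμ1 : μ ≤ 1) (m N : ℕ) (hm : m + 1 ≤ N)
    (hN : 8 * μ * √N ≤ 1) (x : ℝ) :
    Real.exp (μ * pk 1 x) * ∫ z, ph μ m (x + z) ∂(gaussianReal 0 1) ≤ ph μ (m + 1) x := by
  have hI : ∀ j : ℕ, Integrable (fun z => pk (1 + j) (x + z)) (gaussianReal 0 1) := by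
    intro j
    refine Integrable.of_bound (C := (√(1 + j : ℝ))⁻¹) ?_ ?_
    · exact ((measurable_pk _).comp (measurable_const_add x)).aestronglyMeasurable
    · refine Filter.Eventually.of_forall fun z => ?_
      rw [Real.norm_eq_abs, abs_of_nonneg (pk_nonneg _ _)]
      exact pk_le _ _ (by positivity)
  have e : ∫ z, ph μ m (x + z) ∂(gaussianReal 0 1) = ph μ (m + 1) x - 4 * μ * pk 1 x := by
    unfold ph
    rw [integral_add (integrable_const _) ((integrable_finsetSum _ fun j _ => hI j).const_mul _),
      integral_const_mul, integral_finsetSum _ fun j _ => hI j]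
    have : ∀ j : ℕ, ∫ z, pk (1 + j) (x + z) ∂(gaussianReal 0 1) = pk (1 + (j + 1 : ℕ)) x := by
      intro j
      rw [gauss_conv _ _ _ (by positivity)]
      push_cast
      ring_nf
    simp_rw [this]
    rw [Finset.sum_range_succ']
    simp
    ring
  rw [e]
  have h0 := pk_nonneg 1 x
  have h1 := pk_one_le x
  have hle := ph_le μ hμ (m + 1) N hm hN x
  set a := μ * pk 1 x with ha
  have ha0 : 0 ≤ a := mul_nonneg hμ h0
  have ha1 : a ≤ 1 := by nlinarith
  have hexp : Real.exp a ≤ 1 + 2 * a := by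
    have := Real.abs_exp_sub_one_le (x := a) (by rw [abs_of_nonneg ha0]; exact ha1)
    rw [abs_of_nonneg ha0] at this
    linarith [le_abs_self (Real.exp a - 1)]
  have hnn : 0 ≤ ph μ (m + 1) x - 4 * a := by
    have : ∫ z, ph μ m (x + z) ∂(gaussianReal 0 1) = ph μ (m + 1) x - 4 * a := by rw [e, ha]; ring
    rw [← this]
    exact integral_nonneg fun z => zero_le_one.trans (one_le_ph μ hμ m (x + z))
  have : ph μ (m + 1) x - 4 * μ * pk 1 x = ph μ (m + 1) x - 4 * a := by rw [ha]; ring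
  rw [this]
  nlinarith

lemma sum_min_le (x : ℝ) (hx : 0 ≤ x) (n : ℕ) :
    ∑ k ∈ Finset.range n, 2 ^ k * min (x ^ 2 / 4 ^ k) 1 ≤ 4 * x := by
  have h4 : ∀ k : ℕ, (4:ℝ) ^ k = 2 ^ k * 2 ^ k := fun k => by rw [← mul_pow]; norm_num
  have key : (∑ k ∈ Finset.range n, 2 ^ k * min (x ^ 2 / 4 ^ k) 1 ≤ (2:ℝ) ^ n) ∧
      ((2:ℝ) ^ n ≤ x ∨
        ∑ k ∈ Finset.range n, 2 ^ k * min (x ^ 2 / 4 ^ k) 1 ≤ 4 * x - 2 * x ^ 2 / 2 ^ n) := by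
    induction n with
    | zero =>
      refine ⟨by simp, ?_⟩
      simp only [pow_zero, Finset.range_zero, Finset.sum_empty, div_one]
      by_cases h : 1 ≤ x
      · exact Or.inl h
      · right; push Not at h; nlinarith
    | succ n ih =>
      obtain ⟨i1, i2⟩ := ih
      rw [Finset.sum_range_succ]
      have hp : (0:ℝ) < 2 ^ n := by positivity
      have t1 : (2:ℝ) ^ n * min (x ^ 2 / 4 ^ n) 1 ≤ 2 ^ n := by
        nlinarith [min_le_right (x ^ 2 / 4 ^ n) (1:ℝ)]
      have t2 : (2:ℝ) ^ n * min (x ^ 2 / 4 ^ n) 1 ≤ x ^ 2 / 2 ^ n := by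
        have := mul_le_mul_of_nonneg_left (min_le_left (x ^ 2 / 4 ^ n) (1:ℝ)) hp.le
        refine this.trans_eq ?_
        rw [h4]; field_simp
      have e : 2 * x ^ 2 / (2:ℝ) ^ (n + 1) = x ^ 2 / 2 ^ n := by
        rw [pow_succ (2:ℝ) n]; field_simp
      refine ⟨by rw [pow_succ (2:ℝ) n]; linarith, ?_⟩
      rw [e]
      rcases i2 with i2 | i2
      · by_cases h : (2:ℝ) ^ (n + 1) ≤ x
        · exact Or.inl h
        · right
          push Not at h
          rw [pow_succ] at h
          have hd : x ^ 2 / 2 ^ n * 2 ^ n = x ^ 2 := by field_simp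
          have hd2 : x ^ 2 / 2 ^ n ≤ 4 * x - 2 ^ n * 2 := by
            rw [div_le_iff₀ hp]
            nlinarith [mul_nonneg (sub_nonneg.2 i2) (sub_nonneg.2 h.le), mul_nonneg hx hp.le]
          linarith
      · right
        have : 2 * x ^ 2 / (2:ℝ) ^ n = 2 * (x ^ 2 / 2 ^ n) := by ring
        linarith
  obtain ⟨k1, k2⟩ := key
  rcases k2 with k2 | k2
  · linarith
  · have : 0 ≤ 2 * x ^ 2 / (2:ℝ) ^ n := by positivity
    linarith

set_option linter.unusedSectionVars false

variable {Ω : Type*} [MeasurableSpace Ω] {P : Measure Ω} [IsProbabilityMeasure P]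

lemma bm_congr {B W : ℝ → Ω → ℝ} (hB : IsTwoSidedBM P B) (h : ∀ᵐ ω ∂P, ∀ t, B t ω = W t ω) :
    IsTwoSidedBM P W where
  aemeas t := (hB.aemeas t).congr (h.mono fun ω hω => hω t)
  cont := by
    filter_upwards [h, hB.cont] with ω h1 h2
    simpa only [h1] using h2
  zero := by
    filter_upwards [h, hB.zero] with ω h1 h2
    rw [← h1, h2]
  indepIncr n t ht := by
    refine iIndepFun.congr (fun i => ?_) (hB.indepIncr n t ht)
    filter_upwards [h] with ω h1
    simp only [h1]
  gaussIncr s t hst := by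
    rw [← hB.gaussIncr s t hst]
    refine Measure.map_congr ?_
    filter_upwards [h] with ω h1
    simp only [h1]

lemma exists_good {B : ℝ → Ω → ℝ} (hB : IsTwoSidedBM P B) :
    ∃ W : ℝ → Ω → ℝ, (∀ᵐ ω ∂P, ∀ t, B t ω = W t ω) ∧ (∀ ω, Continuous fun t => W t ω) ∧
      (∀ t, Measurable (W t)) ∧ (∀ ω, W 0 ω = 0) := by
  have h1 : ∀ᵐ ω ∂P, ∀ q : ℚ, B q ω = (hB.aemeas q).mk _ ω :=
    ae_all_iff.2 fun q => (hB.aemeas q).ae_eq_mk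
  have h2 : ∀ᵐ ω ∂P, (Continuous fun t => B t ω) ∧ B 0 ω = 0 ∧
      ∀ q : ℚ, B q ω = (hB.aemeas q).mk _ ω := by
    filter_upwards [h1, hB.cont, hB.zero] with ω a b c using ⟨b, c, a⟩
  obtain ⟨N, hN, hNm, hN0⟩ := exists_measurable_superset_of_null (ae_iff.1 h2)
  have hgood : ∀ ω, ω ∉ N → (Continuous fun t => B t ω) ∧ B 0 ω = 0 ∧
      ∀ q : ℚ, B q ω = (hB.aemeas q).mk _ ω := by
    intro ω hω
    by_contra hcon
    exact hω (hN hcon)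
  classical
  let W : ℝ → Ω → ℝ := fun t ω => if ω ∈ N then 0 else B t ω
  have hcont : ∀ ω, Continuous fun t => W t ω := by
    intro ω
    by_cases h : ω ∈ N
    · simp only [W, h, if_true]; exact continuous_const
    · simp only [W, h, if_false]; exact (hgood ω h).1
  refine ⟨W, ?_, hcont, ?_, ?_⟩
  · have : ∀ᵐ ω ∂P, ω ∉ N := by rw [ae_iff]; simpa using hN0
    filter_upwards [this] with ω hω t
    simp [W, hω]
  · have hq : ∀ q : ℚ, Measurable (W q) := by
      intro q
      have : W q = fun ω => if ω ∈ N then 0 else (hB.aemeas q).mk _ ω := by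
        funext ω
        by_cases h : ω ∈ N
        · simp [W, h]
        · simp only [W, h, if_false]; exact (hgood ω h).2.2 q
      rw [this]
      exact Measurable.ite hNm measurable_const (hB.aemeas q).measurable_mk
    intro t
    obtain ⟨u, hu⟩ : ∃ u : ℕ → ℚ, Filter.Tendsto (fun n => (u n : ℝ)) Filter.atTop (nhds t) := by
      obtain ⟨u, _, _, hu⟩ := Rat.denseRange_cast (𝕜 := ℝ) |>.exists_seq_strictMono_tendsto Rat.cast_mono t
      exact ⟨_, hu⟩
    refine measurable_of_tendsto_metrizable (fun n => hq (u n)) ?_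
    rw [tendsto_pi_nhds]
    intro ω
    exact ((hcont ω).tendsto t).comp hu
  · intro ω
    by_cases h : ω ∈ N
    · simp [W, h]
    · simp only [W, h, if_false]; exact (hgood ω h).2.1

lemma bm_reflect {B : ℝ → Ω → ℝ} (hB : IsTwoSidedBM P B) :
    IsTwoSidedBM P (fun t => B (-t)) where
  aemeas t := hB.aemeas _
  cont := by
    filter_upwards [hB.cont] with ω h2
    exact h2.comp continuous_neg
  zero := by simpa using hB.zero
  indepIncr n t ht := by
    have h := hB.indepIncr n (fun i => - t i.rev) (fun i j hij => by
      have := ht (Fin.rev_le_rev.2 hij)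
      simpa using this)
    have h2 := (h.precomp (g := Fin.rev) Fin.rev_injective).comp (fun _ x => -x)
      (fun _ => measurable_neg)
    convert h2 using 2 with i
    funext ω
    simp [Fin.rev_succ, Fin.rev_castSucc]
  gaussIncr s t hst := by
    have h := hB.gaussIncr (-t) (-s) (by linarith)
    have e : (fun ω => B (-t) ω - B (-s) ω) = (fun x => -x) ∘ (fun ω => B (-s) ω - B (-t) ω) := by
      funext ω; simp
    have hae : AEMeasurable (fun ω => B (-s) ω - B (-t) ω) P := (hB.aemeas _).sub (hB.aemeas _)
    have hng : AEMeasurable (fun x : ℝ => -x) (Measure.map (fun ω => B (-s) ω - B (-t) ω) P) :=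
      measurable_neg.aemeasurable
    rw [e, ← AEMeasurable.map_map_of_aemeasurable hng hae, h, gaussianReal_map_neg, neg_zero]
    congr 2
    ring

lemma bm_law {W : ℝ → Ω → ℝ} (hW : IsTwoSidedBM P W) (s : ℝ) :
    Measure.map (W s) P = gaussianReal 0 (Real.toNNReal |s|) := by
  have pos : ∀ {V : ℝ → Ω → ℝ}, IsTwoSidedBM P V → ∀ s, 0 ≤ s →
      Measure.map (V s) P = gaussianReal 0 (Real.toNNReal s) := by
    intro V hV s hs
    rcases hs.eq_or_lt with rfl | hs
    · simp only [Real.toNNReal_zero, gaussianReal_zero_var]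
      rw [Measure.map_congr hV.zero, Measure.map_const]
      simp
    · have := hV.gaussIncr 0 s hs
      rw [sub_zero] at this
      rw [← this]
      refine Measure.map_congr ?_
      filter_upwards [hV.zero] with ω h
      simp [h]
  rcases le_total 0 s with h | h
  · rw [abs_of_nonneg h]; exact pos hW s h
  · rw [abs_of_nonpos h]
    have := pos (bm_reflect hW) (-s) (by linarith)
    simpa using this

/-- increments along `r, r+1, r+2, …` -/
def inc (W : ℝ → Ω → ℝ) (r : ℝ) : ℕ → Ω → ℝ
  | 0 => fun ω => W r ω - W 0 ω
  | (i + 1) => fun ω => W (r + (i + 1 : ℕ)) ω - W (r + i) ω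

lemma inc_indep {W : ℝ → Ω → ℝ} (hW : IsTwoSidedBM P W) (r : ℝ) (hr : 0 ≤ r) :
    iIndepFun (inc W r) P := by
  rw [iIndepFun_iff_finset]
  intro s
  obtain ⟨n, hn⟩ : ∃ n, ∀ i ∈ s, i < n := ⟨s.sup id + 1, fun i hi =>
    Nat.lt_succ_of_le (Finset.le_sup (f := id) hi)⟩
  let t : Fin (n + 1) → ℝ := fun i => if i = 0 then 0 else r + ((i : ℕ) - 1 : ℕ)
  have ht : Monotone t := by
    intro i j hij
    simp only [t]
    by_cases hi : i = 0
    · simp only [hi, if_true]; split_ifs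
      · exact le_rfl
      · positivity
    · have hj : j ≠ 0 := by
        rintro rfl
        exact hi (Fin.le_zero_iff.1 hij)
      simp only [hi, hj, if_false]
      have : ((i : ℕ) - 1 : ℕ) ≤ ((j : ℕ) - 1 : ℕ) := Nat.sub_le_sub_right hij 1
      have : (((i : ℕ) - 1 : ℕ) : ℝ) ≤ ((j : ℕ) - 1 : ℕ) := by exact_mod_cast this
      linarith
  have h := hW.indepIncr n t ht
  have h2 := h.precomp (g := fun i : s => (⟨i.1, hn i.1 i.2⟩ : Fin n)) (by
    intro a b hab
    have h3 : a.1 = b.1 := congrArg Fin.val hab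
    exact Subtype.ext h3)
  convert h2 using 2 with i
  obtain ⟨i, hi⟩ := i
  simp only [Finset.restrict]
  cases i with
  | zero => 
    funext ω
    simp [inc, t]
  | succ i =>
    have h1 : (⟨i + 1, hn (i + 1) hi⟩ : Fin n).castSucc ≠ 0 := fun h => by
      have h4 := congrArg Fin.val h
      simp at h4
    funext ω
    simp only [inc, t, h1, Fin.succ_ne_zero, if_false]
    simp

lemma inc_measurable {W : ℝ → Ω → ℝ} (hm : ∀ t, Measurable (W t)) (r : ℝ) (i : ℕ) :
    Measurable (inc W r i) := by
  cases i with
  | zero => exact (hm _).sub (hm _)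
  | succ i => exact (hm _).sub (hm _)

lemma sum_inc {W : ℝ → Ω → ℝ} (h0 : ∀ ω, W 0 ω = 0) (r : ℝ) (m : ℕ) (ω : Ω) :
    ∑ i ∈ Finset.range (m + 1), inc W r i ω = W (r + m) ω := by
  induction m with
  | zero => simp [inc, h0]
  | succ m ih => rw [Finset.sum_range_succ, ih]; simp [inc]

lemma indep_next {W : ℝ → Ω → ℝ} (hW : IsTwoSidedBM P W) (hm : ∀ t, Measurable (W t))
    (h0 : ∀ ω, W 0 ω = 0) (r : ℝ) (hr : 0 ≤ r) (m : ℕ) :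
    IndepFun (fun ω (j : Fin (m + 1)) => W (r + j) ω) (inc W r (m + 1)) P := by
  have h := (inc_indep hW r hr).indepFun_finset (Finset.range (m + 1)) {m + 1} (by simp)
    (inc_measurable hm r)
  have h2 := h.comp (φ := fun (y : Finset.range (m + 1) → ℝ) (j : Fin (m + 1)) =>
      ∑ i : Finset.range (j + 1), y ⟨i.1, by
        have := i.2; have := j.2; simp only [Finset.mem_range] at *; omega⟩)
    (ψ := fun (y : ({m + 1} : Finset ℕ) → ℝ) => y ⟨m + 1, Finset.mem_singleton_self _⟩)
    (by
      refine measurable_pi_lambda _ fun j => ?_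
      exact Finset.measurable_sum _ fun i _ => measurable_pi_apply _)
    (measurable_pi_apply (X := fun _ : ({m + 1} : Finset ℕ) => ℝ)
      ⟨m + 1, Finset.mem_singleton_self _⟩)
  convert h2 using 1
  · funext ω j
    simp only [Function.comp]
    rw [← sum_inc h0 r j ω, ← Finset.sum_coe_sort (Finset.range ((j:ℕ) + 1))]
  · rfl

lemma inc_law {W : ℝ → Ω → ℝ} (hW : IsTwoSidedBM P W) (r : ℝ) (m : ℕ) :
    Measure.map (inc W r (m + 1)) P = gaussianReal 0 1 := by
  have := hW.gaussIncr (r + m) (r + (m + 1 : ℕ)) (by push_cast; linarith)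
  simp only [inc]
  rw [this]
  congr 1
  push_cast
  ring_nf
  simp

lemma indep_lint {α β : Type*} [MeasurableSpace α] [MeasurableSpace β] {U : Ω → α} {V : Ω → β}
    (hU : Measurable U) (hV : Measurable V) (h : IndepFun U V P) (f : α × β → ENNReal)
    (hf : Measurable f) :
    ∫⁻ ω, f (U ω, V ω) ∂P = ∫⁻ ω, ∫⁻ z, f (U ω, z) ∂(Measure.map V P) ∂P := by
  have : IsProbabilityMeasure (Measure.map V P) := Measure.isProbabilityMeasure_map hV.aemeasurable
  have : IsProbabilityMeasure (Measure.map U P) := Measure.isProbabilityMeasure_map hU.aemeasurable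
  have h1 := (indepFun_iff_map_prod_eq_prod_map_map hU.aemeasurable hV.aemeasurable).1 h
  rw [← lintegral_map (f := f) (g := fun ω => (U ω, V ω)) hf (hU.prodMk hV), h1,
    lintegral_prod _ hf.aemeasurable, lintegral_map (hf.lintegral_prod_right') hU]

lemma exp_sum_aux {W : ℝ → Ω → ℝ} (hW : IsTwoSidedBM P W) (hm : ∀ t, Measurable (W t))
    (h0 : ∀ ω, W 0 ω = 0) (r : ℝ) (hr : 0 ≤ r) (x μ : ℝ) (hμ : 0 ≤ μ) (hμ1 : μ ≤ 1) (N : ℕ)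
    (hN : 8 * μ * √N ≤ 1) (m : ℕ) (hmN : m ≤ N) :
    ∫⁻ ω, ENNReal.ofReal (Real.exp (μ * ∑ j ∈ Finset.range m, pk 1 (x + W (r + j) ω)) *
      ph μ (N - m) (x + W (r + m) ω)) ∂P ≤ 2 := by
  induction m with
  | zero =>
    calc _ ≤ ∫⁻ ω, 2 ∂P := by
          refine lintegral_mono fun ω => ?_
          simp only [Finset.range_zero, Finset.sum_empty, mul_zero, Real.exp_zero, one_mul]
          refine (ENNReal.ofReal_le_ofReal (ph_le μ hμ _ N (by simp) hN _)).trans ?_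
          simp
      _ = 2 := by simp
  | succ m ih =>
    refine le_trans ?_ (ih (by omega))
    let f : (Fin (m + 1) → ℝ) × ℝ → ENNReal := fun p => ENNReal.ofReal
      (Real.exp (μ * ∑ j : Fin (m + 1), pk 1 (x + p.1 j)) *
        ph μ (N - (m + 1)) (x + p.1 (Fin.last m) + p.2))
    have hf : Measurable f := by
      have c1 := continuous_pk
      have c2 := continuous_ph
      refine ENNReal.measurable_ofReal.comp (Continuous.measurable ?_)
      fun_prop
    have e : ∀ ω, ENNReal.ofReal
        (Real.exp (μ * ∑ j ∈ Finset.range (m + 1), pk 1 (x + W (r + j) ω)) *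
        ph μ (N - (m + 1)) (x + W (r + (m + 1 : ℕ)) ω)) =
        f ((fun j : Fin (m + 1) => W (r + j) ω), inc W r (m + 1) ω) := by
      intro ω
      simp only [f, inc]
      rw [Finset.sum_range (f := fun j => pk 1 (x + W (r + j) ω))]
      congr 3
      simp
    simp_rw [e]
    rw [indep_lint (measurable_pi_lambda _ fun j => hm _) (inc_measurable hm r _)
      (indep_next hW hm h0 r hr m) f hf, inc_law hW]
    refine lintegral_mono fun ω => ?_
    simp only [f]
    have hIntg : Integrable (fun z => Real.exp (μ * ∑ j : Fin (m + 1), pk 1 (x + W (r + j) ω)) *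
        ph μ (N - (m + 1)) (x + W (r + m) ω + z)) (gaussianReal 0 1) := by
      refine Integrable.const_mul ?_ _
      refine Integrable.of_bound (C := 2) ?_ ?_
      · exact (((continuous_ph _ _).comp (continuous_const_add _)).measurable).aestronglyMeasurable
      · refine Filter.Eventually.of_forall fun z => ?_
        rw [Real.norm_eq_abs, abs_of_nonneg (zero_le_one.trans (one_le_ph μ hμ _ _))]
        exact ph_le μ hμ _ N (by omega) hN _
    have hl : ((Fin.last m : Fin (m + 1)) : ℕ) = m := rfl
    rw [hl, ← ofReal_integral_eq_lintegral_ofReal hIntg (Filter.Eventually.of_forall fun z =>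
      mul_nonneg (Real.exp_pos _).le (zero_le_one.trans (one_le_ph μ hμ _ _)))]
    refine ENNReal.ofReal_le_ofReal ?_
    rw [integral_const_mul, ← Finset.sum_range (f := fun j : ℕ => pk 1 (x + W (r + j) ω)),
      Finset.sum_range_succ, mul_add, Real.exp_add, mul_assoc]
    refine mul_le_mul_of_nonneg_left ?_ (Real.exp_pos _).le
    have := ph_step μ hμ hμ1 (N - (m + 1)) N (by omega) hN (x + W (r + m) ω)
    have e2 : N - (m + 1) + 1 = N - m := by omega
    rwa [e2] at this

lemma exp_sum_le {W : ℝ → Ω → ℝ} (hW : IsTwoSidedBM P W) (hm : ∀ t, Measurable (W t))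
    (h0 : ∀ ω, W 0 ω = 0) (r : ℝ) (hr : 0 ≤ r) (x μ : ℝ) (hμ : 0 ≤ μ) (hμ1 : μ ≤ 1) (N : ℕ)
    (hN : 8 * μ * √N ≤ 1) :
    ∫⁻ ω, ENNReal.ofReal (Real.exp (μ * ∑ j ∈ Finset.range N, pk 1 (x + W (r + j) ω))) ∂P ≤ 2 := by
  refine le_trans (lintegral_mono fun ω => ENNReal.ofReal_le_ofReal ?_)
    (exp_sum_aux hW hm h0 r hr x μ hμ hμ1 N hN N le_rfl)
  exact le_mul_of_one_le_right (Real.exp_pos _).le (one_le_ph μ hμ _ _)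

lemma exp_sum_le' {W : ℝ → Ω → ℝ} (hW : IsTwoSidedBM P W) (hm : ∀ t, Measurable (W t))
    (h0 : ∀ ω, W 0 ω = 0) {X : Ω → ℝ} (hX : Measurable X)
    (hXW : IndepFun (fun ω (t : ℝ) => W t ω) X P)
    (r : ℝ) (hr : 0 ≤ r) (μ : ℝ) (hμ : 0 ≤ μ) (hμ1 : μ ≤ 1) (N : ℕ)
    (hN : 8 * μ * √N ≤ 1) :
    ∫⁻ ω, ENNReal.ofReal (Real.exp (μ * ∑ j ∈ Finset.range N, pk 1 (X ω + W (r + j) ω))) ∂P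
      ≤ 2 := by
  have hind : IndepFun X (fun ω (j : Fin N) => W (r + j) ω) P :=
    (hXW.comp (φ := fun (w : ℝ → ℝ) (j : Fin N) => w (r + j)) (ψ := id)
      (measurable_pi_lambda _ fun j => measurable_pi_apply _) measurable_id).symm
  let f : ℝ × (Fin N → ℝ) → ENNReal := fun p => ENNReal.ofReal
      (Real.exp (μ * ∑ j : Fin N, pk 1 (p.1 + p.2 j)))
  have hf : Measurable f := by
    have c1 := continuous_pk
    refine ENNReal.measurable_ofReal.comp (Continuous.measurable ?_)
    fun_prop
  have hV : Measurable (fun ω (j : Fin N) => W (r + j) ω) := measurable_pi_lambda _ fun j => hm _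
  have h := indep_lint hX hV hind f hf
  simp only [f] at h
  simp_rw [Finset.sum_range (fun j => pk 1 (X _ + W (r + (j : ℕ)) _))]
  rw [h]
  calc _ ≤ ∫⁻ ω, 2 ∂P := by
        refine lintegral_mono fun ω => ?_
        have hf' : Measurable fun z => f (X ω, z) := hf.comp measurable_prodMk_left
        rw [lintegral_map hf' hV]
        have := exp_sum_le hW hm h0 r hr (X ω) μ hμ hμ1 N hN
        simp_rw [Finset.sum_range (fun j => pk 1 (X _ + W (r + (j : ℕ)) _))] at this
        exact this
    _ = 2 := by simp

lemma path_split (y : ℝ → ℝ) (hy : Continuous y) (N : ℕ) :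
    ∫ s in (0:ℝ)..N, pk 1 (y s) = ∫ r in (0:ℝ)..1, ∑ j ∈ Finset.range N, pk 1 (y (r + j)) := by
  have hc : Continuous fun s => pk 1 (y s) := (continuous_pk 1).comp hy
  have h := intervalIntegral.sum_integral_adjacent_intervals (f := fun s => pk 1 (y s))
    (μ := volume) (a := fun k : ℕ => (k : ℝ)) (n := N) (fun k _ => hc.intervalIntegrable _ _)
  simp only [Nat.cast_zero] at h
  rw [← h, intervalIntegral.integral_finsetSum]
  · refine Finset.sum_congr rfl fun k _ => ?_
    rw [intervalIntegral.integral_comp_add_right (fun s => pk 1 (y s))]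
    simp [add_comm]
  · intro i _
    exact (hc.comp (continuous_add_const _)).intervalIntegrable _ _

lemma exp_jensen (u : ℝ → ℝ) (hu : Continuous u) :
    ENNReal.ofReal (Real.exp (∫ r in (0:ℝ)..1, u r)) ≤
      ∫⁻ r in Set.Ioc (0:ℝ) 1, ENNReal.ofReal (Real.exp (u r)) := by
  have : IsProbabilityMeasure (volume.restrict (Set.Ioc (0:ℝ) 1)) := ⟨by simp⟩
  have h1 : Integrable u (volume.restrict (Set.Ioc (0:ℝ) 1)) :=
    (hu.intervalIntegrable 0 1).1
  have h2 : Integrable (Real.exp ∘ u) (volume.restrict (Set.Ioc (0:ℝ) 1)) :=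
    ((Real.continuous_exp.comp hu).intervalIntegrable 0 1).1
  have := convexOn_exp.map_integral_le Real.continuous_exp.continuousOn isClosed_univ
    (Filter.Eventually.of_forall fun _ => Set.mem_univ _) h1 h2
  rw [intervalIntegral.integral_of_le zero_le_one]
  refine (ENNReal.ofReal_le_ofReal this).trans ?_
  exact (ofReal_integral_eq_lintegral_ofReal h2
    (Filter.Eventually.of_forall fun z => (Real.exp_pos _).le)).le

lemma exp_oneside {W : ℝ → Ω → ℝ} (hW : IsTwoSidedBM P W) (hm : ∀ t, Measurable (W t))
    (hc : ∀ ω, Continuous fun t => W t ω)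
    (h0 : ∀ ω, W 0 ω = 0) {X : Ω → ℝ} (hX : Measurable X)
    (hXW : IndepFun (fun ω (t : ℝ) => W t ω) X P)
    (μ : ℝ) (hμ : 0 ≤ μ) (hμ1 : μ ≤ 1) (N : ℕ) (hN : 8 * μ * √N ≤ 1) :
    ∫⁻ ω, ENNReal.ofReal (Real.exp (μ * ∫ s in (0:ℝ)..N, pk 1 (X ω + W s ω))) ∂P ≤ 2 := by
  have hcp := continuous_pk 1
  have hmeas : Measurable (Function.uncurry fun (ω : Ω) (r : ℝ) => ENNReal.ofReal
      (Real.exp (μ * ∑ j ∈ Finset.range N, pk 1 (X ω + W (r + j) ω)))) := by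
    have hu : Measurable (Function.uncurry W) :=
      measurable_uncurry_of_continuous_of_measurable hc hm
    refine ENNReal.measurable_ofReal.comp (Real.measurable_exp.comp (Measurable.const_mul ?_ _))
    refine Finset.measurable_sum _ fun j _ => (measurable_pk 1).comp ?_
    refine (hX.comp measurable_fst).add ?_
    exact hu.comp ((measurable_snd.add_const _).prodMk measurable_fst)
  calc _ ≤ ∫⁻ ω, (∫⁻ r in Set.Ioc (0:ℝ) 1, ENNReal.ofReal
        (Real.exp (μ * ∑ j ∈ Finset.range N, pk 1 (X ω + W (r + j) ω)))) ∂P := by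
        refine lintegral_mono fun ω => ?_
        have hcω := hc ω
        have hy : Continuous fun s => X ω + W s ω := continuous_const.add hcω
        simp only []
        rw [path_split (fun s => X ω + W s ω) hy, ← intervalIntegral.integral_const_mul]
        refine exp_jensen _ ?_
        refine continuous_const.mul (continuous_finsetSum _ fun j _ => ?_)
        exact hcp.comp (hy.comp (continuous_add_const _))
    _ = ∫⁻ r in Set.Ioc (0:ℝ) 1, ∫⁻ ω, ENNReal.ofReal
        (Real.exp (μ * ∑ j ∈ Finset.range N, pk 1 (X ω + W (r + j) ω))) ∂P :=
        lintegral_lintegral_swap hmeas.aemeasurable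
    _ ≤ ∫⁻ r in Set.Ioc (0:ℝ) 1, 2 := by
        refine setLIntegral_mono' measurableSet_Ioc fun r hr => ?_
        exact exp_sum_le' hW hm h0 hX hXW r hr.1.le μ hμ hμ1 N hN
    _ = 2 := by simp

lemma exp_twoside {W : ℝ → Ω → ℝ} (hW : IsTwoSidedBM P W) (hm : ∀ t, Measurable (W t))
    (hc : ∀ ω, Continuous fun t => W t ω)
    (h0 : ∀ ω, W 0 ω = 0) {X : Ω → ℝ} (hX : Measurable X)
    (hXW : IndepFun (fun ω (t : ℝ) => W t ω) X P)
    (μ : ℝ) (hμ : 0 ≤ μ) (hμ1 : μ ≤ 1) (N : ℕ) (hN : 8 * μ * √N ≤ 1) :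
    ∫⁻ ω, ENNReal.ofReal (Real.exp (μ / 2 * ∫ s in (-N:ℝ)..N, pk 1 (X ω + W s ω))) ∂P ≤ 4 := by
  have hcp := continuous_pk 1
  have h1 := exp_oneside hW hm hc h0 hX hXW μ hμ hμ1 N hN
  have hXW' : IndepFun (fun ω (t : ℝ) => W (-t) ω) X P :=
    hXW.comp (φ := fun (w : ℝ → ℝ) (t : ℝ) => w (-t)) (ψ := id)
      (measurable_pi_lambda _ fun j => measurable_pi_apply _) measurable_id
  have h2 := exp_oneside (bm_reflect hW) (fun t => hm _) (fun ω => (hc ω).comp continuous_neg)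
    (by simpa using h0) hX hXW' μ hμ hμ1 N hN
  have hmeas : Measurable fun ω => ENNReal.ofReal
      (Real.exp (μ * ∫ s in (0:ℝ)..N, pk 1 (X ω + W s ω))) := by
    have hu : Measurable (Function.uncurry W) :=
      measurable_uncurry_of_continuous_of_measurable hc hm
    refine ENNReal.measurable_ofReal.comp (Real.measurable_exp.comp (Measurable.const_mul ?_ _))
    simp_rw [intervalIntegral.integral_of_le (Nat.cast_nonneg (α := ℝ) N)]
    have : StronglyMeasurable (Function.uncurry fun (ω : Ω) (s : ℝ) => pk 1 (X ω + W s ω)) := by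
      refine Measurable.stronglyMeasurable ((measurable_pk 1).comp ?_)
      exact (hX.comp measurable_fst).add (hu.comp (measurable_snd.prodMk measurable_fst))
    exact this.integral_prod_right.measurable
  calc _ ≤ ∫⁻ ω, (ENNReal.ofReal (Real.exp (μ * ∫ s in (0:ℝ)..N, pk 1 (X ω + W s ω))) +
        ENNReal.ofReal (Real.exp (μ * ∫ s in (0:ℝ)..N, pk 1 (X ω + W (-s) ω)))) ∂P := by
        refine lintegral_mono fun ω => ?_
        simp only []
        rw [← ENNReal.ofReal_add (Real.exp_pos _).le (Real.exp_pos _).le]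
        refine ENNReal.ofReal_le_ofReal ?_
        have hy : Continuous fun s => pk 1 (X ω + W s ω) :=
          hcp.comp (continuous_const.add (hc ω))
        have e1 : ∫ s in (0:ℝ)..N, pk 1 (X ω + W (-s) ω) =
            ∫ s in (-N:ℝ)..0, pk 1 (X ω + W s ω) := by
          rw [intervalIntegral.integral_comp_neg (fun s => pk 1 (X ω + W s ω))]
          simp
        rw [e1, ← intervalIntegral.integral_add_adjacent_intervals (b := (0:ℝ))
          (hy.intervalIntegrable _ _) (hy.intervalIntegrable _ _)]
        set a := ∫ s in (-N:ℝ)..0, pk 1 (X ω + W s ω)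
        set b := ∫ s in (0:ℝ)..N, pk 1 (X ω + W s ω)
        rcases le_total a b with h | h
        · refine le_trans (Real.exp_le_exp.2 ?_) (le_add_of_nonneg_right (Real.exp_pos _).le)
          nlinarith
        · refine le_trans (Real.exp_le_exp.2 ?_) (le_add_of_nonneg_left (Real.exp_pos _).le)
          nlinarith
    _ = _ := lintegral_add_left hmeas _
    _ ≤ 2 + 2 := add_le_add h1 h2
    _ = 4 := by norm_num

/-- tent function -/
def tent (t s : ℝ) : ℝ := max 0 (1 - |s| / t)

lemma continuous_tent (t : ℝ) : Continuous (tent t) := by unfold tent; fun_prop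

lemma tent_nonneg (t s : ℝ) : 0 ≤ tent t s := le_max_left _ _

lemma tent_le_one (t s : ℝ) (ht : 0 < t) : tent t s ≤ 1 := by
  unfold tent
  have : 0 ≤ |s| / t := by positivity
  exact max_le zero_le_one (by linarith)

lemma tent_zero (t s : ℝ) (ht : 0 < t) (hs : t ≤ |s|) : tent t s = 0 := by
  unfold tent
  have : 1 ≤ |s| / t := (one_le_div ht).2 hs
  exact max_eq_left (by linarith)

lemma tent_compact (t : ℝ) (ht : 0 < t) : HasCompactSupport (tent t) := by
  refine HasCompactSupport.intro (isCompact_Icc (a := -t) (b := t)) fun s hs => ?_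
  refine tent_zero t s ht ?_
  by_contra hcon
  push Not at hcon
  exact hs ⟨(abs_lt.1 hcon).1.le, (abs_lt.1 hcon).2.le⟩

lemma tent_sub (t s T : ℝ) (ht : 0 < t) : tent t s - tent t (s - T) ≤ |T| / t := by
  unfold tent
  have h : |s - T| ≤ |s| + |T| := abs_sub _ _
  have h1 : |s - T| / t ≤ |s| / t + |T| / t := by
    rw [← add_div]; exact div_le_div_of_nonneg_right h ht.le
  have h0 : 0 ≤ |T| / t := by positivity
  rcases max_cases (0:ℝ) (1 - |s| / t) with h2 | h2 <;>
  linarith [le_max_left (0:ℝ) (1 - |s - T| / t), le_max_right (0:ℝ) (1 - |s - T| / t)]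

lemma tent_mul_integrable (t : ℝ) (ht : 0 < t) (y : ℝ → ℝ) (hy : Continuous y) :
    Integrable fun s => tent t s * pk 1 (y s) := by
  refine Continuous.integrable_of_hasCompactSupport
    ((continuous_tent t).mul ((continuous_pk 1).comp hy)) ?_
  exact (tent_compact t ht).mul_right

lemma path_ineq (b : ℝ → ℝ) (hb : Continuous b) (T t N : ℝ) (ht : 0 < t) (hN : t ≤ N) :
    (∫ s, tent t s * pk 1 (b s)) - ∫ s, tent t s * pk 1 (b (T + s)) ≤
      min (|T| / t) 1 * ((∫ s in (-N)..N, pk 1 (b s)) + ∫ s in (-N)..N, pk 1 (b (T + s))) := by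
  have hbT : Continuous fun s => b (T + s) := hb.comp (continuous_const_add T)
  have i1 := tent_mul_integrable t ht b hb
  have i2 := tent_mul_integrable t ht _ hbT
  have hNN : -N ≤ N := by linarith
  have p1 : 0 ≤ ∫ s in (-N)..N, pk 1 (b s) :=
    intervalIntegral.integral_nonneg hNN fun s _ => pk_nonneg _ _
  have p2 : 0 ≤ ∫ s in (-N)..N, pk 1 (b (T + s)) :=
    intervalIntegral.integral_nonneg hNN fun s _ => pk_nonneg _ _
  have p3 : 0 ≤ min (|T| / t) 1 := le_min (by positivity) zero_le_one
  have hioc : IntegrableOn (fun s => pk 1 (b s)) (Set.Ioc (-N) N) :=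
    (((continuous_pk 1).comp hb).intervalIntegrable (-N) N).1
  have gen : ∀ (κ : ℝ) (q : ℝ → ℝ), Integrable q → 0 ≤ κ →
      (∀ s, q s ≤ κ * pk 1 (b s)) → (∀ s, s ∉ Set.Ioc (-N) N → q s ≤ 0) →
      ∫ s, q s ≤ κ * ∫ s in (-N)..N, pk 1 (b s) := by
    intro κ q hq hκ h1 h2
    rw [intervalIntegral.integral_of_le hNN, ← integral_const_mul,
      ← integral_indicator measurableSet_Ioc]
    refine integral_mono hq (IntegrableOn.integrable_indicator (hioc.const_mul κ) measurableSet_Ioc) fun s => ?_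
    by_cases hs : s ∈ Set.Ioc (-N) N
    · simpa [Set.indicator_of_mem hs] using h1 s
    · simpa [Set.indicator_of_notMem hs] using h2 s hs
  have hout : ∀ s, s ∉ Set.Ioc (-N) N → tent t s = 0 := by
    intro s hs
    refine tent_zero t s ht ?_
    by_contra hcon
    push Not at hcon
    exact hs ⟨by linarith [(abs_lt.1 hcon).1], by linarith [(abs_lt.1 hcon).2]⟩
  suffices h : (∫ s, tent t s * pk 1 (b s)) - ∫ s, tent t s * pk 1 (b (T + s)) ≤
      min (|T| / t) 1 * ∫ s in (-N)..N, pk 1 (b s) by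
    nlinarith [mul_nonneg p3 p2]
  rcases le_total (|T| / t) 1 with h | h
  · rw [min_eq_left h]
    have e : ∫ s, tent t s * pk 1 (b (T + s)) = ∫ s, tent t (s - T) * pk 1 (b s) := by
      rw [← integral_add_left_eq_self (fun s => tent t (s - T) * pk 1 (b s)) T]
      simp
    have i3 : Integrable fun s => tent t (s - T) * pk 1 (b s) := by
      have := i2.comp_sub_right T
      simpa using this
    rw [e, ← integral_sub i1 i3]
    refine gen _ _ (i1.sub i3) (by positivity) (fun s => ?_) fun s hs => ?_
    · rw [← sub_mul]
      exact mul_le_mul_of_nonneg_right (tent_sub t s T ht) (pk_nonneg _ _)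
    · simp only [hout s hs, zero_mul, zero_sub, neg_nonpos]
      exact mul_nonneg (tent_nonneg _ _) (pk_nonneg _ _)
  · rw [min_eq_right h]
    have n2 : 0 ≤ ∫ s, tent t s * pk 1 (b (T + s)) :=
      integral_nonneg fun s => mul_nonneg (tent_nonneg _ _) (pk_nonneg _ _)
    have := gen 1 _ i1 zero_le_one (fun s =>
      mul_le_mul_of_nonneg_right (tent_le_one t s ht) (pk_nonneg _ _)) fun s hs => by
        simp [hout s hs]
    linarith

lemma A_bound (k : ℕ) (A : ℝ) (hA : A ≤ 2 * 4 ^ (k + 1)) :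
    A ≤ 2 ^ (k + 7) * (k + 1) + 2 / 4 ^ (k + 1) * Real.exp (1 / 2 ^ (k + 4) / 2 * A) := by
  have hpos : 0 ≤ (2:ℝ) / 4 ^ (k + 1) * Real.exp (1 / 2 ^ (k + 4) / 2 * A) := by positivity
  by_cases h : A ≤ 2 ^ (k + 7) * (k + 1)
  · linarith
  push Not at h
  have h1 : (1:ℝ) / 2 ^ (k + 4) / 2 * (2 ^ (k + 7) * (k + 1)) = ((k + 1 : ℕ) : ℝ) * 4 := by
    push_cast
    field_simp
    ring
  have h2 : (16:ℝ) ^ (k + 1) ≤ Real.exp (1 / 2 ^ (k + 4) / 2 * A) := by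
    calc (16:ℝ) ^ (k + 1) ≤ (Real.exp 4) ^ (k + 1) := by
          refine pow_le_pow_left₀ (by norm_num) ?_ _
          have h3 : Real.exp 4 = Real.exp 1 ^ 4 := by rw [← Real.exp_nat_mul]; norm_num
          rw [h3]
          have h4 : (2:ℝ) ≤ Real.exp 1 := by linarith [Real.add_one_le_exp (1:ℝ)]
          calc (16:ℝ) = 2 ^ 4 := by norm_num
            _ ≤ _ := pow_le_pow_left₀ (by norm_num) h4 _
      _ = Real.exp (1 / 2 ^ (k + 4) / 2 * (2 ^ (k + 7) * (k + 1))) := by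
          rw [h1, Real.exp_nat_mul]
      _ ≤ _ := by
          refine Real.exp_le_exp.2 (mul_le_mul_of_nonneg_left h.le (by positivity))
  have h5 : (2:ℝ) / 4 ^ (k + 1) * 16 ^ (k + 1) = 2 * 4 ^ (k + 1) := by
    have : (16:ℝ) ^ (k + 1) = 4 ^ (k + 1) * 4 ^ (k + 1) := by rw [← mul_pow]; norm_num
    rw [this]; field_simp
  have h6 := mul_le_mul_of_nonneg_left h2 (by positivity : (0:ℝ) ≤ 2 / 4 ^ (k + 1))
  have h7 : (0:ℝ) ≤ 2 ^ (k + 7) * (k + 1) := by positivity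
  linarith

lemma final_real (β : ℕ → ℝ) (hs : Summable β) (c : ℝ) (hc : 0 < c)
    (h : ∀ k : ℕ, c ≤ 256 * (k + 1) * β k + 4 / 4 ^ k) : False := by
  have ht : Filter.Tendsto (fun k : ℕ => (4:ℝ) * (1 / 4) ^ k) Filter.atTop (nhds (4 * 0)) :=
    (tendsto_pow_atTop_nhds_zero_of_lt_one (by norm_num) (by norm_num)).const_mul 4
  rw [mul_zero] at ht
  obtain ⟨K, hK⟩ := Filter.eventually_atTop.1 (ht.eventually (gt_mem_nhds (half_pos hc)))
  have hs2 : Summable fun k => 512 / c * β (k + K) :=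
    ((summable_nat_add_iff K).2 hs).mul_left _
  have hle : ∀ k : ℕ, (1:ℝ) / ((k + (K + 1) : ℕ) : ℝ) ≤ 512 / c * β (k + K) := by
    intro k
    have h1 := h (k + K)
    have h2 := hK (k + K) (by omega)
    have h3 : (4:ℝ) / 4 ^ (k + K) = 4 * (1 / 4) ^ (k + K) := by
      rw [one_div, inv_pow]; rfl
    rw [h3] at h1
    have h4 : c / 2 ≤ 256 * ((k + K : ℕ) + 1) * β (k + K) := by linarith
    rw [div_mul_eq_mul_div, div_le_div_iff₀ (by positivity) hc]
    push_cast at h4 ⊢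
    linarith
  have hs3 : Summable fun k : ℕ => (1:ℝ) / ((k + (K + 1) : ℕ) : ℝ) :=
    Summable.of_nonneg_of_le (fun k => by positivity) hle hs2
  exact Real.not_summable_one_div_natCast
    ((summable_nat_add_iff (f := fun k : ℕ => (1:ℝ) / (k : ℝ)) (K + 1)).1 hs3)

lemma prod_integrable {W : ℝ → Ω → ℝ} (hm : ∀ t, Measurable (W t))
    (hc : ∀ ω, Continuous fun t => W t ω) {X : Ω → ℝ} (hX : Measurable X) (t : ℝ) (ht : 0 < t) :
    Integrable (Function.uncurry fun (ω : Ω) (s : ℝ) => tent t s * pk 1 (X ω + W s ω))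
      (P.prod volume) := by
  have h1 : Integrable (tent t) := (continuous_tent t).integrable_of_hasCompactSupport
    (tent_compact t ht)
  have hu : Measurable (Function.uncurry W) :=
    measurable_uncurry_of_continuous_of_measurable hc hm
  refine Integrable.mono' (h1.comp_snd P) ?_ ?_
  · refine Measurable.aestronglyMeasurable ?_
    refine ((continuous_tent t).measurable.comp measurable_snd).mul ((measurable_pk 1).comp ?_)
    exact (hX.comp measurable_fst).add (hu.comp (measurable_snd.prodMk measurable_fst))
  · refine Filter.Eventually.of_forall fun p => ?_
    simp only [Function.uncurry]
    rw [Real.norm_eq_abs, abs_of_nonneg (mul_nonneg (tent_nonneg _ _) (pk_nonneg _ _))]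
    exact mul_le_of_le_one_right (tent_nonneg _ _) (pk_one_le _)

lemma exp_pk {W : ℝ → Ω → ℝ} (hW : IsTwoSidedBM P W) (hm : ∀ t, Measurable (W t))
    {X : Ω → ℝ} (hX : Measurable X) (hXW : IndepFun (fun ω (t : ℝ) => W t ω) X P) (s : ℝ) :
    ∫ ω, pk 1 (X ω + W s ω) ∂P = ∫ x, pk (1 + |s|) x ∂(Measure.map X P) := by
  have hi : IndepFun X (W s) P :=
    (hXW.comp (φ := fun (w : ℝ → ℝ) => w s) (ψ := id) (measurable_pi_apply _) measurable_id).symm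
  have h1 := (indepFun_iff_map_prod_eq_prod_map_map hX.aemeasurable (hm s).aemeasurable).1 hi
  have : IsProbabilityMeasure (Measure.map X P) := Measure.isProbabilityMeasure_map hX.aemeasurable
  have hmeas : Measurable (fun p : ℝ × ℝ => pk 1 (p.1 + p.2)) :=
    (measurable_pk 1).comp (measurable_fst.add measurable_snd)
  rw [← integral_map (φ := fun ω => (X ω, W s ω)) (f := fun p : ℝ × ℝ => pk 1 (p.1 + p.2))
    (hX.prodMk (hm s)).aemeasurable hmeas.aestronglyMeasurable, h1, bm_law hW,
    integral_prod]
  · refine integral_congr_ae (Filter.Eventually.of_forall fun x => ?_)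
    simp only []
    rw [gauss_conv _ _ _ one_pos, Real.coe_toNNReal _ (abs_nonneg s)]
  · refine Integrable.of_bound (C := 1) hmeas.aestronglyMeasurable ?_
    refine Filter.Eventually.of_forall fun z => ?_
    rw [Real.norm_eq_abs, abs_of_nonneg (pk_nonneg _ _)]
    exact pk_one_le _

lemma pk_integrable (ν : Measure ℝ) [IsProbabilityMeasure ν] (v : ℝ) (hv : 0 < v) :
    Integrable (pk v) ν := by
  refine Integrable.of_bound (C := (√v)⁻¹) (measurable_pk v).aestronglyMeasurable ?_
  refine Filter.Eventually.of_forall fun z => ?_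
  rw [Real.norm_eq_abs, abs_of_nonneg (pk_nonneg _ _)]
  exact pk_le _ _ hv

lemma E_integrable (ν : Measure ℝ) [IsProbabilityMeasure ν] :
    Integrable (fun x : ℝ => 1 - Real.exp (-x ^ 2 / 4)) ν := by
  have := (pk_integrable ν 2 (by norm_num)).const_mul (√2)
  refine (integrable_const 1).sub (this.congr (Filter.Eventually.of_forall fun x => ?_))
  simp only [pk]
  rw [← mul_assoc, mul_inv_cancel₀ (by positivity)]
  norm_num

lemma E_nonneg (x : ℝ) : 0 ≤ 1 - Real.exp (-x ^ 2 / 4) := by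
  have : Real.exp (-x ^ 2 / 4) ≤ 1 := Real.exp_le_one_iff.2 (by nlinarith [sq_nonneg x])
  linarith

lemma E_pos (ν : Measure ℝ) [IsProbabilityMeasure ν] (hν : ν ≠ Measure.dirac 0) :
    0 < ∫ x, (1 - Real.exp (-x ^ 2 / 4)) ∂ν := by
  refine lt_of_le_of_ne (integral_nonneg E_nonneg) fun h => hν ?_
  have h0 := (integral_eq_zero_iff_of_nonneg E_nonneg (E_integrable ν)).1 h.symm
  have h1 : (fun x : ℝ => x) =ᵐ[ν] fun _ => (0:ℝ) := by
    filter_upwards [h0] with x hx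
    simp only [Pi.zero_apply] at hx
    have : Real.exp (-x ^ 2 / 4) = 1 := by linarith
    rw [Real.exp_eq_one_iff] at this
    have : x ^ 2 = 0 := by linarith
    exact pow_eq_zero_iff (two_ne_zero) |>.1 this
  have h2 : Measure.map (fun x : ℝ => x) ν = Measure.map (fun _ : ℝ => (0:ℝ)) ν :=
    Measure.map_congr h1
  rw [Measure.map_const, Measure.map_id'] at h2
  simpa using h2

lemma pk_diff (v x : ℝ) (h1 : 1 ≤ v) :
    0 ≤ pk v 0 - pk v x := by
  unfold pk
  have : Real.exp (-x ^ 2 / (2 * v)) ≤ Real.exp (-0 ^ 2 / (2 * v)) := by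
    refine Real.exp_le_exp.2 (div_le_div_of_nonneg_right ?_ (by linarith))
    nlinarith [sq_nonneg x]
  have h2 : 0 ≤ (√v)⁻¹ := by positivity
  rw [← mul_sub]
  exact mul_nonneg h2 (by linarith)

lemma pk_diff' (v x : ℝ) (h1 : 1 ≤ v) (h2 : v ≤ 2) :
    1 / 2 * (1 - Real.exp (-x ^ 2 / 4)) ≤ pk v 0 - pk v x := by
  have e0 : pk v 0 - pk v x = (√v)⁻¹ * (1 - Real.exp (-x ^ 2 / (2 * v))) := by
    unfold pk; simp; ring
  rw [e0]
  have a1 : (1:ℝ) / 2 ≤ (√v)⁻¹ := by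
    rw [one_div]
    refine inv_anti₀ (by positivity) ?_
    rw [Real.sqrt_le_left (by norm_num)]
    linarith
  have a2 : Real.exp (-x ^ 2 / (2 * v)) ≤ Real.exp (-x ^ 2 / 4) := by
    refine Real.exp_le_exp.2 ?_
    rw [neg_div, neg_div, neg_le_neg_iff]
    refine div_le_div_of_nonneg_left (sq_nonneg x) (by linarith) (by linarith)
  have a3 := E_nonneg x
  exact mul_le_mul a1 (by linarith) a3 (by positivity)

lemma response {B W : ℝ → Ω → ℝ} (hB : IsTwoSidedBM P B) (hBm : ∀ t, Measurable (B t))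
    (hBc : ∀ ω, Continuous fun t => B t ω)
    (hW : IsTwoSidedBM P W) (hm : ∀ t, Measurable (W t))
    (hc : ∀ ω, Continuous fun t => W t ω)
    {X : Ω → ℝ} (hX : Measurable X) (hXW : IndepFun (fun ω (t : ℝ) => W t ω) X P)
    (ν : Measure ℝ) [IsProbabilityMeasure ν] (hν : Measure.map X P = ν)
    (t : ℝ) (ht : 1 ≤ t) :
    1 / 8 * ∫ x, (1 - Real.exp (-x ^ 2 / 4)) ∂ν ≤
      (∫ ω, (∫ s, tent t s * pk 1 (0 + B s ω)) ∂P) -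
        ∫ ω, (∫ s, tent t s * pk 1 (X ω + W s ω)) ∂P := by
  have ht0 : 0 < t := by linarith
  have hz : Measurable (fun _ : Ω => (0:ℝ)) := measurable_const
  have I1 := prod_integrable (P := P) hBm hBc hz t ht0
  have I2 := prod_integrable (P := P) hm hc hX t ht0
  have hzi : IndepFun (fun ω (t : ℝ) => B t ω) (fun _ : Ω => (0:ℝ)) P :=
    indepFun_const_right _ _
  rw [integral_integral_swap I1, integral_integral_swap I2]
  have J1 := I1.integral_prod_right
  have J2 := I2.integral_prod_right
  simp only [Function.uncurry] at J1 J2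
  rw [← integral_sub J1 J2]
  set c := ∫ x, (1 - Real.exp (-x ^ 2 / 4)) ∂ν with hcdef
  have hc0 : 0 ≤ c := integral_nonneg E_nonneg
  have e : ∀ s, (∫ ω, tent t s * pk 1 (0 + B s ω) ∂P) - ∫ ω, tent t s * pk 1 (X ω + W s ω) ∂P =
      tent t s * ∫ x, (pk (1 + |s|) 0 - pk (1 + |s|) x) ∂ν := by
    intro s
    have hv : 0 < 1 + |s| := by positivity
    rw [integral_const_mul, integral_const_mul, exp_pk hB hBm hz hzi, exp_pk hW hm hX hXW, hν,
      ← mul_sub, integral_sub (integrable_const _) (pk_integrable ν _ hv), Measure.map_const]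
    simp
  have hK : Integrable (Set.indicator (Set.Ioc (0:ℝ) (1 / 2)) fun _ => 1 / 4 * c) := by
    refine IntegrableOn.integrable_indicator ?_ measurableSet_Ioc
    exact integrableOn_const (by simp)
  have : 1 / 8 * c = ∫ s, Set.indicator (Set.Ioc (0:ℝ) (1 / 2)) (fun _ => 1 / 4 * c) s := by
    rw [integral_indicator measurableSet_Ioc, setIntegral_const]
    simp [Measure.real]
    ring
  rw [this]
  refine integral_mono hK (J1.sub J2) fun s => ?_
  simp only []
  rw [e s]
  by_cases hs : s ∈ Set.Ioc (0:ℝ) (1 / 2)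
  · rw [Set.indicator_of_mem hs]
    have hs1 : |s| ≤ 1 / 2 := by rw [abs_of_pos hs.1]; exact hs.2
    have h1 : 1 / 2 ≤ tent t s := by
      unfold tent
      refine le_trans ?_ (le_max_right _ _)
      have : |s| / t ≤ |s| := div_le_self (abs_nonneg s) ht
      linarith
    have h2 : 1 / 2 * c ≤ ∫ x, (pk (1 + |s|) 0 - pk (1 + |s|) x) ∂ν := by
      rw [hcdef, ← integral_const_mul]
      refine integral_mono ((E_integrable ν).const_mul _)
        ((integrable_const _).sub (pk_integrable ν _ (by positivity))) fun x => ?_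
      exact pk_diff' _ _ (by linarith [abs_nonneg s]) (by linarith)
    nlinarith
  · rw [Set.indicator_of_notMem hs]
    exact mul_nonneg (tent_nonneg _ _)
      (integral_nonneg fun x => pk_diff _ _ (by linarith [abs_nonneg s]))

lemma A_measurable {W : ℝ → Ω → ℝ} (hm : ∀ t, Measurable (W t))
    (hc : ∀ ω, Continuous fun t => W t ω) {X : Ω → ℝ} (hX : Measurable X) (N : ℝ) (hN : 0 ≤ N) :
    Measurable fun ω => ∫ s in (-N)..N, pk 1 (X ω + W s ω) := by
  have hu : Measurable (Function.uncurry W) :=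
    measurable_uncurry_of_continuous_of_measurable hc hm
  simp_rw [intervalIntegral.integral_of_le (by linarith : -N ≤ N)]
  have : StronglyMeasurable (Function.uncurry fun (ω : Ω) (s : ℝ) => pk 1 (X ω + W s ω)) := by
    refine Measurable.stronglyMeasurable ((measurable_pk 1).comp ?_)
    exact (hX.comp measurable_fst).add (hu.comp (measurable_snd.prodMk measurable_fst))
  exact this.integral_prod_right.measurable

lemma A_le (y : ℝ → ℝ) (hy : Continuous y) (N : ℝ) (hN : 0 ≤ N) :
    ∫ s in (-N)..N, pk 1 (y s) ≤ 2 * N := by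
  have h : ∫ s in (-N)..N, pk 1 (y s) ≤ ∫ s in (-N)..N, (1:ℝ) :=
    intervalIntegral.integral_mono_on (by linarith)
      (((continuous_pk 1).comp hy).intervalIntegrable _ _) (continuous_const.intervalIntegrable _ _)
      fun s _ => pk_one_le _
  rw [intervalIntegral.integral_const] at h
  simp only [smul_eq_mul, mul_one] at h
  linarith

lemma main_ineq {B W : ℝ → Ω → ℝ} (hB : IsTwoSidedBM P B) (hBm : ∀ t, Measurable (B t))
    (hBc : ∀ ω, Continuous fun t => B t ω) (hB0 : ∀ ω, B 0 ω = 0)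
    (hW : IsTwoSidedBM P W) (hm : ∀ t, Measurable (W t))
    (hc : ∀ ω, Continuous fun t => W t ω) (hW0 : ∀ ω, W 0 ω = 0)
    {X : Ω → ℝ} (hX : Measurable X) (hXW : IndepFun (fun ω (t : ℝ) => W t ω) X P)
    (ν : Measure ℝ) [IsProbabilityMeasure ν] (hν : Measure.map X P = ν)
    (T : Ω → ℝ) (hT : ∀ᵐ ω ∂P, ∀ s, X ω + W s ω = B (T ω + s) ω) (k : ℕ) :
    ENNReal.ofReal (1 / 8 * ∫ x, (1 - Real.exp (-x ^ 2 / 4)) ∂ν) ≤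
      ENNReal.ofReal (256 * (k + 1)) *
        (∫⁻ ω, ENNReal.ofReal (2 ^ k * min (|T ω| / 4 ^ k) 1) ∂P) +
      ENNReal.ofReal (4 / 4 ^ k) := by
  have ht : (1:ℝ) ≤ 4 ^ k := one_le_pow₀ (by norm_num)
  have ht0 : (0:ℝ) < 4 ^ k := by positivity
  have hz : Measurable (fun _ : Ω => (0:ℝ)) := measurable_const
  have hzi : IndepFun (fun ω (t : ℝ) => B t ω) (fun _ : Ω => (0:ℝ)) P :=
    indepFun_const_right _ _
  have hresp := response hB hBm hBc hW hm hc hX hXW ν hν (4 ^ k) ht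
  have I1 := (prod_integrable (P := P) hBm hBc hz (4 ^ k) ht0).integral_prod_left
  have I2 := (prod_integrable (P := P) hm hc hX (4 ^ k) ht0).integral_prod_left
  simp only [Function.uncurry] at I1 I2
  rw [← integral_sub I1 I2] at hresp
  have hN : (8:ℝ) * (1 / 2 ^ (k + 4)) * √((4 ^ (k + 1) : ℕ) : ℝ) ≤ 1 := by
    have : √((4 ^ (k + 1) : ℕ) : ℝ) = 2 ^ (k + 1) := by
      push_cast
      rw [Real.sqrt_eq_iff_mul_self_eq (by positivity) (by positivity), ← mul_pow]
      norm_num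
    rw [this]
    apply le_of_eq
    field_simp
    ring
  have hμ0 : (0:ℝ) ≤ 1 / 2 ^ (k + 4) := by positivity
  have hμ1 : (1:ℝ) / 2 ^ (k + 4) ≤ 1 := by
    rw [div_le_one (by positivity)]
    exact one_le_pow₀ (by norm_num)
  have E1 := exp_twoside hB hBm hBc hB0 hz hzi (1 / 2 ^ (k + 4)) hμ0 hμ1 (4 ^ (k + 1)) hN
  have E2 := exp_twoside hW hm hc hW0 hX hXW (1 / 2 ^ (k + 4)) hμ0 hμ1 (4 ^ (k + 1)) hN
  push_cast at E1 E2
  have hNpos : (0:ℝ) ≤ 4 ^ (k + 1) := by positivity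
  have M1 := A_measurable hBm hBc hz (4 ^ (k + 1)) hNpos
  have M2 := A_measurable hm hc hX (4 ^ (k + 1)) hNpos
  set A1 : Ω → ℝ := fun ω => ∫ s in (-4 ^ (k + 1) : ℝ)..4 ^ (k + 1), pk 1 (0 + B s ω) with hA1
  set A2 : Ω → ℝ := fun ω => ∫ s in (-4 ^ (k + 1) : ℝ)..4 ^ (k + 1), pk 1 (X ω + W s ω) with hA2
  set F : Ω → ℝ := fun ω => (∫ s, tent (4 ^ k) s * pk 1 (0 + B s ω)) -
    ∫ s, tent (4 ^ k) s * pk 1 (X ω + W s ω) with hF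
  have hFi : Integrable F P := I1.sub I2
  let e1 : Ω → ℝ := fun ω => Real.exp (1 / 2 ^ (k + 4) / 2 * A1 ω)
  let e2 : Ω → ℝ := fun ω => Real.exp (1 / 2 ^ (k + 4) / 2 * A2 ω)
  have hm1 : Measurable e1 := Real.measurable_exp.comp (M1.const_mul _)
  have hm2 : Measurable e2 := Real.measurable_exp.comp (M2.const_mul _)
  have hpt : ∀ᵐ ω ∂P, F ω ≤ 256 * (k + 1) * (2 ^ k * min (|T ω| / 4 ^ k) 1) +
      2 / 4 ^ (k + 1) * (e1 ω + e2 ω) := by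
    filter_upwards [hT] with ω hω
    have hp := path_ineq (fun s => B s ω) (hBc ω) (T ω) (4 ^ k) (4 ^ (k + 1)) ht0
      (by rw [pow_succ]; linarith)
    simp only [← hω] at hp
    have a1 := A_bound k (A1 ω) (A_le (fun s => 0 + B s ω)
      (continuous_const.add (hBc ω)) _ hNpos)
    have a2 := A_bound k (A2 ω) (A_le (fun s => X ω + W s ω)
      (continuous_const.add (hc ω)) _ hNpos)
    have hF' : F ω ≤ min (|T ω| / 4 ^ k) 1 * (A1 ω + A2 ω) := by
      simp only [hF, hA1, hA2, zero_add]
      exact hp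
    set m := min (|T ω| / 4 ^ k) 1
    have m0 : 0 ≤ m := le_min (by positivity) zero_le_one
    have m1 : m ≤ 1 := min_le_right _ _
    refine hF'.trans ?_
    have q0 : 0 ≤ (2:ℝ) / 4 ^ (k + 1) * (e1 ω + e2 ω) := by
      simp only [e1, e2]; positivity
    have hsum : A1 ω + A2 ω ≤ 2 * (2 ^ (k + 7) * (k + 1)) + 2 / 4 ^ (k + 1) * (e1 ω + e2 ω) := by
      simp only [e1, e2]; linarith
    calc m * (A1 ω + A2 ω) ≤
          m * (2 * (2 ^ (k + 7) * (k + 1)) + 2 / 4 ^ (k + 1) * (e1 ω + e2 ω)) :=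
          mul_le_mul_of_nonneg_left hsum m0
      _ = 256 * (k + 1) * (2 ^ k * m) + m * (2 / 4 ^ (k + 1) * (e1 ω + e2 ω)) := by ring
      _ ≤ _ := by nlinarith
  have hFle : ENNReal.ofReal (∫ ω, F ω ∂P) ≤ ∫⁻ ω, ENNReal.ofReal (max (F ω) 0) ∂P := by
    have hmx : Integrable (fun ω => max (F ω) 0) P := hFi.pos_part
    rw [← ofReal_integral_eq_lintegral_ofReal hmx
      (Filter.Eventually.of_forall fun ω => le_max_right _ _)]
    exact ENNReal.ofReal_le_ofReal (integral_mono hFi hmx fun ω => le_max_left _ _)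
  refine (ENNReal.ofReal_le_ofReal hresp).trans (hFle.trans ?_)
  have hme : Measurable fun ω => ENNReal.ofReal (2 / 4 ^ (k + 1)) *
      (ENNReal.ofReal (e1 ω) + ENNReal.ofReal (e2 ω)) :=
    (hm1.ennreal_ofReal.add hm2.ennreal_ofReal).const_mul _
  calc ∫⁻ ω, ENNReal.ofReal (max (F ω) 0) ∂P ≤ ∫⁻ ω, (ENNReal.ofReal (256 * (k + 1)) *
        ENNReal.ofReal (2 ^ k * min (|T ω| / 4 ^ k) 1) + ENNReal.ofReal (2 / 4 ^ (k + 1)) *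
        (ENNReal.ofReal (e1 ω) + ENNReal.ofReal (e2 ω))) ∂P := by
        refine lintegral_mono_ae ?_
        filter_upwards [hpt] with ω hω
        have p1 : 0 ≤ e1 ω := (Real.exp_pos _).le
        have p2 : 0 ≤ e2 ω := (Real.exp_pos _).le
        have p3 : 0 ≤ min (|T ω| / 4 ^ k) 1 := le_min (by positivity) zero_le_one
        rw [← ENNReal.ofReal_add p1 p2, ← ENNReal.ofReal_mul (by positivity),
          ← ENNReal.ofReal_mul (by positivity), ← ENNReal.ofReal_add (by positivity)
          (by positivity)]
        refine ENNReal.ofReal_le_ofReal (max_le hω (by positivity))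
    _ = ENNReal.ofReal (256 * (k + 1)) *
        (∫⁻ ω, ENNReal.ofReal (2 ^ k * min (|T ω| / 4 ^ k) 1) ∂P) +
        ENNReal.ofReal (2 / 4 ^ (k + 1)) *
        (∫⁻ ω, ENNReal.ofReal (e1 ω) ∂P + ∫⁻ ω, ENNReal.ofReal (e2 ω) ∂P) := by
        rw [lintegral_add_right _ hme, lintegral_const_mul' _ _ ENNReal.ofReal_ne_top,
          lintegral_const_mul' _ _ ENNReal.ofReal_ne_top,
          lintegral_add_left hm1.ennreal_ofReal]
    _ ≤ _ := by
        gcongr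
        calc _ ≤ ENNReal.ofReal (2 / 4 ^ (k + 1)) * (4 + 4) := by gcongr
          _ = ENNReal.ofReal (2 / 4 ^ (k + 1)) * ENNReal.ofReal 8 := by norm_num
          _ = _ := by
            rw [← ENNReal.ofReal_mul (by positivity)]
            congr 1
            rw [pow_succ]
            field_simp
            norm_num

lemma sum_lint_le (f : ℕ → Ω → ENNReal) (n : ℕ) :
    ∑ k ∈ Finset.range n, ∫⁻ ω, f k ω ∂P ≤ ∫⁻ ω, ∑ k ∈ Finset.range n, f k ω ∂P := by
  induction n with
  | zero => simp
  | succ n ih =>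
    simp_rw [Finset.sum_range_succ]
    exact (add_le_add_left ih _).trans (le_lintegral_add _ _)

end

end USM

/-- if `T` is an unbiased shift embedding `ν ≠ δ₀`, then `E₀[√|T|] = ∞`. -/
theorem unbiased_shift_sqrt_moment_infinite {Ω : Type*} [MeasurableSpace Ω]
    (P : Measure Ω) [IsProbabilityMeasure P]
    (B : ℝ → Ω → ℝ) (hB : IsTwoSidedBM P B)
    (ν : Measure ℝ) [IsProbabilityMeasure ν] (hν : ν ≠ Measure.dirac 0)
    (T : Ω → ℝ) (hT : IsUnbiasedShift P B T) (hTν : Embeds P B T ν) :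
    ∫⁻ ω, ENNReal.ofReal (Real.sqrt |T ω|) ∂P = ⊤ := by
  by_contra hfin
  obtain ⟨_, hW0, hind⟩ := hT
  have hXae : AEMeasurable (fun ω => B (T ω) ω) P := by
    by_contra hcon
    unfold Embeds at hTν
    rw [Measure.map_of_not_aemeasurable hcon] at hTν
    exact IsProbabilityMeasure.ne_zero ν hTν.symm
  obtain ⟨B', hBB, hBc, hBm, hB0⟩ := USM.exists_good hB
  obtain ⟨W, hWW, hWc, hWm, hWz⟩ := USM.exists_good hW0
  have hB' := USM.bm_congr hB hBB
  have hW' := USM.bm_congr hW0 hWW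
  set X := hXae.mk _ with hXdef
  have hX : Measurable X := hXae.measurable_mk
  have hXe := hXae.ae_eq_mk
  have hXW : IndepFun (fun ω (t : ℝ) => W t ω) X P := by
    refine hind.congr ?_ hXe
    filter_upwards [hWW] with ω hω
    funext t
    exact hω t
  have hXν : Measure.map X P = ν := by
    rw [← hTν]; exact (Measure.map_congr hXe).symm
  have hTe : ∀ᵐ ω ∂P, ∀ s, X ω + W s ω = B' (T ω + s) ω := by
    filter_upwards [hBB, hWW, hXe] with ω h1 h2 h3 s
    rw [← h2 s, ← h1, hXdef, ← h3]
    ring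
  have hmain := USM.main_ineq hB' hBm hBc hB0 hW' hWm hWc hWz hX hXW ν hXν T hTe
  set b : ℕ → ENNReal := fun k => ∫⁻ ω, ENNReal.ofReal (2 ^ k * min (|T ω| / 4 ^ k) 1) ∂P with hb
  have hsum : ∀ n, ∑ k ∈ Finset.range n, b k ≤
      4 * ∫⁻ ω, ENNReal.ofReal (Real.sqrt |T ω|) ∂P := by
    intro n
    refine (USM.sum_lint_le _ n).trans ?_
    rw [← lintegral_const_mul' _ _ (by norm_num)]
    refine lintegral_mono fun ω => ?_
    simp only []
    rw [← ENNReal.ofReal_sum_of_nonneg (fun k _ => by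
      have : 0 ≤ min (|T ω| / 4 ^ k) 1 := le_min (by positivity) zero_le_one
      positivity)]
    have h := USM.sum_min_le (Real.sqrt |T ω|) (Real.sqrt_nonneg _) n
    rw [Real.sq_sqrt (abs_nonneg _)] at h
    refine (ENNReal.ofReal_le_ofReal h).trans ?_
    rw [ENNReal.ofReal_mul (by norm_num)]
    norm_num
  have hS : 4 * ∫⁻ ω, ENNReal.ofReal (Real.sqrt |T ω|) ∂P ≠ ⊤ :=
    ENNReal.mul_ne_top (by norm_num) hfin
  have hbt : ∀ k, b k ≠ ⊤ := by
    intro k hk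
    have h := hsum (k + 1)
    rw [Finset.sum_range_succ, hk, add_top, top_le_iff] at h
    exact hS h
  have hsm : Summable fun k => (b k).toReal := by
    refine summable_of_sum_range_le (c := (4 * ∫⁻ ω, ENNReal.ofReal (Real.sqrt |T ω|) ∂P).toReal)
      (fun k => ENNReal.toReal_nonneg) fun n => ?_
    rw [← ENNReal.toReal_sum fun k _ => hbt k]
    exact ENNReal.toReal_mono hS (hsum n)
  refine USM.final_real _ hsm (1 / 8 * ∫ x, (1 - Real.exp (-x ^ 2 / 4)) ∂ν)
    (mul_pos (by norm_num) (USM.E_pos ν hν)) fun k => ?_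
  have h0 := hmain k
  have e : ENNReal.ofReal (256 * (k + 1)) * b k + ENNReal.ofReal (4 / 4 ^ k) =
      ENNReal.ofReal (256 * (k + 1) * (b k).toReal + 4 / 4 ^ k) := by
    rw [ENNReal.ofReal_add (by positivity) (by positivity),
      ENNReal.ofReal_mul (p := 256 * ((k:ℝ) + 1)) (q := (b k).toReal) (by positivity),
      ENNReal.ofReal_toReal (hbt k)]
  have h := h0.trans_eq e
  exact (ENNReal.ofReal_le_ofReal_iff (by positivity)).1 h
end
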